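/- Assume GRH. There is a constant C > 0 such that for all integers N ≥ 2, q ≥ 1, a with gcd(a,q) = 1 and q ≤ N, and all real R ≥ 2, one has |Σ_{n ≤ N, n ≡ a (mod q)} Λ(n)·λ_R(n) − (N·log R)/φ(q) − c·N/φ(q)| ≤ C·(N/(φ(q)·√R) + N^{1/2}·(log N)³ + R·log N). -/

import Mathlib

open Finset ArithmeticFunction

/-- The Generalized Riemann Hypothesis for Dirichlet L-functions: every zero of a
Dirichlet L-function in the critical strip lies on the critical line. -/
def GRH : Prop :=
  ∀ (N : ℕ) [NeZero N] (χ : DirichletCharacter ℂ N) (s : ℂ),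
    DirichletCharacter.LFunction χ s = 0 → 0 < s.re → s.re < 1 → s.re = 1 / 2

/-- `ψ(x; q, a) = ∑_{n ≤ x, n ≡ a (mod q)} Λ(n)`. -/
noncomputable def psi (x : ℝ) (q a : ℕ) : ℝ :=
  ∑ n ∈ (Finset.Icc 1 ⌊x⌋₊).filter (fun n : ℕ => (n : ZMod q) = (a : ZMod q)),
    ArithmeticFunction.vonMangoldt n

/-- `I(x,h,q,a) = ∫_x^{2x} (ψ(y+h;q,a) − ψ(y;q,a) − h/φ(q))² dy`. -/
noncomputable def momentI (x h : ℝ) (q a : ℕ) : ℝ :=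
  ∫ y in x..(2 * x), (psi (y + h) q a - psi y q a - h / (q.totient : ℝ)) ^ 2

/-- `λ_R(n) = ∑_{r ≤ R} (μ²(r)/φ(r)) ∑_{d ∣ (r,n)} d·μ(d)`. -/
noncomputable def lamR (R : ℝ) (n : ℕ) : ℝ :=
  ∑ r ∈ Finset.Icc 1 ⌊R⌋₊,
    ((ArithmeticFunction.moebius r : ℝ) ^ 2 / (r.totient : ℝ)) *
      ∑ d ∈ (Nat.gcd r n).divisors, (d : ℝ) * (ArithmeticFunction.moebius d : ℝ)

/-- `c = γ + ∑_p (log p)/(p(p−1))`. -/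
noncomputable def cGY : ℝ :=
  Real.eulerMascheroniConstant +
    ∑' p : Nat.Primes, Real.log (p : ℕ) / (((p : ℕ) : ℝ) * (((p : ℕ) : ℝ) - 1))

/-- `v(k) = ∑_{p ∣ k} (log p)/p`. -/
noncomputable def vGY (k : ℕ) : ℝ := ∑ p ∈ k.primeFactors, Real.log p / (p : ℝ)

/-- `w(k) = ∏_{p ∣ k} (1 + 1/√p)`. -/
noncomputable def wGY (k : ℕ) : ℝ := ∏ p ∈ k.primeFactors, (1 + 1 / Real.sqrt p)

/-- `g(k) = ∏_{p ∣ k} (1 + p/(p−1))`. -/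
noncomputable def gGY (k : ℕ) : ℝ := ∏ p ∈ k.primeFactors, (1 + (p : ℝ) / ((p : ℝ) - 1))

/-- The twin prime constant `C = ∏_{p > 2} (1 − 1/(p−1)²)`. -/
noncomputable def twinC : ℝ :=
  ∏' p : Nat.Primes, (if 2 < (p : ℕ) then 1 - 1 / (((p : ℕ) : ℝ) - 1) ^ 2 else 1)

/-- The singular series `𝔖(k)`. -/
noncomputable def singSeries (k : ℕ) : ℝ :=
  if 2 ∣ k ∧ k ≠ 0 then
    2 * twinC * ∏ p ∈ k.primeFactors.filter (fun p => 2 < p), ((p : ℝ) - 1) / ((p : ℝ) - 2)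
  else 0

/-- `f(n,x,h)`, the length of the interval `[x,2x] ∩ [n−h,n)`. -/
noncomputable def flen (n : ℕ) (x h : ℝ) : ℝ :=
  if x ≤ n ∧ (n : ℝ) < x + h then (n : ℝ) - x
  else if x + h ≤ n ∧ (n : ℝ) ≤ 2 * x then h
  else if 2 * x < n ∧ (n : ℝ) ≤ 2 * x + h then 2 * x - n + h
  else 0

open Metric Complex in
lemma gy_bl_sphere (w z : ℂ) (hz : ‖z‖ = 9/5) :
    ‖((81/25 : ℂ) - (starRingEnd ℂ) w * z) / (9/5)‖ = ‖z - w‖ := by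
  have h : (81/25 : ℂ) = (starRingEnd ℂ) z * z := by
    rw [mul_comm, Complex.mul_conj, Complex.normSq_eq_norm_sq, hz]; norm_num
  rw [h, ← sub_mul, ← map_sub, norm_div, norm_mul, hz, Complex.norm_conj]
  norm_num

/-- Blaschke-modified cofactor -/
noncomputable def gyB {n : ℕ} (w : Fin n → ℂ) (g : ℂ → ℂ) (z : ℂ) : ℂ :=
  g z * ∏ i, ((81/25 : ℂ) - (starRingEnd ℂ) (w i) * z) / (9/5)

lemma gyB_diff {n : ℕ} (w : Fin n → ℂ) (g : ℂ → ℂ) (hg : Differentiable ℂ g) :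
    Differentiable ℂ (gyB w g) := by
  unfold gyB
  fun_prop

lemma gyB_bound {n : ℕ} (w : Fin n → ℂ) (f g : ℂ → ℂ) (hg : Differentiable ℂ g)
    (hfg : ∀ z, f z = (∏ i, (z - w i)) * g z) (M : ℝ)
    (hM : ∀ z : ℂ, ‖z‖ ≤ 9/5 → ‖f z‖ ≤ M) (z : ℂ) (hz : ‖z‖ ≤ 9/5) : ‖gyB w g z‖ ≤ M := by
  refine Complex.norm_le_of_forall_mem_frontier_norm_le (U := Metric.ball 0 (9/5))
    Metric.isBounded_ball (gyB_diff w g hg).diffContOnCl ?_ ?_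
  · intro z hz
    rw [frontier_ball _ (by norm_num)] at hz
    have hz' : ‖z‖ = 9/5 := by simpa using hz
    refine le_trans (le_of_eq ?_) (hM z hz'.le)
    rw [hfg, gyB, norm_mul, norm_mul, norm_prod, norm_prod, mul_comm]
    congr 1
    exact Finset.prod_congr rfl fun i _ => gy_bl_sphere _ _ hz'
  · rw [closure_ball _ (by norm_num)]; simpa using hz

lemma gyB_zero {n : ℕ} (w : Fin n → ℂ) (hw : ∀ i, ‖w i‖ ≤ 17/10) (f g : ℂ → ℂ)
    (hfg : ∀ z, f z = (∏ i, (z - w i)) * g z) :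
    ‖f 0‖ * (18/17 : ℝ) ^ n ≤ ‖gyB w g 0‖ := by
  rw [hfg, gyB, norm_mul, norm_mul, norm_prod, norm_prod]
  have : (∏ i : Fin n, ‖0 - w i‖) * (18/17 : ℝ)^n ≤
      ∏ i : Fin n, ‖((81/25 : ℂ) - (starRingEnd ℂ) (w i) * 0) / (9/5)‖ := by
    have h2 : (18/17 : ℝ)^n = ∏ i : Fin n, (18/17 : ℝ) := by rw [Finset.prod_const]; simp
    rw [h2, ← Finset.prod_mul_distrib]
    refine Finset.prod_le_prod (fun i _ => by positivity) fun i _ => ?_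
    simp only [mul_zero, sub_zero, zero_sub, norm_neg]
    have := hw i
    norm_num
    linarith
  nlinarith [norm_nonneg (g 0)]

lemma gy_card_bound {n : ℕ} (w : Fin n → ℂ) (hw : ∀ i, ‖w i‖ ≤ 17/10) (f g : ℂ → ℂ)
    (hg : Differentiable ℂ g)
    (hfg : ∀ z, f z = (∏ i, (z - w i)) * g z) (B : ℝ) (h0 : f 0 ≠ 0)
    (hM : ∀ z : ℂ, ‖z‖ ≤ 9/5 → ‖f z‖ ≤ Real.exp B * ‖f 0‖) :
    (n : ℝ) ≤ B / Real.log (18/17) := by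
  have h1 := gyB_bound w f g hg hfg _ hM 0 (by norm_num)
  have h2 := gyB_zero w hw f g hfg
  have h3 : (18/17 : ℝ) ^ n ≤ Real.exp B := by
    have : 0 < ‖f 0‖ := norm_pos_iff.mpr h0
    by_contra hc
    push Not at hc
    nlinarith
  have hl : 0 < Real.log (18/17) := Real.log_pos (by norm_num)
  rw [le_div_iff₀ hl, ← Real.log_pow]
  calc _ ≤ Real.log (Real.exp B) := Real.log_le_log (by positivity) h3
    _ = B := Real.log_exp B

lemma gy_exists_factor (f : ℂ → ℂ) (hf : Differentiable ℂ f) (B : ℝ) (h0 : f 0 ≠ 0)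
    (hM : ∀ z : ℂ, ‖z‖ ≤ 9/5 → ‖f z‖ ≤ Real.exp B * ‖f 0‖) :
    ∃ (n : ℕ) (w : Fin n → ℂ) (g : ℂ → ℂ), (∀ i, ‖w i‖ ≤ 17/10) ∧ Differentiable ℂ g ∧
      (∀ z, f z = (∏ i, (z - w i)) * g z) ∧ (∀ z : ℂ, ‖z‖ ≤ 17/10 → g z ≠ 0) := by
  let P : ℕ → Prop := fun n => ∃ (w : Fin n → ℂ) (g : ℂ → ℂ), (∀ i, ‖w i‖ ≤ 17/10) ∧
    Differentiable ℂ g ∧ (∀ z, f z = (∏ i, (z - w i)) * g z)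
  have hP0 : P 0 := ⟨Fin.elim0, f, fun i => i.elim0, hf, by simp⟩
  have hbd : ∀ n, P n → n ≤ ⌈B / Real.log (18/17)⌉₊ := by
    rintro n ⟨w, g, hw, hg, hfg⟩
    exact_mod_cast (gy_card_bound w hw f g hg hfg B h0 hM).trans (Nat.le_ceil _)
  classical
  have hn := Nat.findGreatest_spec (P := P) (Nat.zero_le ⌈B / Real.log (18/17)⌉₊) hP0
  set n := Nat.findGreatest P ⌈B / Real.log (18/17)⌉₊ with hndef
  obtain ⟨w, g, hw, hg, hfg⟩ := hn
  refine ⟨n, w, g, hw, hg, hfg, ?_⟩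
  intro a ha hga
  have : P (n+1) := by
    refine ⟨Fin.cons a w, dslope g a, ?_, ?_, ?_⟩
    · intro i
      refine Fin.cases ?_ (fun j => ?_) i
      · simpa using ha
      · simpa using hw j
    · rw [← differentiableOn_univ, Complex.differentiableOn_dslope Filter.univ_mem]
      exact hg.differentiableOn
    · intro z
      rw [hfg z, Fin.prod_univ_succ]
      simp only [Fin.cons_zero, Fin.cons_succ]
      have := sub_smul_dslope g a z
      rw [hga, sub_zero, smul_eq_mul] at this
      rw [← this]; ring
  have h1 := hbd _ this
  have h2 := Nat.le_findGreatest h1 this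
  omega

lemma gy_logDeriv_bound (G : ℂ → ℂ) (hG : Differentiable ℂ G) (B : ℝ) (hB : 0 < B)
    (hne : ∀ z : ℂ, ‖z‖ ≤ 17/10 → G z ≠ 0)
    (hM : ∀ z : ℂ, ‖z‖ ≤ 17/10 → ‖G z‖ ≤ Real.exp B * ‖G 0‖) (z : ℂ) (hz : ‖z‖ ≤ 16/10) :
    ‖logDeriv G z‖ ≤ 1400 * B := by
  have hd : DifferentiableOn ℂ (logDeriv G) (Metric.ball 0 (17/10)) := by
    intro z hz
    have hz' : ‖z‖ < 17/10 := by simpa using hz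
    refine (DifferentiableAt.div ?_ (hG z) (hne z hz'.le)).differentiableWithinAt
    exact (hG.contDiff (n := 2)).differentiable_deriv_two z
  obtain ⟨H0, hH0⟩ := hd.isExactOn_ball
  let H : ℂ → ℂ := fun z => H0 z - H0 0
  have hH : ∀ z ∈ Metric.ball (0:ℂ) (17/10), HasDerivAt H (logDeriv G z) z := fun z hz =>
    (hH0 z hz).sub_const _
  have hHd : DifferentiableOn ℂ H (Metric.ball 0 (17/10)) := fun z hz =>
    (hH z hz).differentiableAt.differentiableWithinAt
  have key : ∀ z ∈ Metric.ball (0:ℂ) (17/10), G z = G 0 * Complex.exp (H z) := by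
    have hconst : ∀ z ∈ Metric.ball (0:ℂ) (17/10), G z * Complex.exp (- H z) = G 0 := by
      intro z hz
      have := (convex_ball (0:ℂ) (17/10)).is_const_of_fderivWithin_eq_zero (𝕜 := ℂ)
        (f := fun z => G z * Complex.exp (- H z)) ?_ ?_ hz (Metric.mem_ball_self (by norm_num))
      · simpa [H] using this
      · exact hG.differentiableOn.mul hHd.neg.cexp
      · intro x hx
        have hx' : ‖x‖ < 17/10 := by simpa using hx
        have h1 : HasDerivAt (fun z => G z * Complex.exp (- H z)) 0 x := by
          have := (hG x).hasDerivAt.mul (hH x hx).neg.cexp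
          have e : deriv G x * Complex.exp ((-H) x) + G x * (Complex.exp ((-H) x) * -logDeriv G x)
              = 0 := by
            rw [logDeriv_apply]
            have := hne x hx'.le
            field_simp
            ring
          rw [e] at this
          exact this
        rw [fderivWithin_of_isOpen Metric.isOpen_ball hx]
        have := h1.hasFDerivAt.fderiv
        rw [this]; simp
    intro z hz
    rw [← hconst z hz, mul_assoc, ← Complex.exp_add]; simp
  have hre : Set.MapsTo H (Metric.ball 0 (17/10)) {z | z.re ≤ B} := by
    intro z hz
    have hz' : ‖z‖ < 17/10 := by simpa using hz
    have h1 := hM z hz'.le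
    rw [key z hz, norm_mul, Complex.norm_exp, mul_comm] at h1
    have h0 : 0 < ‖G 0‖ := norm_pos_iff.mpr (hne 0 (by norm_num))
    exact Real.exp_le_exp.mp (le_of_mul_le_mul_right h1 h0)
  have hbc : ∀ z : ℂ, ‖z‖ ≤ 165/100 → ‖H z‖ ≤ 66 * B := by
    intro z hz
    have hz2 : z ∈ Metric.ball (0:ℂ) (17/10) := by simp; linarith
    have := Complex.borelCaratheodory_zero hB hHd hre (by norm_num) hz2 (by simp [H])
    refine this.trans ?_
    rw [div_le_iff₀ (by linarith)]
    nlinarith [norm_nonneg z]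
  have hzb : z ∈ Metric.ball (0:ℂ) (17/10) := by simp; linarith
  rw [← (hH z hzb).deriv]
  have := Complex.norm_deriv_le_of_forall_mem_sphere_norm_le (c := z) (R := 1/20) (C := 66 * B)
    (f := H) (by norm_num) ?_ ?_
  · linarith
  · refine DifferentiableOn.diffContOnCl ?_
    refine hHd.mono ?_
    rw [closure_ball _ (by norm_num)]
    intro y hy
    have : ‖y - z‖ ≤ 1/20 := by simpa [dist_eq_norm] using hy
    have h3 : ‖y‖ ≤ ‖y - z‖ + ‖z‖ := by simpa using norm_add_le (y - z) z
    simp; linarith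
  · intro y hy
    have : ‖y - z‖ = 1/20 := by simpa [dist_eq_norm] using hy
    have h3 : ‖y‖ ≤ ‖y - z‖ + ‖z‖ := by simpa using norm_add_le (y - z) z
    exact hbc y (by linarith)

/-- local Hadamard-type formula -/
lemma gy_local : ∃ A : ℝ, 0 < A ∧ ∀ (f : ℂ → ℂ) (B : ℝ), Differentiable ℂ f → 0 < B → f 0 ≠ 0 →
    (∀ z : ℂ, ‖z‖ ≤ 9/5 → ‖f z‖ ≤ Real.exp B * ‖f 0‖) →
    ∃ (n : ℕ) (w : Fin n → ℂ), (∀ i, ‖w i‖ ≤ 17/10 ∧ f (w i) = 0) ∧ (n : ℝ) ≤ A * B ∧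
      ∀ z : ℂ, ‖z‖ ≤ 16/10 → f z ≠ 0 →
        ‖logDeriv f z - ∑ i, 1 / (z - w i)‖ ≤ A * B := by
  have hl : 0 < Real.log (18/17) := Real.log_pos (by norm_num)
  refine ⟨1400 + 10 / Real.log (18/17), by positivity, ?_⟩
  intro f B hf hB h0 hM
  obtain ⟨n, w, g, hw, hg, hfg, hgne⟩ := gy_exists_factor f hf B h0 hM
  have hn := gy_card_bound w hw f g hg hfg B h0 hM
  refine ⟨n, w, fun i => ⟨hw i, ?_⟩, ?_, ?_⟩
  · rw [hfg, Finset.prod_eq_zero (Finset.mem_univ i) (by simp), zero_mul]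
  · refine hn.trans ?_
    have : 0 < B / Real.log (18/17) := by positivity
    have e : (1400 + 10 / Real.log (18/17)) * B = 1400 * B + 10 * (B / Real.log (18/17)) := by ring
    rw [e]
    linarith
  · intro z hz hfz
    have hfac : ∀ i (z : ℂ), ‖z‖ ≤ 17/10 → 35/100 ≤ ‖(81/25 : ℂ) - (starRingEnd ℂ) (w i) * z‖ := by
      intro i z hz
      have h1 : ‖(starRingEnd ℂ) (w i) * z‖ ≤ 289/100 := by
        rw [norm_mul, Complex.norm_conj]
        nlinarith [hw i, norm_nonneg (w i), norm_nonneg z]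
      have h2 := norm_sub_norm_le (81/25 : ℂ) ((starRingEnd ℂ) (w i) * z)
      have h3 : ‖(81/25 : ℂ)‖ = 81/25 := by norm_num
      linarith
    have hfacne : ∀ i (z : ℂ), ‖z‖ ≤ 17/10 → ((81/25 : ℂ) - (starRingEnd ℂ) (w i) * z) / (9/5) ≠ 0 := by
      intro i z hz
      have := hfac i z hz
      refine div_ne_zero ?_ (by norm_num)
      intro h; rw [h] at this; norm_num at this
    have hbne : ∀ z : ℂ, ‖z‖ ≤ 17/10 → gyB w g z ≠ 0 := by
      intro z hz
      exact mul_ne_zero (hgne z hz) (Finset.prod_ne_zero_iff.mpr fun i _ => hfacne i z hz)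
    have hbM : ∀ z : ℂ, ‖z‖ ≤ 17/10 → ‖gyB w g z‖ ≤ Real.exp B * ‖gyB w g 0‖ := by
      intro z hz
      refine (gyB_bound w f g hg hfg _ hM z (by linarith)).trans ?_
      have h2 := gyB_zero w hw f g hfg
      have h3 : (1:ℝ) ≤ (18/17)^n := one_le_pow₀ (by norm_num)
      gcongr
      nlinarith [norm_nonneg (f 0)]
    have hLB := gy_logDeriv_bound _ (gyB_diff w g hg) B hB hbne hbM z hz
    have hz' : ‖z‖ ≤ 17/10 := by linarith
    have hzw : ∀ i, z - w i ≠ 0 := by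
      intro i h
      apply hfz
      rw [hfg, Finset.prod_eq_zero (Finset.mem_univ i) h, zero_mul]
    have e1 : logDeriv f z = ∑ i, 1 / (z - w i) + logDeriv g z := by
      have : f = fun z => (∏ i, (z - w i)) * g z := funext hfg
      rw [this, logDeriv_mul (f := fun z => ∏ i, (z - w i)) z
        (Finset.prod_ne_zero_iff.mpr fun i _ => hzw i) (hgne z hz')
        (by fun_prop) (hg z)]
      congr 1
      rw [logDeriv_prod (fun i _ => hzw i) (fun i _ => by fun_prop)]
      refine Finset.sum_congr rfl fun i _ => ?_
      simp [logDeriv_apply]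
    have e2 : logDeriv (gyB w g) z = logDeriv g z +
        ∑ i, (-(starRingEnd ℂ) (w i)) / ((81/25 : ℂ) - (starRingEnd ℂ) (w i) * z) := by
      unfold gyB
      rw [logDeriv_mul (g := fun z => ∏ i, ((81/25 : ℂ) - (starRingEnd ℂ) (w i) * z) / (9/5)) z
        (hgne z hz') (Finset.prod_ne_zero_iff.mpr fun i _ => hfacne i z hz') (hg z)
        (by fun_prop)]
      congr 1
      rw [logDeriv_prod (f := fun i z => ((81/25 : ℂ) - (starRingEnd ℂ) (w i) * z) / (9/5)) (fun i _ => hfacne i z hz') (fun i _ => by fun_prop)]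
      refine Finset.sum_congr rfl fun i _ => ?_
      rw [logDeriv_apply]
      have : deriv (fun z : ℂ => ((81/25 : ℂ) - (starRingEnd ℂ) (w i) * z) / (9/5)) z =
          (-(starRingEnd ℂ) (w i)) / (9/5) := by
        have h : HasDerivAt (fun z : ℂ => ((81/25 : ℂ) - (starRingEnd ℂ) (w i) * z) / (9/5))
          ((0 - (starRingEnd ℂ) (w i) * 1) / (9/5)) z :=
          ((hasDerivAt_const _ _).sub ((hasDerivAt_id z).const_mul _)).div_const _
        rw [h.deriv]; ring
      rw [this, div_div_div_cancel_right₀ (by norm_num)]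
    have e3 : logDeriv f z - ∑ i, 1 / (z - w i) = logDeriv (gyB w g) z -
        ∑ i, (-(starRingEnd ℂ) (w i)) / ((81/25 : ℂ) - (starRingEnd ℂ) (w i) * z) := by
      rw [e1, e2]; ring
    rw [e3]
    have e4 : ‖∑ i, (-(starRingEnd ℂ) (w i)) / ((81/25 : ℂ) - (starRingEnd ℂ) (w i) * z)‖ ≤ n * 10 := by
      refine (norm_sum_le _ _).trans ?_
      have : ∀ i ∈ (Finset.univ : Finset (Fin n)),
          ‖(-(starRingEnd ℂ) (w i)) / ((81/25 : ℂ) - (starRingEnd ℂ) (w i) * z)‖ ≤ 10 := by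
        intro i _
        rw [norm_div, norm_neg, Complex.norm_conj, div_le_iff₀ (by linarith [hfac i z hz'])]
        linarith [hfac i z hz', hw i]
      simpa using Finset.sum_le_card_nsmul _ _ _ this
    refine (norm_sub_le _ _).trans ?_
    have : (n:ℝ) * 10 ≤ 10 / Real.log (18/17) * B := by
      calc (n:ℝ) * 10 ≤ B / Real.log (18/17) * 10 := by gcongr
        _ = _ := by ring
    linarith

/-- entire version of the L-function: the pole at 1 is removed for the trivial character -/
noncomputable def gyF {q : ℕ} [NeZero q] (χ : DirichletCharacter ℂ q) : ℂ → ℂ :=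
  open Classical in
  if χ = 1 then DirichletCharacter.LFunctionTrivChar₁ q else DirichletCharacter.LFunction χ

lemma gyF_diff {q : ℕ} [NeZero q] (χ : DirichletCharacter ℂ q) : Differentiable ℂ (gyF χ) := by
  unfold gyF
  split_ifs with h
  · exact DirichletCharacter.differentiable_LFunctionTrivChar₁ q
  · exact DirichletCharacter.differentiable_LFunction h

lemma gy_periodic_sum (f : ℕ → ℂ) (q : ℕ) (hq : 0 < q) (hf : ∀ n, f (n + q) = f n)
    (hf1 : ∀ n, ‖f n‖ ≤ 1) :
    ∃ A : ℂ, ‖A‖ ≤ 1 ∧ ∀ n : ℕ, ‖∑ k ∈ Finset.Icc 1 n, f k - A * n‖ ≤ 2 * q := by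
  have hIcc : ∀ n, ∑ k ∈ Finset.Icc 1 n, f k = ∑ k ∈ Finset.range n, f (k+1) := by
    intro n
    induction n with
    | zero => simp
    | succ n ih => rw [Finset.sum_Icc_succ_top (by omega), ih, Finset.sum_range_succ]
  set T := ∑ k ∈ Finset.range q, f (k+1) with hT
  have hnorm : ∀ r, ‖∑ k ∈ Finset.range r, f (k+1)‖ ≤ r := by
    intro r
    refine (norm_sum_le _ _).trans ?_
    simpa using Finset.sum_le_card_nsmul (Finset.range r) _ 1 fun k _ => hf1 (k+1)
  have hstep : ∀ n, ∑ k ∈ Finset.range (n + q), f (k+1) = ∑ k ∈ Finset.range n, f (k+1) + T := by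
    intro n
    induction n with
    | zero => simp [hT]
    | succ n ih =>
      rw [show n + 1 + q = (n + q) + 1 by ring, Finset.sum_range_succ, ih, Finset.sum_range_succ,
        show n + q + 1 = (n + 1) + q by ring, hf]
      ring
  have hmul : ∀ m r, ∑ k ∈ Finset.range (r + m * q), f (k+1)
      = ∑ k ∈ Finset.range r, f (k+1) + m * T := by
    intro m r
    induction m with
    | zero => simp
    | succ m ih =>
      rw [show r + (m+1) * q = (r + m * q) + q by ring, hstep, ih]
      push_cast; ring
  have hq' : (q : ℂ) ≠ 0 := by exact_mod_cast hq.ne'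
  have hA : ‖T / q‖ ≤ 1 := by
    rw [norm_div, div_le_one (by simpa using hq)]
    simpa using hnorm q
  refine ⟨T / q, hA, ?_⟩
  intro n
  have hn : n = n % q + (n / q) * q := by rw [mul_comm]; exact (Nat.mod_add_div n q).symm
  have hr : n % q ≤ q := (Nat.mod_lt n hq).le
  rw [hIcc]
  generalize n % q = r at *
  generalize n / q = m at *
  subst hn
  rw [hmul]
  have : ∑ k ∈ Finset.range r, f (k+1) + m * T - T / q * ((r + m * q : ℕ) : ℂ)
      = ∑ k ∈ Finset.range r, f (k+1) - T / q * r := by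
    push_cast; field_simp; ring
  rw [this]
  refine (norm_sub_le _ _).trans ?_
  have h1 := hnorm r
  have h2 : ‖T / q * r‖ ≤ r := by
    rw [norm_mul]; simp only [Complex.norm_natCast]
    nlinarith [(Nat.cast_nonneg r : (0:ℝ) ≤ r)]
  have h3 : (r:ℝ) ≤ q := by exact_mod_cast hr
  linarith

open MeasureTheory in
/-- continuation to the half plane `Re s > 0` with an explicit bound -/
lemma gy_cont {q : ℕ} [NeZero q] (χ : DirichletCharacter ℂ q) :
    ∃ (A : ℂ) (J : ℂ → ℂ), ‖A‖ ≤ 1 ∧ DifferentiableOn ℂ J {s | 0 < s.re} ∧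
      (∀ s : ℂ, 0 < s.re → ‖J s‖ ≤ 3 * q / s.re) ∧
      ∀ s : ℂ, 1 < s.re → (s - 1) * DirichletCharacter.LFunction χ s
        = A * s + s * (s - 1) * J s := by
  have hq : 0 < q := NeZero.pos q
  obtain ⟨A, hA, hS⟩ := gy_periodic_sum (fun n => χ (n : ZMod q)) q hq (by intro n; simp)
    (fun n => χ.norm_le_one _)
  let E : ℝ → ℂ := fun t => ∑ k ∈ Finset.Icc 1 ⌊t⌋₊, χ (k : ZMod q) - A * t
  have hEm : Measurable E := by
    have h1 : Measurable (fun n : ℕ => ∑ k ∈ Finset.Icc 1 n, χ (k : ZMod q)) := measurable_from_nat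
    exact (h1.comp Nat.measurable_floor).sub (by fun_prop)
  have hEb : ∀ t : ℝ, 0 ≤ t → ‖E t‖ ≤ 3 * q := by
    intro t ht
    have h1 := hS ⌊t⌋₊
    have h2 : E t = (∑ k ∈ Finset.Icc 1 ⌊t⌋₊, χ (k : ZMod q) - A * (⌊t⌋₊ : ℕ))
      - A * ((t - ⌊t⌋₊ : ℝ) : ℂ) := by simp only [E]; push_cast; ring
    rw [h2]
    refine (norm_sub_le _ _).trans ?_
    have h3 : ‖A * ((t - ⌊t⌋₊ : ℝ) : ℂ)‖ ≤ 1 := by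
      rw [norm_mul, Complex.norm_real, Real.norm_eq_abs, abs_of_nonneg (by linarith [Nat.floor_le ht])]
      nlinarith [Nat.lt_floor_add_one t, Nat.floor_le ht, norm_nonneg A]
    have h4 : (1:ℝ) ≤ q := by exact_mod_cast hq
    linarith
  let e : ℝ → ℂ := (Set.Ioi 1).indicator E
  have hem : Measurable e := hEm.indicator measurableSet_Ioi
  have heb : ∀ t, ‖e t‖ ≤ 3 * q := by
    intro t
    by_cases h : t ∈ Set.Ioi (1:ℝ)
    · simp only [e, Set.indicator_of_mem h]; exact hEb t (by have := Set.mem_Ioi.mp h; linarith)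
    · simp only [e, Set.indicator_of_notMem h]; simp
  let J : ℂ → ℂ := fun s => mellin e (-s)
  have hJ : ∀ s, J s = ∫ t in Set.Ioi (1:ℝ), E t * (t:ℂ) ^ (-(s+1)) := by
    intro s
    simp only [J, mellin, e]
    rw [← integral_indicator measurableSet_Ioi, ← integral_indicator measurableSet_Ioi]
    congr 1
    ext t
    by_cases h : t ∈ Set.Ioi (1:ℝ)
    · have h0 : t ∈ Set.Ioi (0:ℝ) := by have := Set.mem_Ioi.mp h; exact Set.mem_Ioi.mpr (by linarith)
      rw [Set.indicator_of_mem h, Set.indicator_of_mem h0, Set.indicator_of_mem h, smul_eq_mul, mul_comm]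
      congr 2; ring
    · rw [Set.indicator_of_notMem h]
      by_cases h0 : t ∈ Set.Ioi (0:ℝ)
      · rw [Set.indicator_of_mem h0, Set.indicator_of_notMem h]; simp
      · rw [Set.indicator_of_notMem h0]
  have hInteg : ∀ s : ℂ, 0 < s.re → IntegrableOn (fun t : ℝ => E t * (t:ℂ) ^ (-(s+1))) (Set.Ioi 1) := by
    intro s hs
    refine Integrable.bdd_mul (c := 3 * q) (integrableOn_Ioi_cpow_of_lt (by simp; linarith) one_pos)
      hEm.aestronglyMeasurable ?_
    refine (ae_restrict_iff' measurableSet_Ioi).mpr (Filter.Eventually.of_forall fun t ht => ?_)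
    exact hEb t (by have := Set.mem_Ioi.mp ht; linarith)
  refine ⟨A, J, hA, ?_, ?_, ?_⟩
  · intro s hs
    have hs : 0 < s.re := hs
    have h := mellin_differentiableAt_of_isBigO_rpow (f := e) (a := 0) (b := -s.re - 1) (s := -s)
      ?_ ?_ (by simpa using hs) ?_ (by simp)
    · exact (h.comp s differentiableAt_id.neg).differentiableWithinAt
    · refine LocallyIntegrable.locallyIntegrableOn ?_ _
      refine (locallyIntegrable_const (3 * q : ℝ)).mono hem.aestronglyMeasurable ?_
      refine Filter.Eventually.of_forall fun t => ?_
      rw [Real.norm_of_nonneg (by positivity)]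
      exact heb t
    · simp only [neg_zero, Real.rpow_zero]
      exact Asymptotics.isBigO_of_le' (c := 3 * q) _ fun t => by simpa using heb t
    · refine Asymptotics.IsBigO.congr' (Asymptotics.isBigO_zero _ _) ?_ Filter.EventuallyEq.rfl
      have : Set.Iio (1:ℝ) ∈ nhdsWithin (0:ℝ) (Set.Ioi 0) :=
        mem_nhdsWithin_of_mem_nhds (Iio_mem_nhds one_pos)
      filter_upwards [this] with t ht
      have : t ∉ Set.Ioi (1:ℝ) := by have := Set.mem_Iio.mp ht; simp; linarith
      simp only [e, Set.indicator_of_notMem this]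
  · intro s hs
    rw [hJ]
    refine (norm_integral_le_of_norm_le (g := fun t : ℝ => (3 * q : ℝ) * t ^ (-(s.re+1))) ?_ ?_).trans ?_
    · exact (integrableOn_Ioi_rpow_of_lt (by linarith) one_pos).const_mul _
    · refine (ae_restrict_iff' measurableSet_Ioi).mpr (Filter.Eventually.of_forall fun t ht => ?_)
      have ht : (1:ℝ) < t := ht
      rw [norm_mul, Complex.norm_cpow_eq_rpow_re_of_pos (by linarith)]
      simp only [Complex.neg_re, Complex.add_re, Complex.one_re]
      gcongr
      exact hEb t (by linarith)
    · rw [integral_const_mul, integral_Ioi_rpow_of_lt (by linarith) one_pos]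
      simp only [Real.one_rpow]
      rw [show -(s.re+1) + 1 = -s.re by ring, neg_div_neg_eq, mul_one_div]
  · intro s hs
    have hs1 : s - 1 ≠ 0 := by intro h; rw [sub_eq_zero] at h; rw [h] at hs; simp at hs
    rw [DirichletCharacter.LFunction_eq_LSeries χ hs,
      LSeries_eq_mul_integral (fun n => χ (n : ZMod q)) (r := 1) zero_le_one hs
        (DirichletCharacter.LSeriesSummable_of_one_lt_re χ hs)]
    · have : ∀ t : ℝ, (∑ k ∈ Finset.Icc 1 ⌊t⌋₊, χ (k : ZMod q)) * (t:ℂ) ^ (-(s+1))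
        = E t * (t:ℂ) ^ (-(s+1)) + A * (t * (t:ℂ) ^ (-(s+1))) := by
        intro t; simp only [E]; ring
      simp_rw [this]
      have h2 : Set.EqOn (fun t : ℝ => A * ((t:ℂ) * (t:ℂ) ^ (-(s+1)))) (fun t : ℝ => A * (t:ℂ) ^ (-s))
          (Set.Ioi 1) := by
        intro t ht
        have ht : (1:ℝ) < t := ht
        have : (t:ℂ) ≠ 0 := by norm_cast; linarith
        simp only
        congr 1
        rw [show -s = 1 + -(s+1) by ring, Complex.cpow_add _ _ this, Complex.cpow_one]
      have h3 : IntegrableOn (fun t : ℝ => A * (t:ℂ) ^ (-s)) (Set.Ioi 1) :=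
        (integrableOn_Ioi_cpow_of_lt (by simpa using hs) one_pos).const_mul _
      rw [integral_add (hInteg s (by linarith)) (h3.congr_fun h2.symm measurableSet_Ioi),
        setIntegral_congr_fun measurableSet_Ioi h2, integral_const_mul,
        integral_Ioi_cpow_of_lt (by simpa using hs) one_pos, ← hJ]
      simp only [Complex.ofReal_one, Complex.one_cpow]
      have : -s + 1 ≠ 0 := by intro h; apply hs1; linear_combination -h
      field_simp
      ring
    · refine Asymptotics.isBigO_of_le _ fun n => ?_
      refine (norm_sum_le _ _).trans ?_
      simpa using Finset.sum_le_card_nsmul (Finset.Icc 1 n) _ 1 fun k _ => χ.norm_le_one (k : ZMod q)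

lemma gyF_bound {q : ℕ} [NeZero q] (χ : DirichletCharacter ℂ q) (s : ℂ) (hs : 1/5 ≤ s.re) :
    ‖gyF χ s‖ ≤ 16 * q * (‖s‖ + 1) ^ 2 := by
  obtain ⟨A, J, hA, hJd, hJb, hJ⟩ := gy_cont χ
  have hq : (1:ℝ) ≤ q := by exact_mod_cast NeZero.one_le
  set U : Set ℂ := {s | 0 < s.re}
  have hU : IsOpen U := isOpen_lt continuous_const Complex.continuous_re
  have hUc : IsPreconnected U := (convex_halfSpace_re_gt 0).isPreconnected
  have h2U : (2:ℂ) ∈ U := by simp [U]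
  have hnhds : {s : ℂ | 1 < s.re} ∈ nhds (2:ℂ) :=
    (isOpen_lt continuous_const Complex.continuous_re).mem_nhds (by simp)
  have hsU : s ∈ U := by simp only [U, Set.mem_ofPred_eq]; linarith
  have hJs : ‖J s‖ ≤ 15 * q := by
    refine (hJb s hsU).trans ?_
    have hs0 : 0 < s.re := hsU
    rw [div_le_iff₀ hs0]; nlinarith
  have han : ∀ f : ℂ → ℂ, Differentiable ℂ f → AnalyticOnNhd ℂ f U := fun f hf =>
    hf.differentiableOn.analyticOnNhd hU
  by_cases hχ : χ = 1
  · have hF : gyF χ = DirichletCharacter.LFunctionTrivChar₁ q := by simp [gyF, hχ]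
    have hEq : Set.EqOn (gyF χ) (fun s => A * s + s * (s - 1) * J s) U := by
      refine AnalyticOnNhd.eqOn_of_preconnected_of_eventuallyEq (han _ (gyF_diff χ)) ?_ hUc h2U ?_
      · refine DifferentiableOn.analyticOnNhd ?_ hU
        exact DifferentiableOn.add (by fun_prop) (DifferentiableOn.mul (by fun_prop) hJd)
      · filter_upwards [hnhds] with z hz
        have hz1 : z ≠ 1 := by rintro rfl; simp at hz
        rw [hF, ← hJ z hz, hχ]
        simp [DirichletCharacter.LFunctionTrivChar₁, Function.update_of_ne hz1]
    rw [hEq hsU]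
    have h1 : ‖s - 1‖ ≤ ‖s‖ + 1 := by simpa using norm_sub_le s 1
    have h0 := norm_nonneg s
    calc ‖A * s + s * (s-1) * J s‖ ≤ ‖A‖ * ‖s‖ + ‖s‖ * ‖s - 1‖ * ‖J s‖ := by
          refine (norm_add_le _ _).trans ?_
          simp
      _ ≤ 1 * ‖s‖ + ‖s‖ * (‖s‖ + 1) * (15 * q) := by gcongr
      _ ≤ q * (‖s‖ + 1)^2 + 15 * q * (‖s‖+1)^2 := by
          have : ‖s‖ ≤ (‖s‖ + 1)^2 := by nlinarith
          have h3 : ‖s‖ * (‖s‖ + 1) ≤ (‖s‖ + 1)^2 := by nlinarith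
          have h4 : (‖s‖+1)^2 ≤ q * (‖s‖+1)^2 := by nlinarith
          have h5 : ‖s‖ * (‖s‖ + 1) * (15 * q) ≤ (‖s‖ + 1)^2 * (15 * q) := by gcongr
          linarith
      _ = _ := by ring
  · have hF : gyF χ = DirichletCharacter.LFunction χ := by simp [gyF, hχ]
    have hEq : Set.EqOn (fun s => (s - 1) * gyF χ s) (fun s => A * s + s * (s - 1) * J s) U := by
      refine AnalyticOnNhd.eqOn_of_preconnected_of_eventuallyEq
        (han _ (Differentiable.mul (by fun_prop) (gyF_diff χ))) ?_ hUc h2U ?_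
      · refine DifferentiableOn.analyticOnNhd ?_ hU
        exact DifferentiableOn.add (by fun_prop) (DifferentiableOn.mul (by fun_prop) hJd)
      · filter_upwards [hnhds] with z hz
        rw [hF, ← hJ z hz]
    have hA0 : A = 0 := by
      have := hEq (show (1:ℂ) ∈ U by simp [U])
      simpa using this.symm
    have hEq2 : Set.EqOn (gyF χ) (fun s => s * J s) U := by
      refine AnalyticOnNhd.eqOn_of_preconnected_of_eventuallyEq (han _ (gyF_diff χ)) ?_ hUc h2U ?_
      · refine DifferentiableOn.analyticOnNhd ?_ hU
        exact DifferentiableOn.mul (by fun_prop) hJd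
      · filter_upwards [hnhds, hU.mem_nhds h2U] with z hz hzU
        have hz1 : z - 1 ≠ 0 := by
          intro h; rw [sub_eq_zero] at h; rw [h] at hz; simp at hz
        have := hEq hzU
        simp only [hA0, zero_mul, zero_add] at this
        refine mul_left_cancel₀ hz1 ?_
        rw [this]; ring
    rw [hEq2 hsU, norm_mul]
    have h0 := norm_nonneg s
    calc ‖s‖ * ‖J s‖ ≤ ‖s‖ * (15 * q) := by gcongr
      _ ≤ (‖s‖+1)^2 * (16 * q) := by gcongr <;> nlinarith
      _ = _ := by ring

lemma gyF_one {q : ℕ} [NeZero q] {s : ℂ} (hs : s ≠ 1) :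
    gyF (1 : DirichletCharacter ℂ q) s
      = (s - 1) * DirichletCharacter.LFunction (1 : DirichletCharacter ℂ q) s := by
  simp only [gyF, if_true, DirichletCharacter.LFunctionTrivChar₁, Function.update_of_ne hs]

lemma gyF_of_ne {q : ℕ} [NeZero q] {χ : DirichletCharacter ℂ q} (hχ : χ ≠ 1) :
    gyF χ = DirichletCharacter.LFunction χ := by
  simp [gyF, hχ]

lemma gyF_zero_LFunction {q : ℕ} [NeZero q] (χ : DirichletCharacter ℂ q) (s : ℂ)
    (h : gyF χ s = 0) : (χ ≠ 1 ∨ s ≠ 1) ∧ DirichletCharacter.LFunction χ s = 0 := by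
  by_cases hχ : χ = 1
  · subst hχ
    by_cases hs : s = 1
    · subst hs
      exfalso
      refine DirichletCharacter.LFunctionTrivChar₁_apply_one_ne_zero q ?_
      simpa only [gyF, if_true] using h
    · rw [gyF_one hs] at h
      refine ⟨Or.inr hs, (mul_eq_zero.mp h).resolve_left (sub_ne_zero.mpr hs)⟩
  · rw [gyF_of_ne hχ] at h
    exact ⟨Or.inl hχ, h⟩

lemma gyF_zero_re (hGRH : GRH) {q : ℕ} [NeZero q] (χ : DirichletCharacter ℂ q) (s : ℂ)
    (h : gyF χ s = 0) (hs : 0 < s.re) : s.re = 1/2 := by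
  obtain ⟨h1, h2⟩ := gyF_zero_LFunction χ s h
  by_cases hs1 : 1 ≤ s.re
  · exact absurd h2 (DirichletCharacter.LFunction_ne_zero_of_one_le_re χ h1 hs1)
  · exact hGRH q χ s h2 hs (not_le.mp hs1)

lemma gyF_ne_zero (hGRH : GRH) {q : ℕ} [NeZero q] (χ : DirichletCharacter ℂ q) (s : ℂ)
    (hs : 1/2 < s.re) : gyF χ s ≠ 0 := by
  intro h
  have := gyF_zero_re hGRH χ s h (by linarith)
  linarith

lemma gy_L_two {q : ℕ} [NeZero q] (χ : DirichletCharacter ℂ q) (s : ℂ) (hs : s.re = 2) :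
    1/4 ≤ ‖DirichletCharacter.LFunction χ s‖ := by
  have hs1 : 1 < s.re := by linarith
  rw [DirichletCharacter.LFunction_eq_LSeries χ hs1]
  have hsum := DirichletCharacter.LSeriesSummable_of_one_lt_re χ hs1
  have h1 : LSeries (fun n => χ (n : ZMod q)) s = 1 +
      ∑' n : ℕ, LSeries.term (fun n => χ (n : ZMod q)) s (n + 2) := by
    rw [LSeries, ← hsum.sum_add_tsum_nat_add 2, Finset.sum_range_succ, Finset.sum_range_succ]
    simp [LSeries.term]
  have hz : HasSum (fun n : ℕ => 1 / ((n + 2 : ℕ) : ℝ)^2) (Real.pi^2/6 - 1) := by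
    have := (hasSum_nat_add_iff' 2).mpr hasSum_zeta_two
    simpa [Finset.sum_range_succ] using this
  have h2 : ‖∑' n : ℕ, LSeries.term (fun n => χ (n : ZMod q)) s (n + 2)‖ ≤ Real.pi^2/6 - 1 := by
    refine tsum_of_norm_bounded hz fun n => ?_
    rw [LSeries.norm_term_eq]
    rw [if_neg (by omega), hs]
    have : (((n + 2 : ℕ) : ℝ))^(2:ℝ) = ((n + 2 : ℕ) : ℝ)^2 := Real.rpow_two _
    rw [this]
    gcongr
    exact χ.norm_le_one _
  rw [h1]
  have h3 := norm_sub_norm_le (1:ℂ) (-∑' n : ℕ, LSeries.term (fun n => χ (n : ZMod q)) s (n + 2))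
  rw [sub_neg_eq_add, norm_neg, norm_one] at h3
  have h4 := Real.pi_lt_d2
  have h5 := Real.pi_pos
  nlinarith

lemma gyF_two {q : ℕ} [NeZero q] (χ : DirichletCharacter ℂ q) (s : ℂ) (hs : s.re = 2) :
    1/4 ≤ ‖gyF χ s‖ := by
  have h := gy_L_two χ s hs
  by_cases hχ : χ = 1
  · subst hχ
    rw [gyF_one (by rintro rfl; norm_num at hs), norm_mul]
    have h2 : 1 ≤ ‖s - 1‖ := by
      have := Complex.re_le_norm (s - 1)
      simp [hs] at this
      linarith
    nlinarith
  · rwa [gyF_of_ne hχ]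

/-- size parameter -/
noncomputable def gyl (q : ℕ) (t : ℝ) : ℝ := Real.log q + Real.log (|t| + 2)

lemma gyl_pos (q : ℕ) [NeZero q] (t : ℝ) : 0 < gyl q t := by
  have h1 : (1:ℝ) ≤ q := by exact_mod_cast NeZero.one_le
  have h2 := Real.log_nonneg h1
  have h3 : 0 < Real.log (|t| + 2) := Real.log_pos (by linarith [abs_nonneg t])
  unfold gyl; linarith

lemma gy_zeros (hGRH : GRH) : ∃ A : ℝ, 0 < A ∧ ∀ (q : ℕ) [NeZero q] (χ : DirichletCharacter ℂ q)
    (t : ℝ), ∃ (n : ℕ) (γ : Fin n → ℝ), (n : ℝ) ≤ A * gyl q t ∧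
      ∀ s : ℂ, ‖s - (2 + t * Complex.I)‖ ≤ 16/10 → 1/2 < s.re →
        ‖logDeriv (gyF χ) s - ∑ i, 1 / (s - (1/2 + γ i * Complex.I))‖ ≤ A * gyl q t := by
  obtain ⟨A, hA, hloc⟩ := gy_local
  refine ⟨A * 14, by positivity, ?_⟩
  intro q _ χ t
  set c : ℂ := 2 + t * Complex.I with hc
  have hcre : c.re = 2 := by simp [hc]
  have hq : (1:ℝ) ≤ q := by exact_mod_cast NeZero.one_le
  have hB := gyl_pos q t
  have hat := abs_nonneg t
  have hexp : 1600 * q * (|t| + 1)^2 ≤ Real.exp (14 * gyl q t) := by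
    unfold gyl
    rw [show 14 * (Real.log q + Real.log (|t| + 2)) = Real.log (q^14 * (|t|+2)^14) by
      rw [Real.log_mul (by positivity) (by positivity), Real.log_pow, Real.log_pow]; push_cast; ring,
      Real.exp_log (by positivity)]
    have h1 : (q:ℝ) ≤ q^14 := le_self_pow₀ hq (by norm_num)
    have h2 : 1600 * (|t|+1)^2 ≤ (|t|+2)^14 := by
      have h3 : (2:ℝ)^12 ≤ (|t|+2)^12 := by gcongr; linarith
      have h4 : (|t|+1)^2 ≤ (|t|+2)^2 := by gcongr; linarith
      calc 1600 * (|t|+1)^2 ≤ (|t|+2)^12 * (|t|+2)^2 := by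
            gcongr; linarith
        _ = _ := by ring
    calc 1600 * q * (|t|+1)^2 = q * (1600 * (|t|+1)^2) := by ring
      _ ≤ _ := by gcongr
  obtain ⟨n, w, hw, hn, hz⟩ := hloc (fun z => gyF χ (c + z)) (14 * gyl q t)
    ((gyF_diff χ).comp (by fun_prop)) (by positivity)
    (by
      have := gyF_two χ (c + 0) (by simp [hcre])
      intro h
      have h : gyF χ (c + 0) = 0 := h
      rw [h] at this; norm_num at this)
    (by
      intro z hz
      have h1 := gyF_two χ (c + 0) (by simp [hcre])
      have hzre := (abs_le.mp (Complex.abs_re_le_norm z)).1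
      have h2 := gyF_bound χ (c + z) (by simp [hcre]; linarith)
      have h3 : ‖c + z‖ + 1 ≤ 5 * (|t| + 1) := by
        have : ‖c‖ ≤ 2 + |t| := by
          refine (norm_add_le _ _).trans ?_
          simp
        linarith [norm_add_le c z]
      calc ‖gyF χ (c+z)‖ ≤ 16 * q * (‖c + z‖ + 1)^2 := h2
        _ ≤ 16 * q * (5 * (|t|+1))^2 := by gcongr
        _ = 1600 * q * (|t|+1)^2 * (1/4) := by ring
        _ ≤ _ := by gcongr)
  have hre : ∀ i, (c + w i).re = 1/2 := by
    intro i
    refine gyF_zero_re hGRH χ _ (hw i).2 ?_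
    have := (abs_le.mp (Complex.abs_re_le_norm (w i))).1
    simp [hcre]; linarith [(hw i).1]
  refine ⟨n, fun i => (c + w i).im, by linarith, ?_⟩
  intro s hs hsre
  have h := hz (s - c) hs (by simpa using gyF_ne_zero hGRH χ s hsre)
  have e1 : logDeriv (fun z => gyF χ (c + z)) (s - c) = logDeriv (gyF χ) s := by
    rw [logDeriv_apply, logDeriv_apply, deriv_comp_const_add]; simp
  rw [e1] at h
  have e2 : ∀ i, (1:ℂ)/2 + ((c + w i).im : ℂ) * Complex.I = c + w i := by
    intro i
    conv_rhs => rw [← Complex.re_add_im (c + w i), hre i]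
    push_cast; ring
  have e3 : ∑ i, 1 / (s - ((1:ℂ)/2 + ((c + w i).im : ℂ) * Complex.I)) = ∑ i, 1 / (s - c - w i) := by
    refine Finset.sum_congr rfl fun i _ => ?_
    rw [e2]; congr 1; ring
  rw [e3]
  linarith

/-- pointwise bound -/
lemma gy_pointwise (hGRH : GRH) : ∃ A : ℝ, 0 < A ∧ ∀ (q : ℕ) [NeZero q]
    (χ : DirichletCharacter ℂ q) (s : ℂ), 1/2 < s.re → s.re ≤ 2 →
      ‖logDeriv (gyF χ) s‖ ≤ A * gyl q s.im / (s.re - 1/2) := by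
  obtain ⟨A, hA, h⟩ := gy_zeros hGRH
  refine ⟨3 * A, by positivity, ?_⟩
  intro q _ χ s hs hs2
  obtain ⟨n, γ, hn, hz⟩ := h q χ s.im
  have hl := gyl_pos q s.im
  have e : s - (2 + s.im * Complex.I) = ((s.re - 2 : ℝ) : ℂ) := by
    apply Complex.ext <;> simp
  have h1 := hz s (by rw [e, Complex.norm_real, Real.norm_eq_abs, abs_of_nonpos (by linarith)]; linarith) hs
  have hd : 0 < s.re - 1/2 := by linarith
  have h2 : ‖∑ i, 1 / (s - (1/2 + γ i * Complex.I))‖ ≤ n * (1 / (s.re - 1/2)) := by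
    refine (norm_sum_le _ _).trans ?_
    have : ∀ i ∈ (Finset.univ : Finset (Fin n)),
        ‖1 / (s - (1/2 + γ i * Complex.I))‖ ≤ 1 / (s.re - 1/2) := by
      intro i _
      rw [norm_div, norm_one]
      have := Complex.re_le_norm (s - (1/2 + γ i * Complex.I))
      have h3 : (s - (1/2 + γ i * Complex.I)).re = s.re - 1/2 := by simp
      rw [h3] at this
      gcongr
    simpa using Finset.sum_le_card_nsmul _ _ _ this
  have h3 : ‖logDeriv (gyF χ) s‖ ≤ A * gyl q s.im + n * (1 / (s.re - 1/2)) := by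
    have := norm_add_le (logDeriv (gyF χ) s - ∑ i, 1 / (s - (1/2 + γ i * Complex.I)))
      (∑ i, 1 / (s - (1/2 + γ i * Complex.I)))
    rw [sub_add_cancel] at this
    linarith
  refine h3.trans ?_
  rw [le_div_iff₀ hd, add_mul, mul_assoc (n:ℝ), one_div_mul_cancel hd.ne', mul_one]
  have : 0 < A * gyl q s.im := by positivity
  nlinarith

lemma gy_poisson_int (a γ u v : ℝ) (ha : 0 < a) :
    ∫ t in u..v, a / (a^2 + (t - γ)^2) ≤ Real.pi := by
  have hd : ∀ t ∈ Set.uIcc u v, HasDerivAt (fun t => Real.arctan ((t - γ) / a))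
      (a / (a^2 + (t - γ)^2)) t := by
    intro t _
    have h1 : HasDerivAt (fun t : ℝ => (t - γ)/a) (1/a) t :=
      ((hasDerivAt_id t).sub_const γ).div_const a
    have := h1.arctan
    convert this using 1
    have : a^2 + (t - γ)^2 ≠ 0 := by positivity
    have h2 : 1 + ((t - γ)/a)^2 ≠ 0 := by positivity
    field_simp
  rw [intervalIntegral.integral_eq_sub_of_hasDerivAt hd]
  · have h1 := Real.arctan_lt_pi_div_two ((v - γ)/a)
    have h2 := Real.neg_pi_div_two_lt_arctan ((u - γ)/a)
    linarith
  · refine Continuous.intervalIntegrable ?_ _ _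
    have : ∀ t : ℝ, a^2 + (t - γ)^2 ≠ 0 := fun t => by positivity
    fun_prop (disch := assumption)

lemma gy_logDeriv_analytic (hGRH : GRH) {q : ℕ} [NeZero q] (χ : DirichletCharacter ℂ q) :
    DifferentiableOn ℂ (logDeriv (gyF χ)) {s | 1/2 < s.re} := by
  intro s hs
  refine DifferentiableAt.differentiableWithinAt ?_
  refine DifferentiableAt.div ?_ (gyF_diff χ s) (gyF_ne_zero hGRH χ s hs)
  exact ((gyF_diff χ).contDiff (n := 2)).differentiable_deriv_two s

lemma gy_logDeriv_line_cont (hGRH : GRH) {q : ℕ} [NeZero q] (χ : DirichletCharacter ℂ q) (σ : ℝ)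
    (hσ : 1/2 < σ) : Continuous (fun t : ℝ => logDeriv (gyF χ) (σ + t * Complex.I)) := by
  refine ContinuousOn.comp_continuous (gy_logDeriv_analytic hGRH χ).continuousOn (by fun_prop) ?_
  intro t
  simpa using hσ

/-- mean bound for the real part -/
lemma gy_mean (hGRH : GRH) : ∃ A : ℝ, 0 < A ∧ ∀ (q : ℕ) [NeZero q]
    (χ : DirichletCharacter ℂ q) (σ m : ℝ), 1/2 < σ → σ ≤ 2 →
      ∫ t in m..(m+1), |(logDeriv (gyF χ) (σ + t * Complex.I)).re| ≤ A * gyl q (m + 1/2) := by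
  obtain ⟨A, hA, h⟩ := gy_zeros hGRH
  refine ⟨A * (1 + Real.pi), by positivity, ?_⟩
  intro q _ χ σ m hσ hσ2
  obtain ⟨n, γ, hn, hz⟩ := h q χ (m + 1/2)
  set l := gyl q (m + 1/2)
  have ha : 0 < σ - 1/2 := by linarith
  have hcontp : ∀ i : Fin n, Continuous fun t : ℝ => (σ - 1/2) / ((σ-1/2)^2 + (t - γ i)^2) := by
    intro i
    have : ∀ t : ℝ, (σ-1/2)^2 + (t - γ i)^2 ≠ 0 := fun t => by positivity
    fun_prop (disch := assumption)
  have hpt : ∀ t ∈ Set.Icc m (m+1), |(logDeriv (gyF χ) (σ + t * Complex.I)).re| ≤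
      A * l + ∑ i, (σ - 1/2) / ((σ-1/2)^2 + (t - γ i)^2) := by
    intro t ht
    have h1 := hz (σ + t * Complex.I) ?_ (by simpa using hσ)
    · have h2 := (Complex.abs_re_le_norm _).trans h1
      rw [Complex.sub_re, Complex.re_sum] at h2
      have e : ∀ i, (1 / ((σ:ℂ) + t * Complex.I - (1/2 + γ i * Complex.I))).re
          = (σ - 1/2) / ((σ-1/2)^2 + (t - γ i)^2) := by
        intro i
        have e1 : (σ:ℂ) + t * Complex.I - (1/2 + γ i * Complex.I)
          = ((σ - 1/2 : ℝ) : ℂ) + ((t - γ i : ℝ) : ℂ) * Complex.I := by push_cast; ring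
        rw [e1, one_div, Complex.inv_re, Complex.normSq_add_mul_I]
        simp
      simp_rw [e] at h2
      have h3 : 0 ≤ ∑ i, (σ - 1/2) / ((σ-1/2)^2 + (t - γ i)^2) :=
        Finset.sum_nonneg fun i _ => by positivity
      have h4 := abs_sub_abs_le_abs_sub ((logDeriv (gyF χ) (σ + t * Complex.I)).re)
        (∑ i, (σ - 1/2) / ((σ-1/2)^2 + (t - γ i)^2))
      rw [abs_of_nonneg h3] at h4
      linarith
    · have e1 : (σ:ℂ) + t * Complex.I - (2 + ((m + 1/2 : ℝ) : ℂ) * Complex.I)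
          = ((σ - 2 : ℝ) : ℂ) + ((t - (m+1/2) : ℝ) : ℂ) * Complex.I := by push_cast; ring
      rw [e1, Complex.norm_add_mul_I]
      rw [Real.sqrt_le_left (by norm_num)]
      have h5 : |t - (m+1/2)| ≤ 1/2 := by
        rw [abs_le]; constructor <;> linarith [ht.1, ht.2]
      have h6 : (t - (m+1/2))^2 ≤ (1/2)^2 := sq_le_sq' (abs_le.mp h5).1 (abs_le.mp h5).2
      nlinarith
  calc ∫ t in m..(m+1), |(logDeriv (gyF χ) (σ + t * Complex.I)).re|
      ≤ ∫ t in m..(m+1), (A * l + ∑ i, (σ - 1/2) / ((σ-1/2)^2 + (t - γ i)^2)) := by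
        refine intervalIntegral.integral_mono_on (by linarith) ?_ ?_ hpt
        · exact ((Complex.continuous_re.comp (gy_logDeriv_line_cont hGRH χ σ hσ)).abs).intervalIntegrable _ _
        · exact (continuous_const.add (continuous_finsetSum _ fun i _ => hcontp i)).intervalIntegrable _ _
    _ = A * l + ∑ i, ∫ t in m..(m+1), (σ - 1/2) / ((σ-1/2)^2 + (t - γ i)^2) := by
        rw [intervalIntegral.integral_add (by simp)
          ((continuous_finsetSum _ fun i _ => hcontp i).intervalIntegrable _ _),
          intervalIntegral.integral_finsetSum fun i _ => (hcontp i).intervalIntegrable _ _]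
        simp
    _ ≤ A * l + n * Real.pi := by
        gcongr
        simpa using Finset.sum_le_card_nsmul (Finset.univ : Finset (Fin n)) _ Real.pi
          fun i _ => gy_poisson_int (σ - 1/2) (γ i) m (m+1) ha
    _ ≤ A * l + A * l * Real.pi := by gcongr
    _ = _ := by ring

lemma gy_int_bound : MeasureTheory.Integrable (fun t : ℝ => (1 + |t|) ^ (-(3/2) : ℝ)) := by
  have := integrable_one_add_norm (E := ℝ) (μ := MeasureTheory.volume) (r := 3/2) (by simp; norm_num)
  simpa using this

lemma gy_shift_tendsto : Filter.Tendsto (fun t : ℝ => (1 + |t|) ^ (-(3/2) : ℝ)) Filter.atTop (nhds 0) := by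
  refine (tendsto_rpow_neg_atTop (by norm_num : (0:ℝ) < 3/2)).comp ?_
  exact Filter.tendsto_atTop_add_const_left _ _ Filter.tendsto_abs_atTop_atTop

/-- shifting a vertical contour -/
lemma gy_shift (f : ℂ → ℂ) (a b C : ℝ) (hab : a ≤ b)
    (hf : DifferentiableOn ℂ f {s | a ≤ s.re ∧ s.re ≤ b})
    (hb : ∀ s : ℂ, a ≤ s.re → s.re ≤ b → ‖f s‖ ≤ C * (1 + |s.im|) ^ (-(3/2) : ℝ)) :
    MeasureTheory.Integrable (fun t : ℝ => f (a + t * Complex.I)) ∧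
    MeasureTheory.Integrable (fun t : ℝ => f (b + t * Complex.I)) ∧
    ∫ t : ℝ, f (a + t * Complex.I) = ∫ t : ℝ, f (b + t * Complex.I) := by
  have hInteg : ∀ c : ℝ, a ≤ c → c ≤ b →
      MeasureTheory.Integrable (fun t : ℝ => f (c + t * Complex.I)) := by
    intro c h1 h2
    refine (gy_int_bound.const_mul C).mono' ?_ ?_
    · refine Continuous.aestronglyMeasurable ?_
      refine hf.continuousOn.comp_continuous (by fun_prop) ?_
      intro t; simpa using ⟨h1, h2⟩
    · refine Filter.Eventually.of_forall fun t => ?_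
      have := hb (c + t * Complex.I) (by simpa using h1) (by simpa using h2)
      simpa using this
  refine ⟨hInteg a le_rfl hab, hInteg b hab le_rfl, ?_⟩
  have hrect : ∀ T : ℝ, (∫ x : ℝ in a..b, f (x + ((-T : ℝ) : ℂ) * Complex.I))
      - (∫ x : ℝ in a..b, f (x + T * Complex.I))
      + Complex.I • (∫ y : ℝ in (-T)..T, f (b + y * Complex.I))
      - Complex.I • (∫ y : ℝ in (-T)..T, f (a + y * Complex.I)) = 0 := by
    intro T
    have := Complex.integral_boundary_rect_eq_zero_of_differentiableOn f ⟨a, -T⟩ ⟨b, T⟩ (by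
      refine hf.mono ?_
      intro s hs
      have := hs.1
      simp only [Set.mem_preimage, Set.uIcc_of_le hab, Set.mem_Icc] at this
      exact this)
    exact this
  have hz : ∀ T : ℝ, ‖∫ x : ℝ in a..b, f (x + T * Complex.I)‖
      ≤ C * (1 + |T|) ^ (-(3/2) : ℝ) * |b - a| := by
    intro T
    refine intervalIntegral.norm_integral_le_of_norm_le_const ?_
    intro x hx
    rw [Set.uIoc_of_le hab] at hx
    have := hb (x + T * Complex.I) (by simpa using hx.1.le) (by simpa using hx.2)
    simpa using this
  have hz0 : Filter.Tendsto (fun T : ℝ => C * (1 + |T|) ^ (-(3/2) : ℝ) * |b - a|) Filter.atTop (nhds 0) := by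
    simpa using (gy_shift_tendsto.const_mul C).mul_const |b - a|
  have t1 : Filter.Tendsto (fun T : ℝ => ∫ x : ℝ in a..b, f (x + T * Complex.I)) Filter.atTop (nhds 0) :=
    squeeze_zero_norm hz hz0
  have t2 : Filter.Tendsto (fun T : ℝ => ∫ x : ℝ in a..b, f (x + ((-T : ℝ) : ℂ) * Complex.I))
      Filter.atTop (nhds 0) := by
    refine squeeze_zero_norm (fun T => ?_) hz0
    have := hz (-T)
    rwa [abs_neg] at this
  have t3 := MeasureTheory.intervalIntegral_tendsto_integral (hInteg a le_rfl hab)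
    Filter.tendsto_neg_atTop_atBot Filter.tendsto_id
  have t4 := MeasureTheory.intervalIntegral_tendsto_integral (hInteg b hab le_rfl)
    Filter.tendsto_neg_atTop_atBot Filter.tendsto_id
  have t5 := ((t2.sub t1).add (t4.const_smul Complex.I)).sub (t3.const_smul Complex.I)
  have t6 := tendsto_nhds_unique t5 ((tendsto_const_nhds (x := (0:ℂ))).congr
    (fun T => (hrect T).symm))
  simp only [sub_zero, zero_add, smul_eq_mul] at t6
  rw [← mul_sub] at t6
  rcases mul_eq_zero.mp t6 with h | h
  · exact absurd h Complex.I_ne_zero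
  · exact (sub_eq_zero.mp h).symm

/-- vertical decay of `1/(s(s+1))` -/
lemma gy_inv_bound (s : ℂ) (a : ℝ) (ha : 0 < a) (ha1 : a ≤ 1) (hs : a ≤ s.re) :
    ‖1 / (s * (s + 1))‖ ≤ (1 / a) * (1 + s.im^2)⁻¹ := by
  have hs0 : 0 < s.re := by linarith
  have h1 : a^2 * (1 + s.im^2) ≤ ‖s‖^2 := by
    rw [← Complex.normSq_eq_norm_sq, Complex.normSq_apply]
    have e1 : a * a ≤ s.re * s.re := mul_le_mul hs hs ha.le hs0.le
    have e2 : a * a ≤ 1 := by nlinarith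
    have e3 := mul_le_mul_of_nonneg_right e2 (sq_nonneg s.im)
    nlinarith
  have h2 : (1 + s.im^2) ≤ ‖s+1‖^2 := by
    rw [← Complex.normSq_eq_norm_sq, Complex.normSq_apply]
    simp
    nlinarith [sq_nonneg s.im]
  have h3 : a * (1 + s.im^2) ≤ ‖s * (s+1)‖ := by
    rw [norm_mul]
    refine abs_le_of_sq_le_sq' ?_ (by positivity) |>.2
    rw [mul_pow, mul_pow]
    calc a^2 * (1 + s.im^2)^2 = (a^2 * (1 + s.im^2)) * (1 + s.im^2) := by ring
      _ ≤ _ := by gcongr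
  have h4 : 0 < a * (1 + s.im^2) := by positivity
  rw [norm_div, norm_one]
  calc 1 / ‖s * (s+1)‖ ≤ 1 / (a * (1 + s.im^2)) := by gcongr
    _ = _ := by field_simp

lemma gy_inv_bound' (t : ℝ) : (1 + t^2)⁻¹ ≤ 2 * (1 + |t|) ^ (-2 : ℝ) := by
  rw [Real.rpow_neg (by positivity), Real.rpow_two]
  have : (1 + |t|)^2 ≤ 2 * (1 + t^2) := by
    rw [← sq_abs t]; nlinarith [sq_nonneg (|t| - 1)]
  rw [← div_eq_mul_inv, le_div_iff₀ (by positivity), inv_mul_le_iff₀ (by positivity)]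
  linarith

lemma gy_inv_integrable (σ : ℝ) (hσ : 0 < σ) :
    MeasureTheory.Integrable (fun t : ℝ => 1 / ((σ + t * Complex.I : ℂ) * ((σ + t * Complex.I : ℂ) + 1))) := by
  have hne : ∀ t : ℝ, (σ + t * Complex.I : ℂ) ≠ 0 := by
    intro t h; have := congrArg Complex.re h; simp at this; linarith
  have hne1 : ∀ t : ℝ, (σ + t * Complex.I : ℂ) + 1 ≠ 0 := by
    intro t h; have := congrArg Complex.re h; simp at this; linarith
  refine (integrable_inv_one_add_sq.const_mul (1 / min σ 1)).mono' ?_ ?_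
  · refine Continuous.aestronglyMeasurable ?_
    refine Continuous.div continuous_const (by fun_prop) ?_
    intro t; exact mul_ne_zero (hne t) (hne1 t)
  · refine Filter.Eventually.of_forall fun t => ?_
    have := gy_inv_bound (σ + t * Complex.I) (min σ 1) (by positivity) (min_le_right _ _) (by simp)
    simpa using this

noncomputable def gyf1 (y : ℝ) : ℝ := max (1 - y) 0

lemma gy_perron1 (y : ℝ) (hy : 0 < y) :
    ∫ t : ℝ, (y : ℂ) ^ (-(((2:ℝ):ℂ) + t * Complex.I)) *
      (1 / ((((2:ℝ):ℂ) + t * Complex.I) * ((((2:ℝ):ℂ) + t * Complex.I) + 1)))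
      = 2 * Real.pi * (gyf1 y : ℂ) := by
  have hm : ∀ s : ℂ, 0 < s.re → HasMellin (fun t : ℝ => ((gyf1 t : ℝ) : ℂ)) s (1 / (s * (s+1))) := by
    intro s hs
    have h0 := hasMellin_one_Ioc hs
    have h1 := hasMellin_cpow_Ioc 1 (s := s) (by simp; linarith)
    have h2 := hasMellin_sub h0.1 h1.1
    rw [h0.2, h1.2] at h2
    have hs0 : s ≠ 0 := by intro h; simp [h] at hs
    have hs1 : s + 1 ≠ 0 := by intro h; have := congrArg Complex.re h; simp at this; linarith
    have e : 1 / s - 1 / (s + 1) = 1 / (s * (s+1)) := by field_simp; ring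
    rw [e] at h2
    have hfe : Set.EqOn (fun t : ℝ => (Set.Ioc 0 1).indicator (fun _ => (1:ℂ)) t -
        (Set.Ioc 0 1).indicator (fun t : ℝ => (t:ℂ)^(1:ℂ)) t) (fun t : ℝ => ((gyf1 t : ℝ) : ℂ)) (Set.Ioi 0) := by
      intro t ht
      have ht : 0 < t := ht
      by_cases h : t ≤ 1
      · simp [Set.indicator, ht, h, gyf1]
      · simp [Set.indicator, h, gyf1, (not_le.mp h).le]
    refine ⟨?_, ?_⟩
    · refine (MeasureTheory.integrableOn_congr_fun ?_ measurableSet_Ioi).mp h2.1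
      intro t ht
      simp only
      have := hfe ht
      simp only at this
      rw [← this]
    · rw [← h2.2]
      refine MeasureTheory.setIntegral_congr_fun measurableSet_Ioi ?_
      intro t ht
      have := hfe ht
      simp only at this ⊢
      rw [← this]
  have := mellinInv_mellin_eq 2 (fun t : ℝ => ((gyf1 t : ℝ) : ℂ)) hy
    (hm ((2:ℝ):ℂ) (by simp)).1 (by
      refine (gy_inv_integrable 2 (by norm_num)).congr ?_
      refine Filter.Eventually.of_forall fun t => ?_
      exact (hm _ (by simp)).2.symm) (by
      refine Continuous.continuousAt ?_
      unfold gyf1; fun_prop)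
  rw [← this, mellinInv]
  have e : ∀ t : ℝ, mellin (fun t : ℝ => ((gyf1 t : ℝ) : ℂ)) (((2:ℝ):ℂ) + t * Complex.I)
      = (1 / ((((2:ℝ):ℂ) + t * Complex.I) * ((((2:ℝ):ℂ) + t * Complex.I) + 1))) := fun t =>
    (hm _ (by simp)).2
  simp only [e, smul_eq_mul]
  rw [Complex.real_smul]
  generalize (∫ t : ℝ, _ : ℂ) = z
  push_cast
  have := Real.pi_ne_zero
  field_simp

noncomputable def gyf2 (y : ℝ) : ℝ := (max (1 - y) 0)^2 / (2 * y)

lemma gy_perron2 (y : ℝ) (hy : 0 < y) :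
    ∫ t : ℝ, (y : ℂ) ^ (-(((2:ℝ):ℂ) + t * Complex.I)) *
      (1 / ((((2:ℝ):ℂ) + t * Complex.I) * ((((2:ℝ):ℂ) + t * Complex.I) + 1)) *
        (1 / ((((2:ℝ):ℂ) + t * Complex.I) - 1)))
      = 2 * Real.pi * (gyf2 y : ℂ) := by
  have hm : ∀ s : ℂ, 1 < s.re → HasMellin (fun t : ℝ => ((gyf2 t : ℝ) : ℂ)) s
      (1 / (s * (s+1)) * (1 / (s - 1))) := by
    intro s hs
    have h0 := hasMellin_one_Ioc (s := s) (by linarith)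
    have h1 := hasMellin_cpow_Ioc 1 (s := s) (by simp; linarith)
    have h3 := hasMellin_cpow_Ioc (-1) (s := s) (by simp; linarith)
    have h2 := hasMellin_add (h0.1.const_smul (-1:ℂ)) (hasMellin_add (h1.1.const_smul (1/2:ℂ)) (h3.1.const_smul (1/2:ℂ))).1
    rw [(hasMellin_add (h1.1.const_smul (1/2:ℂ)) (h3.1.const_smul (1/2:ℂ))).2, mellin_const_smul, mellin_const_smul, mellin_const_smul, h0.2, h1.2, h3.2] at h2
    have hs0 : s ≠ 0 := by intro h; simp [h] at hs; linarith
    have hs1 : s + 1 ≠ 0 := by intro h; have := congrArg Complex.re h; simp at this; linarith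
    have hs2 : s - 1 ≠ 0 := by intro h; have := congrArg Complex.re h; simp at this; linarith
    have e : (-1 : ℂ) • (1 / s) + ((1/2:ℂ) • (1 / (s + 1)) + (1/2:ℂ) • (1 / (s + -1)))
        = 1 / (s * (s+1)) * (1 / (s - 1)) := by
      rw [← sub_eq_add_neg]
      simp only [smul_eq_mul]
      field_simp; ring
    rw [e] at h2
    have hfe : Set.EqOn (fun t : ℝ => (-1:ℂ) • (Set.Ioc 0 1).indicator (fun _ => (1:ℂ)) t +
        ((1/2:ℂ) • (Set.Ioc 0 1).indicator (fun t : ℝ => (t:ℂ)^(1:ℂ)) t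
        + (1/2:ℂ) • (Set.Ioc 0 1).indicator (fun t : ℝ => (t:ℂ)^(-1:ℂ)) t)) (fun t : ℝ => ((gyf2 t : ℝ) : ℂ)) (Set.Ioi 0) := by
      intro t ht
      have ht : 0 < t := ht
      by_cases h : t ≤ 1
      · have : (t:ℂ) ≠ 0 := by exact_mod_cast ht.ne'
        simp [Set.indicator, ht, h, gyf2, Complex.cpow_neg_one]
        field_simp
        ring
      · simp [Set.indicator, h, gyf2, (not_le.mp h).le]
    refine ⟨?_, ?_⟩
    · refine (MeasureTheory.integrableOn_congr_fun ?_ measurableSet_Ioi).mp h2.1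
      intro t ht
      simp only
      have := hfe ht
      simp only at this
      rw [← this]
    · rw [← h2.2]
      refine MeasureTheory.setIntegral_congr_fun measurableSet_Ioi ?_
      intro t ht
      have := hfe ht
      simp only at this ⊢
      rw [← this]
  have := mellinInv_mellin_eq 2 (fun t : ℝ => ((gyf2 t : ℝ) : ℂ)) hy
    (hm ((2:ℝ):ℂ) (by simp)).1 (by
      have hne : ∀ t : ℝ, (((2:ℝ):ℂ) + t * Complex.I : ℂ) - 1 ≠ 0 := by
        intro t h; have := congrArg Complex.re h; norm_num at this
      have : MeasureTheory.Integrable (fun t : ℝ => (1 / ((((2:ℝ):ℂ) + t * Complex.I) * ((((2:ℝ):ℂ) + t * Complex.I) + 1)) *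
        (1 / ((((2:ℝ):ℂ) + t * Complex.I) - 1)))) := by
        refine (gy_inv_integrable 2 (by norm_num)).mul_bdd (c := 1) ?_ ?_
        · refine Continuous.aestronglyMeasurable ?_
          refine Continuous.div continuous_const (by fun_prop) hne
        · refine Filter.Eventually.of_forall fun t => ?_
          rw [norm_div, norm_one]
          have := Complex.re_le_norm ((((2:ℝ):ℂ) + t * Complex.I) - 1)
          norm_num at this
          exact div_le_one_of_le₀ (by norm_num; exact this) (norm_nonneg _)
      refine this.congr ?_
      refine Filter.Eventually.of_forall fun t => ?_
      exact (hm _ (by simp)).2.symm) (by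
      have : ContinuousAt (fun t : ℝ => gyf2 t) y := by
        unfold gyf2
        refine ContinuousAt.div (by fun_prop) (by fun_prop) (by positivity)
      exact Complex.continuous_ofReal.continuousAt.comp this)
  rw [← this, mellinInv]
  have e : ∀ t : ℝ, mellin (fun t : ℝ => ((gyf2 t : ℝ) : ℂ)) (((2:ℝ):ℂ) + t * Complex.I)
      = (1 / ((((2:ℝ):ℂ) + t * Complex.I) * ((((2:ℝ):ℂ) + t * Complex.I) + 1)) *
        (1 / ((((2:ℝ):ℂ) + t * Complex.I) - 1))) := fun t =>
    (hm _ (by simp)).2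
  simp only [e, smul_eq_mul]
  rw [Complex.real_smul]
  generalize (∫ t : ℝ, _ : ℂ) = z
  push_cast
  have := Real.pi_ne_zero
  field_simp

noncomputable def gyd {q : ℕ} (χ : DirichletCharacter ℂ q) : ℝ :=
  open Classical in if χ = 1 then 1 else 0

lemma gyd_nonneg {q : ℕ} (χ : DirichletCharacter ℂ q) : 0 ≤ gyd χ := by
  unfold gyd; split_ifs <;> norm_num

lemma gyd_le_one {q : ℕ} (χ : DirichletCharacter ℂ q) : gyd χ ≤ 1 := by
  unfold gyd; split_ifs <;> norm_num

lemma gy_logDeriv_eq {q : ℕ} [NeZero q] (χ : DirichletCharacter ℂ q) (s : ℂ) (hs : 1 < s.re) :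
    -logDeriv (gyF χ) s = LSeries (fun n => χ (n : ZMod q) * (vonMangoldt n : ℂ)) s
      - gyd χ / (s - 1) := by
  have hne : s ≠ 1 := by rintro rfl; simp at hs
  have hU : {z : ℂ | 1 < z.re} ∈ nhds s := (isOpen_lt continuous_const Complex.continuous_re).mem_nhds hs
  have h1 := DirichletCharacter.LSeries_twist_vonMangoldt_eq χ hs
  have h2 : LSeries (fun n => χ (n : ZMod q)) =ᶠ[nhds s] DirichletCharacter.LFunction χ := by
    filter_upwards [hU] with z hz
    exact (DirichletCharacter.LFunction_eq_LSeries χ hz).symm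
  rw [h2.deriv_eq, h2.eq_of_nhds] at h1
  have h3 : LSeries (fun n => χ (n : ZMod q) * (vonMangoldt n : ℂ)) s
      = - logDeriv (DirichletCharacter.LFunction χ) s := by
    rw [logDeriv_apply, ← neg_div, ← h1]; rfl
  rw [h3]
  by_cases hχ : χ = 1
  · have h4 : gyF χ =ᶠ[nhds s] fun z => (z - 1) * DirichletCharacter.LFunction χ z := by
      filter_upwards [hU] with z hz
      subst hχ
      exact gyF_one (by rintro rfl; simp at hz)
    have h5 : logDeriv (gyF χ) s = logDeriv (fun z => (z - 1) * DirichletCharacter.LFunction χ z) s := by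
      rw [logDeriv_apply, logDeriv_apply, h4.deriv_eq, h4.eq_of_nhds]
    rw [h5, logDeriv_mul (f := fun z : ℂ => z - 1) s (sub_ne_zero.mpr hne)
      (DirichletCharacter.LFunction_ne_zero_of_one_le_re χ (Or.inr hne) hs.le) (by fun_prop)
      (DirichletCharacter.differentiableAt_LFunction χ s (Or.inl hne))]
    have : logDeriv (fun z : ℂ => z - 1) s = 1 / (s - 1) := by
      rw [logDeriv_apply]; simp
    rw [this, gyd, if_pos hχ]
    push_cast; ring
  · rw [gyF_of_ne hχ, gyd, if_neg hχ]; simp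

lemma gy_perron (hGRH : GRH) {q : ℕ} [NeZero q] (χ : DirichletCharacter ℂ q) (X : ℝ) (hX : 1 ≤ X) (M : ℕ)
    (hM : X ≤ M) :
    ∫ t : ℝ, -logDeriv (gyF χ) (((2:ℝ):ℂ) + t * Complex.I) *
      ((X:ℂ) ^ ((((2:ℝ):ℂ) + t * Complex.I) + 1) *
      (1 / ((((2:ℝ):ℂ) + t * Complex.I) * ((((2:ℝ):ℂ) + t * Complex.I) + 1))))
     = 2 * Real.pi * (∑ n ∈ Finset.Icc 1 M, χ (n : ZMod q) * (vonMangoldt n : ℂ) * ((max (X - n) 0 : ℝ) : ℂ)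
        - gyd χ * ((X - 1)^2 / 2 : ℝ)) := by
  have hX0 : 0 < X := by linarith
  have hXc : (X : ℂ) ≠ 0 := by exact_mod_cast hX0.ne'
  set κ : ℝ → ℂ := fun t => 1 / ((((2:ℝ):ℂ) + t * Complex.I) * ((((2:ℝ):ℂ) + t * Complex.I) + 1)) with hκ
  have hκi : MeasureTheory.Integrable κ := gy_inv_integrable 2 (by norm_num)
  set f : ℕ → ℂ := fun n => χ (n : ZMod q) * (vonMangoldt n : ℂ) with hf
  set s : ℝ → ℂ := fun t => ((2:ℝ):ℂ) + t * Complex.I with hs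
  have hsre : ∀ t, (s t).re = 2 := by intro t; simp [hs]
  have hsc : Continuous s := by fun_prop
  have hXs : ∀ t, ‖(X:ℂ) ^ (s t + 1)‖ = X^3 := by
    intro t
    rw [Complex.norm_cpow_eq_rpow_re_of_pos hX0]
    simp only [Complex.add_re, hsre, Complex.one_re]
    rw [← Real.rpow_natCast]; norm_num
  have hXcont : Continuous (fun t => (X:ℂ) ^ (s t + 1)) := by
    refine Continuous.const_cpow (by fun_prop) (Or.inl hXc)
  have hfs : LSeriesSummable f (2:ℂ) :=
    DirichletCharacter.LSeriesSummable_twist_vonMangoldt χ (by simp)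
  set F : ℕ → ℝ → ℂ := fun n t => LSeries.term f (s t) n * ((X:ℂ) ^ (s t + 1) * κ t) with hF
  have hFn : ∀ n t, ‖F n t‖ = ‖LSeries.term f 2 n‖ * X^3 * ‖κ t‖ := by
    intro n t
    simp only [hF, norm_mul, hXs, LSeries.norm_term_eq, hsre]
    norm_num
    ring
  have hFi : ∀ n, MeasureTheory.Integrable (F n) := by
    intro n
    refine (hκi.norm.const_mul (‖LSeries.term f 2 n‖ * X^3)).mono' ?_ ?_
    · refine (Continuous.aestronglyMeasurable ?_).mul (hXcont.aestronglyMeasurable.mul hκi.1)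
      rcases eq_or_ne n 0 with rfl | hn
      · simp only [LSeries.term_zero]; exact continuous_const
      · simp only [LSeries.term_of_ne_zero hn]
        have hn' : (n:ℂ) ≠ 0 := by exact_mod_cast hn
        refine Continuous.div continuous_const (Continuous.const_cpow hsc (Or.inl hn')) ?_
        intro t; exact (Complex.cpow_ne_zero_iff_of_exponent_ne_zero (by
          intro h; have := congrArg Complex.re h; rw [hsre] at this; simp at this)).mpr hn'
    · exact Filter.Eventually.of_forall fun t => (hFn n t).le
  have hsum := MeasureTheory.hasSum_integral_of_summable_integral_norm hFi (by
    simp only [hFn]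
    simp only [MeasureTheory.integral_const_mul]
    exact (hfs.norm.mul_right _).mul_right _)
  have hIn : ∀ n, ∫ t, F n t = 2 * Real.pi * (f n * ((max (X - n) 0 : ℝ) : ℂ)) := by
    intro n
    rcases eq_or_ne n 0 with rfl | hn
    · simp [hF, hf]
    · have hn0 : (0:ℝ) < n := by positivity
      have hn' : (n:ℂ) ≠ 0 := by exact_mod_cast hn
      have hp := gy_perron1 (n / X) (by positivity)
      have e : ∀ t, F n t = f n * X * (((n / X : ℝ) : ℂ) ^ (-(s t)) * κ t) := by
        intro t
        simp only [hF, LSeries.term_of_ne_zero hn]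
        rw [Complex.cpow_add _ _ hXc, Complex.cpow_one]
        push_cast
        have : ((n:ℂ) / (X:ℂ)) ^ (-(s t)) = (X:ℂ)^(s t) / (n:ℂ)^(s t) := by
          rw [Complex.cpow_neg]
          have := Complex.mul_cpow_ofReal_nonneg (a := n / X) (b := X) (by positivity) hX0.le (s t)
          rw [← Complex.ofReal_mul, div_mul_cancel₀ _ hX0.ne'] at this
          push_cast at this
          rw [this]
          have hz1 : (X:ℂ)^(s t) ≠ 0 := by simp [Complex.cpow_eq_zero_iff, hXc]
          have hz2 : ((n:ℂ)/(X:ℂ))^(s t) ≠ 0 := by simp [Complex.cpow_eq_zero_iff, hXc, hn']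
          field_simp
        rw [this]
        ring
      simp only [e]
      rw [MeasureTheory.integral_const_mul, hp]
      have : ((max (X - n) 0 : ℝ) : ℂ) = X * (gyf1 (n / X) : ℂ) := by
        rw [← Complex.ofReal_mul, gyf1, mul_max_of_nonneg _ _ hX0.le, mul_sub, mul_div_cancel₀ _ hX0.ne']
        simp
      rw [this]; ring
  simp only [hIn] at hsum
  have hfin := hsum.unique (hasSum_sum_of_ne_finset_zero (s := Finset.Icc 1 M) (by
    intro n hn
    rcases eq_or_ne n 0 with rfl | h0
    · simp [hf]
    · have : M < n := by
        by_contra h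
        exact hn (Finset.mem_Icc.mpr ⟨Nat.one_le_iff_ne_zero.mpr h0, by omega⟩)
      have : (M:ℝ) < n := by exact_mod_cast this
      rw [max_eq_right (by linarith)]; simp))
  have hp2 := gy_perron2 (1 / X) (by positivity)
  have e2 : ∀ t, ((X:ℂ)^(s t + 1) * (κ t * (1 / (s t - 1)))) = X * (((1 / X : ℝ) : ℂ) ^ (-(s t)) * (κ t * (1 / (s t - 1)))) := by
    intro t
    rw [Complex.cpow_add _ _ hXc, Complex.cpow_one]
    have : (((1 / X : ℝ) : ℂ)) ^ (-(s t)) = (X:ℂ)^(s t) := by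
      rw [Complex.cpow_neg]
      push_cast
      rw [one_div, Complex.inv_cpow _ _ (by rw [Complex.arg_ofReal_of_nonneg hX0.le]; exact Real.pi_pos.ne), inv_inv]
    rw [this]; ring
  have hI2 : ∫ t, ((X:ℂ)^(s t + 1) * (κ t * (1 / (s t - 1)))) = 2 * Real.pi * ((X-1)^2/2 : ℝ) := by
    simp only [e2]
    rw [MeasureTheory.integral_const_mul, hp2]
    have : ((X-1)^2/2 : ℝ) = X * gyf2 (1/X) := by
      have : 1 / X ≤ 1 := by rw [div_le_one hX0]; exact hX
      rw [gyf2, max_eq_left (by linarith)]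
      field_simp
    rw [this]; push_cast; ring
  have hs1 : ∀ t, s t - 1 ≠ 0 := by
    intro t h; have := congrArg Complex.re h; rw [Complex.sub_re, hsre] at this; norm_num at this
  have hI2i : MeasureTheory.Integrable (fun t => ((X:ℂ)^(s t + 1) * (κ t * (1 / (s t - 1))))) := by
    have : MeasureTheory.Integrable (fun t : ℝ => κ t * (1 / (s t - 1))) := by
      refine hκi.mul_bdd (c := 1) ?_ ?_
      · refine Continuous.aestronglyMeasurable ?_
        refine Continuous.div continuous_const (by fun_prop) hs1
      · refine Filter.Eventually.of_forall fun t => ?_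
        rw [norm_div, norm_one]
        have := Complex.re_le_norm (s t - 1)
        rw [Complex.sub_re, hsre] at this
        norm_num at this
        exact div_le_one_of_le₀ this (norm_nonneg _)
    refine this.bdd_mul (c := X^3) hXcont.aestronglyMeasurable ?_
    exact Filter.Eventually.of_forall fun t => (hXs t).le
  have hGe : ∀ t, -logDeriv (gyF χ) (s t) * ((X:ℂ) ^ (s t + 1) * κ t)
      = ∑' n, F n t - gyd χ * ((X:ℂ)^(s t + 1) * (κ t * (1 / (s t - 1)))) := by
    intro t
    rw [gy_logDeriv_eq χ (s t) (by rw [hsre]; norm_num)]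
    simp only [hF]
    rw [tsum_mul_right]
    change (LSeries f (s t) - _) * _ = LSeries f (s t) * _ - _
    ring
  have hTi : MeasureTheory.Integrable (fun t => ∑' n, F n t) := by
    have : (fun t => ∑' n, F n t) = fun t => -logDeriv (gyF χ) (s t) * ((X:ℂ) ^ (s t + 1) * κ t)
      + gyd χ * ((X:ℂ)^(s t + 1) * (κ t * (1 / (s t - 1)))) := by
      funext t; rw [hGe t]; ring
    have hm : MeasureTheory.AEStronglyMeasurable (fun t => ∑' n, F n t) := by
      rw [this]
      refine MeasureTheory.AEStronglyMeasurable.add ?_ ((hI2i.1).const_mul _)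
      refine (Continuous.aestronglyMeasurable ?_).mul (hXcont.aestronglyMeasurable.mul hκi.1)
      exact (gy_logDeriv_line_cont hGRH χ 2 (by norm_num)).neg
    refine (hκi.norm.const_mul ((∑' n, ‖LSeries.term f 2 n‖) * X^3)).mono' hm ?_
    refine Filter.Eventually.of_forall fun t => ?_
    refine tsum_of_norm_bounded (g := fun n => ‖LSeries.term f 2 n‖ * X^3 * ‖κ t‖) ?_ (fun n => (hFn n t).le)
    exact (hfs.norm.hasSum.mul_right _).mul_right _
  change ∫ t, -logDeriv (gyF χ) (s t) * ((X:ℂ) ^ (s t + 1) * κ t) = _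
  simp only [hGe]
  rw [MeasureTheory.integral_sub hTi (hI2i.const_mul _), MeasureTheory.integral_const_mul, hI2, hfin,
    ← Finset.mul_sum]
  ring

noncomputable def gyK (x h : ℝ) (s : ℂ) : ℂ :=
  (((x + h : ℝ) : ℂ) ^ (s + 1) - (x : ℂ) ^ (s + 1)) / h * (1 / (s * (s + 1)))

lemma gyK_b1 (x h a : ℝ) (s : ℂ) (hx : 0 < x) (hh : 0 < h) (hhx : h ≤ x) (ha : 0 < a) (ha1 : a ≤ 1)
    (hs : a ≤ s.re) :
    ‖gyK x h s‖ ≤ 2 * (2 * x) ^ (s.re + 1) / h * ((1 / a) * (1 + s.im^2)⁻¹) := by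
  unfold gyK
  rw [norm_mul, norm_div]
  have h1 : ‖((x + h : ℝ) : ℂ) ^ (s + 1) - (x : ℂ) ^ (s + 1)‖ ≤ 2 * (2 * x) ^ (s.re + 1) := by
    refine (norm_sub_le _ _).trans ?_
    rw [Complex.norm_cpow_eq_rpow_re_of_pos hx, Complex.norm_cpow_eq_rpow_re_of_pos (by linarith)]
    simp only [Complex.add_re, Complex.one_re]
    have e1 : (x + h) ^ (s.re + 1) ≤ (2 * x) ^ (s.re + 1) :=
      Real.rpow_le_rpow (by linarith) (by linarith) (by linarith)
    have e2 : x ^ (s.re + 1) ≤ (2 * x) ^ (s.re + 1) :=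
      Real.rpow_le_rpow (by linarith) (by linarith) (by linarith)
    linarith
  have h2 : ‖(h : ℂ)‖ = h := by simp [abs_of_pos hh]
  rw [h2]
  have h3 := gy_inv_bound s a ha ha1 hs
  gcongr

lemma gyK_b2 (x h : ℝ) (s : ℂ) (hx : 0 < x) (hh : 0 < h) (hhx : h ≤ x) (hs : 0 < s.re) :
    ‖gyK x h s‖ ≤ (2 * x) ^ s.re / ‖s‖ := by
  have hs1 : s + 1 ≠ 0 := by intro h; have := congrArg Complex.re h; simp at this; linarith
  have hsm1 : s ≠ -1 := by rintro rfl; simp at hs; linarith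
  have hs0 : s ≠ 0 := by rintro rfl; simp at hs
  have hmv := Convex.norm_image_sub_le_of_norm_hasDerivWithin_le (f := fun y : ℝ => (y : ℂ) ^ (s + 1) / (s + 1))
    (f' := fun y : ℝ => (y : ℂ) ^ s) (s := Set.Icc x (x + h)) (C := (2 * x) ^ s.re) (x := x) (y := x + h)
    (by
      intro y hy
      exact (hasDerivAt_ofReal_cpow_const' (by linarith [hy.1]) hsm1).hasDerivWithinAt)
    (by
      intro y hy
      rw [Complex.norm_cpow_eq_rpow_re_of_pos (by linarith [hy.1])]
      exact Real.rpow_le_rpow (by linarith [hy.1]) (by linarith [hy.2]) hs.le)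
    (convex_Icc _ _) (by simp [hh.le]) (by simp [hh.le])
  have e : gyK x h s = (((x + h : ℝ) : ℂ) ^ (s + 1) / (s + 1) - (x : ℂ) ^ (s + 1) / (s + 1)) / h / s := by
    unfold gyK
    have : (h : ℂ) ≠ 0 := by exact_mod_cast hh.ne'
    field_simp
  rw [e, norm_div, norm_div]
  have h2 : ‖(h : ℂ)‖ = h := by simp [abs_of_pos hh]
  rw [h2]
  have h3 : ‖x + h - x‖ = h := by simp [abs_of_pos hh]
  rw [h3] at hmv
  gcongr
  rw [div_le_iff₀ hh]
  exact hmv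

lemma gyK_diff (x h : ℝ) (hx : 0 < x) (hh : 0 < h) : DifferentiableOn ℂ (gyK x h) {s | 0 < s.re} := by
  intro s hs
  have hs : 0 < s.re := hs
  have hs1 : s + 1 ≠ 0 := by intro h; have := congrArg Complex.re h; simp at this; linarith
  have hs0 : s ≠ 0 := by rintro rfl; simp at hs
  have hxc : (x : ℂ) ≠ 0 := by exact_mod_cast hx.ne'
  have hxhc : ((x + h : ℝ) : ℂ) ≠ 0 := by exact_mod_cast (by linarith : x + h ≠ 0)
  refine DifferentiableAt.differentiableWithinAt ?_
  unfold gyK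
  refine DifferentiableAt.mul (DifferentiableAt.div_const (DifferentiableAt.sub ?_ ?_) _) ?_
  · exact DifferentiableAt.const_cpow (by fun_prop) (Or.inl hxhc)
  · exact DifferentiableAt.const_cpow (by fun_prop) (Or.inl hxc)
  · exact DifferentiableAt.div (by fun_prop) (by fun_prop) (mul_ne_zero hs0 hs1)

lemma gyl_le (q : ℕ) [NeZero q] (t : ℝ) : gyl q t ≤ (Real.log q + 3) * (1 + |t|) ^ (1/2 : ℝ) := by
  have h1 : (1:ℝ) ≤ q := by exact_mod_cast NeZero.one_le
  have h2 := Real.log_nonneg h1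
  have h0 := abs_nonneg t
  have h3 : 1 ≤ (1 + |t|) ^ (1/2 : ℝ) := Real.one_le_rpow (by linarith) (by norm_num)
  have h4 : Real.log (|t| + 2) ≤ 3 * (1 + |t|) ^ (1/2 : ℝ) := by
    have e1 := Real.log_le_rpow_div (x := |t| + 2) (by linarith) (ε := 1/2) (by norm_num)
    have e2 : (|t| + 2) ^ (1/2 : ℝ) ≤ (9/4 * (1 + |t|)) ^ (1/2 : ℝ) :=
      Real.rpow_le_rpow (by linarith) (by linarith) (by norm_num)
    have e3 : (9/4 : ℝ) ^ (1/2 : ℝ) = 3/2 := by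
      rw [← Real.sqrt_eq_rpow, Real.sqrt_eq_iff_mul_self_eq (by norm_num) (by norm_num)]; norm_num
    rw [Real.mul_rpow (by norm_num) (by linarith), e3] at e2
    linarith
  unfold gyl
  nlinarith

lemma gy_decay (C1 C2 B t : ℝ) (h1 : 0 ≤ C1) (h2 : 0 ≤ C2) (a b : ℝ) (hb : 0 ≤ b)
    (ha : a ≤ C1 * (1 + |t|) ^ (1/2 : ℝ)) (hbb : b ≤ C2 * (1 + t^2)⁻¹) (hB : 2 * C1 * C2 = B) :
    a * b ≤ B * (1 + |t|) ^ (-(3/2) : ℝ) := by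
  have h3 := gy_inv_bound' t
  have hp : 0 < 1 + |t| := by positivity
  have e : (1 + |t|) ^ (-(3/2) : ℝ) = (1 + |t|) ^ (1/2 : ℝ) * (1 + |t|) ^ (-2 : ℝ) := by
    rw [← Real.rpow_add hp]; norm_num
  have h4 : b ≤ C2 * (2 * (1 + |t|) ^ (-2 : ℝ)) := hbb.trans (by gcongr)
  calc a * b ≤ (C1 * (1 + |t|) ^ (1/2 : ℝ)) * (C2 * (2 * (1 + |t|) ^ (-2 : ℝ))) := by
        refine mul_le_mul ha h4 hb (by positivity)
    _ = _ := by rw [e, ← hB]; ring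

/-- splitting of an integral over the line into unit intervals -/
lemma gy_int_split (φ : ℝ → ℝ) (hφ : MeasureTheory.Integrable φ) (b : ℕ → ℝ) (B : ℝ)
    (h1 : ∀ m : ℕ, ∫ t in (m:ℝ)..(m+1), φ t ≤ b m)
    (h2 : ∀ m : ℕ, ∫ t in (-((m:ℝ)+1))..(-(m:ℝ)), φ t ≤ b m)
    (hB : ∀ n : ℕ, ∑ m ∈ range n, b m ≤ B) : ∫ t, φ t ≤ 2 * B := by
  have hii : ∀ u v : ℝ, IntervalIntegrable φ MeasureTheory.volume u v := fun u v =>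
    hφ.intervalIntegrable
  have key : ∀ n : ℕ, ∫ t in (-(n:ℝ))..(n:ℝ), φ t ≤ 2 * ∑ m ∈ range n, b m := by
    intro n
    induction n with
    | zero => simp
    | succ n ih =>
      rw [Finset.sum_range_succ]
      have e1 := intervalIntegral.integral_add_adjacent_intervals (hii (-((n:ℝ)+1)) (-(n:ℝ))) (hii (-(n:ℝ)) n)
      have e2 := intervalIntegral.integral_add_adjacent_intervals (hii (-((n:ℝ)+1)) (n:ℝ)) (hii n (n+1))
      push_cast
      rw [← e2, ← e1]
      have := h1 n
      have := h2 n
      linarith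
  have ht : Filter.Tendsto (fun n : ℕ => ∫ t in (-(n:ℝ))..(n:ℝ), φ t) Filter.atTop (nhds (∫ t, φ t)) :=
    MeasureTheory.intervalIntegral_tendsto_integral hφ
      (Filter.tendsto_neg_atTop_atBot.comp tendsto_natCast_atTop_atTop) tendsto_natCast_atTop_atTop
  refine le_of_tendsto ht (Filter.Eventually.of_forall fun n => ?_)
  have := key n
  have := hB n
  linarith

lemma gy_LambdaSeries (hGRH : GRH) : ∃ B : ℝ, 0 < B ∧ ∀ (q : ℕ) [NeZero q] (χ : DirichletCharacter ℂ q)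
    (s : ℂ), 1 < s.re → s.re ≤ 2 → ‖logDeriv (gyF χ) s‖ ≤ B / (s.re - 1) := by
  obtain ⟨A, hA, hpt⟩ := gy_pointwise hGRH
  set A' := A * gyl 1 0 / (1/2) with hA'
  have hgl := gyl_pos 1 0
  refine ⟨2 + A', by positivity, ?_⟩
  intro q _ χ s hs hs2
  set σ := s.re with hσ
  have hd : 0 < σ - 1 := by linarith
  have h1 := gy_logDeriv_eq χ s hs
  have hre : ((σ : ℝ) : ℂ).re = σ := Complex.ofReal_re σ
  have h2 := gy_logDeriv_eq (1 : DirichletCharacter ℂ 1) (σ : ℂ) (by rw [hre]; exact hs)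
  have hsumΛ : LSeriesSummable (fun n => (1 : DirichletCharacter ℂ 1) (n : ZMod 1) * (vonMangoldt n : ℂ)) (σ:ℂ) :=
    DirichletCharacter.LSeriesSummable_twist_vonMangoldt 1 (by rw [hre]; exact hs)
  have hterm : ∀ n, LSeries.term (fun n => (1 : DirichletCharacter ℂ 1) (n : ZMod 1) * (vonMangoldt n : ℂ)) (σ:ℂ) n
      = ((if n = 0 then 0 else vonMangoldt n / (n:ℝ)^σ : ℝ) : ℂ) := by
    intro n
    rcases eq_or_ne n 0 with rfl | hn
    · simp
    · rw [LSeries.term_of_ne_zero hn, if_neg hn]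
      have : (1 : DirichletCharacter ℂ 1) (n : ZMod 1) = 1 := MulChar.one_apply (by
        exact isUnit_of_subsingleton _)
      rw [this, one_mul]
      push_cast
      rw [Complex.ofReal_cpow (by positivity)]; simp
  have hsumR : Summable (fun n : ℕ => (if n = 0 then 0 else vonMangoldt n / (n:ℝ)^σ : ℝ)) := by
    have := hsumΛ
    unfold LSeriesSummable at this
    rw [← Complex.summable_ofReal]
    exact this.congr (fun n => (hterm n))
  have hLr : LSeries (fun n => (1 : DirichletCharacter ℂ 1) (n : ZMod 1) * (vonMangoldt n : ℂ)) (σ:ℂ)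
      = ((∑' n : ℕ, (if n = 0 then 0 else vonMangoldt n / (n:ℝ)^σ : ℝ) : ℝ) : ℂ) := by
    rw [LSeries, Complex.ofReal_tsum]
    exact tsum_congr hterm
  set S := ∑' n : ℕ, (if n = 0 then 0 else vonMangoldt n / (n:ℝ)^σ : ℝ) with hS
  have hS0 : 0 ≤ S := tsum_nonneg fun n => by
    split_ifs
    · exact le_rfl
    · exact div_nonneg vonMangoldt_nonneg (by positivity)
  have hSb : S ≤ 1 / (σ - 1) + A' := by
    have h3 := hpt 1 (1 : DirichletCharacter ℂ 1) (σ:ℂ) (by rw [hre]; linarith) (by rw [hre]; exact hs2)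
    rw [hre, Complex.ofReal_im] at h3
    have h4 : A * gyl 1 0 / (σ - 1/2) ≤ A' := by
      rw [hA']; gcongr; linarith
    rw [hLr] at h2
    have h5 : (S : ℂ) = ((1 / (σ - 1) : ℝ) : ℂ) - logDeriv (gyF (1 : DirichletCharacter ℂ 1)) (σ:ℂ) := by
      rw [sub_eq_add_neg, h2, gyd, if_pos rfl]; push_cast; ring
    have h6 : ‖(S:ℂ)‖ ≤ 1 / (σ - 1) + A' := by
      rw [h5]
      refine (norm_sub_le _ _).trans ?_
      rw [Complex.norm_real, Real.norm_of_nonneg (by positivity)]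
      linarith
    rwa [Complex.norm_real, Real.norm_of_nonneg hS0] at h6
  have hLb : ‖LSeries (fun n => χ (n : ZMod q) * (vonMangoldt n : ℂ)) s‖ ≤ S := by
    refine tsum_of_norm_bounded hsumR.hasSum fun n => ?_
    rw [LSeries.norm_term_eq]
    rcases eq_or_ne n 0 with rfl | hn
    · simp
    · rw [if_neg hn, if_neg hn, norm_mul, Complex.norm_real, Real.norm_of_nonneg vonMangoldt_nonneg]
      gcongr
      calc _ ≤ 1 * vonMangoldt n := mul_le_mul_of_nonneg_right (χ.norm_le_one _) vonMangoldt_nonneg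
        _ = _ := one_mul _
  have hdb : ‖(gyd χ : ℂ) / (s - 1)‖ ≤ 1 / (σ - 1) := by
    rw [norm_div, Complex.norm_real, Real.norm_of_nonneg (gyd_nonneg χ)]
    have := Complex.re_le_norm (s - 1)
    rw [Complex.sub_re, Complex.one_re] at this
    have := gyd_le_one χ
    gcongr
  rw [← norm_neg, h1]
  refine (norm_sub_le _ _).trans ?_
  have h7 : A' ≤ A' / (σ - 1) := by
    rw [le_div_iff₀ hd]
    have : 0 < A' := by positivity
    nlinarith
  have : (2 + A') / (σ - 1) = 1/(σ-1) + 1/(σ-1) + A'/(σ-1) := by ring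
  rw [this]
  linarith

lemma gy_wsum : ∃ C : ℝ, 0 < C ∧ ∀ (q : ℕ) [NeZero q] (x : ℝ), 2 ≤ x → (q : ℝ) ≤ 2 * x → ∀ n : ℕ,
    ∑ m ∈ range n, gyl q (m + 1/2) * min (1 / (1 + (m:ℝ))) (Real.sqrt x / (1 + (m:ℝ)^2))
      ≤ C * Real.log (4 * x) ^ 2 := by
  have hs : Summable (fun m : ℕ => (1 + (m:ℝ)) ^ (-(5/4) : ℝ)) := by
    have h := Real.summable_nat_rpow (p := -(5/4)) |>.mpr (by norm_num)
    have := (summable_nat_add_iff 1).mpr h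
    refine this.congr fun m => ?_
    push_cast; rw [add_comm]
  set S0 := ∑' m : ℕ, (1 + (m:ℝ)) ^ (-(5/4) : ℝ) with hS0
  have hS0p : 0 ≤ S0 := tsum_nonneg fun m => by positivity
  refine ⟨9 + 16 * S0, by positivity, ?_⟩
  intro q _ x hx hq n
  set ℓ := Real.log (4 * x) with hℓ
  have hℓ1 : 1 ≤ ℓ := by
    rw [hℓ, Real.le_log_iff_exp_le (by linarith)]
    have := Real.exp_one_lt_d9; linarith
  have hq1 : (1:ℝ) ≤ q := by exact_mod_cast NeZero.one_le
  have hlq : Real.log q ≤ ℓ := Real.log_le_log (by linarith) (by linarith)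
  have hlq0 := Real.log_nonneg hq1
  have hterm : ∀ m : ℕ, gyl q (m + 1/2) * min (1 / (1 + (m:ℝ))) (Real.sqrt x / (1 + (m:ℝ)^2))
      ≤ 3 * ℓ * (if m < ⌊x^2⌋₊ + 1 then 1 / (1 + (m:ℝ)) else 0) + 16 * ℓ * (1 + (m:ℝ)) ^ (-(5/4) : ℝ) := by
    intro m
    have hg0 := gyl_pos q ((m:ℝ) + 1/2)
    have hm0 : (0:ℝ) ≤ m := by positivity
    have habs : |(m:ℝ) + 1/2| = m + 1/2 := abs_of_nonneg (by positivity)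
    by_cases hm : m < ⌊x^2⌋₊ + 1
    · rw [if_pos hm]
      have hm2 : (m:ℝ) ≤ x^2 := by
        have := Nat.floor_le (sq_nonneg x)
        have h3 : (m:ℝ) ≤ ⌊x^2⌋₊ := by exact_mod_cast Nat.lt_succ_iff.mp hm
        linarith
      have h1 : gyl q (m + 1/2) ≤ 3 * ℓ := by
        unfold gyl
        rw [habs]
        have : Real.log (m + 1/2 + 2) ≤ 2 * ℓ := by
          have e : 2 * ℓ = Real.log ((4*x)^2) := by rw [Real.log_pow]; norm_num; rfl
          rw [e]
          exact Real.log_le_log (by linarith) (by nlinarith)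
        linarith
      have h2 : gyl q (m + 1/2) * min (1 / (1 + (m:ℝ))) (Real.sqrt x / (1 + (m:ℝ)^2)) ≤ 3 * ℓ * (1 / (1 + (m:ℝ))) := by
        refine mul_le_mul h1 (min_le_left _ _) (by positivity) (by positivity)
      have : 0 ≤ 16 * ℓ * (1 + (m:ℝ)) ^ (-(5/4) : ℝ) := by positivity
      linarith
    · rw [if_neg hm, mul_zero, zero_add]
      have hm2 : x^2 < (m:ℝ) := by
        have := Nat.lt_floor_add_one (x^2)
        have h3 : ((⌊x^2⌋₊ + 1 : ℕ) : ℝ) ≤ m := by exact_mod_cast not_lt.mp hm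
        push_cast at h3
        linarith
      have hp : (0:ℝ) < 1 + m := by positivity
      have h1 : gyl q (m + 1/2) ≤ 8 * ℓ * (1 + (m:ℝ)) ^ (1/2 : ℝ) := by
        refine (gyl_le q _).trans ?_
        rw [habs]
        have e1 : (1 + ((m:ℝ) + 1/2)) ^ (1/2 : ℝ) ≤ (4 * (1 + (m:ℝ))) ^ (1/2 : ℝ) :=
          Real.rpow_le_rpow (by positivity) (by linarith) (by norm_num)
        have e3 : (4 : ℝ) ^ (1/2 : ℝ) = 2 := by
          rw [← Real.sqrt_eq_rpow, Real.sqrt_eq_iff_mul_self_eq (by norm_num) (by norm_num)]; norm_num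
        rw [Real.mul_rpow (by norm_num) (by linarith), e3] at e1
        calc (Real.log q + 3) * (1 + ((m:ℝ) + 1/2)) ^ (1/2 : ℝ)
            ≤ (4 * ℓ) * (2 * (1 + (m:ℝ)) ^ (1/2 : ℝ)) := by
              refine mul_le_mul (by linarith) e1 (by positivity) (by positivity)
          _ = _ := by ring
      have h2 : Real.sqrt x ≤ (1 + (m:ℝ)) ^ (1/4 : ℝ) := by
        have : Real.sqrt x = (x^2) ^ (1/4 : ℝ) := by
          rw [Real.sqrt_eq_rpow, ← Real.rpow_natCast, ← Real.rpow_mul (by linarith)]; norm_num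
        rw [this]
        exact Real.rpow_le_rpow (by positivity) (by linarith) (by norm_num)
      have h3 : 1 / (1 + (m:ℝ)^2) ≤ 2 * (1 + (m:ℝ)) ^ (-2 : ℝ) := by
        have := gy_inv_bound' (m:ℝ)
        rw [abs_of_nonneg hm0] at this
        rwa [one_div]
      calc _ ≤ gyl q (m + 1/2) * (Real.sqrt x / (1 + (m:ℝ)^2)) := by
            gcongr; exact min_le_right _ _
        _ = gyl q (m + 1/2) * (Real.sqrt x * (1 / (1 + (m:ℝ)^2))) := by rw [mul_one_div]
        _ ≤ (8 * ℓ * (1 + (m:ℝ)) ^ (1/2 : ℝ)) * ((1 + (m:ℝ)) ^ (1/4 : ℝ) * (2 * (1 + (m:ℝ)) ^ (-2 : ℝ))) := by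
            gcongr
        _ = 16 * ℓ * ((1 + (m:ℝ)) ^ (1/2 : ℝ) * (1 + (m:ℝ)) ^ (1/4 : ℝ) * (1 + (m:ℝ)) ^ (-2 : ℝ)) := by ring
        _ = _ := by
            rw [← Real.rpow_add hp, ← Real.rpow_add hp]; norm_num
  refine (Finset.sum_le_sum fun m _ => hterm m).trans ?_
  rw [Finset.sum_add_distrib, ← Finset.mul_sum, ← Finset.mul_sum]
  have h1 : ∑ m ∈ range n, (if m < ⌊x^2⌋₊ + 1 then 1 / (1 + (m:ℝ)) else 0) ≤ 3 * ℓ := by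
    rw [← Finset.sum_filter]
    calc _ ≤ ∑ m ∈ range (⌊x^2⌋₊ + 1), 1 / (1 + (m:ℝ)) := by
          refine Finset.sum_le_sum_of_subset_of_nonneg ?_ (fun _ _ _ => by positivity)
          intro m hm
          exact Finset.mem_range.mpr (Finset.mem_filter.mp hm).2
      _ = ((harmonic (⌊x^2⌋₊ + 1) : ℚ) : ℝ) := by
          rw [harmonic]; push_cast
          refine Finset.sum_congr rfl fun m _ => ?_
          rw [one_div, add_comm]
      _ ≤ 1 + Real.log ((⌊x^2⌋₊ + 1 : ℕ) : ℝ) := harmonic_le_one_add_log _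
      _ ≤ 1 + 2 * ℓ := by
          have e : 2 * ℓ = Real.log ((4*x)^2) := by rw [Real.log_pow]; norm_num; rfl
          rw [e]
          have := Nat.floor_le (sq_nonneg x)
          gcongr
          push_cast
          nlinarith
      _ ≤ _ := by linarith
  have h2 : ∑ m ∈ range n, (1 + (m:ℝ)) ^ (-(5/4) : ℝ) ≤ S0 :=
    hs.sum_le_tsum _ (fun m _ => by positivity)
  have h3 : 3 * ℓ * ∑ m ∈ range n, (if m < ⌊x^2⌋₊ + 1 then 1 / (1 + (m:ℝ)) else 0) ≤ 3 * ℓ * (3 * ℓ) := by gcongr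
  have h4 : 16 * ℓ * ∑ m ∈ range n, (1 + (m:ℝ)) ^ (-(5/4) : ℝ) ≤ 16 * ℓ * S0 := by gcongr
  have h5 : 16 * ℓ * S0 ≤ 16 * S0 * ℓ^2 := by nlinarith [mul_nonneg hS0p (by linarith : 0 ≤ ℓ)]
  nlinarith

lemma gy_eps (x : ℝ) (hx : 2 ≤ x) : (2 * x) ^ (1 / Real.log (4 * x)) ≤ 3 := by
  have hℓ : 0 < Real.log (4 * x) := Real.log_pos (by linarith)
  calc (2 * x) ^ (1 / Real.log (4 * x)) ≤ (4 * x) ^ (1 / Real.log (4 * x)) :=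
        Real.rpow_le_rpow (by linarith) (by linarith) (by positivity)
    _ = Real.exp 1 := by
        rw [Real.rpow_def_of_pos (by linarith), mul_one_div_cancel hℓ.ne']
    _ ≤ 3 := by have := Real.exp_one_lt_d9; linarith

lemma gyK_line (x h t : ℝ) (hx : 2 ≤ x) (hh : Real.sqrt x ≤ h) (hhx : h ≤ x) (σ : ℝ)
    (hσ : σ = 1/2 + 1 / Real.log (4 * x)) :
    ‖gyK x h (σ + t * Complex.I)‖ ≤ 48 * Real.sqrt x * min (1 / (1 + |t|)) (Real.sqrt x / (1 + t^2)) := by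
  have hx0 : 0 < x := by linarith
  have hsx : 0 < Real.sqrt x := Real.sqrt_pos.mpr hx0
  have hsq : Real.sqrt x * Real.sqrt x = x := Real.mul_self_sqrt hx0.le
  have hh0 : 0 < h := by linarith
  have hε : 0 < 1 / Real.log (4 * x) := one_div_pos.mpr (Real.log_pos (by linarith))
  have hre : (σ + t * Complex.I : ℂ).re = σ := by simp
  have him : (σ + t * Complex.I : ℂ).im = t := by simp
  have hpow : (2 * x) ^ σ ≤ 6 * Real.sqrt x := by
    rw [hσ, Real.rpow_add (by linarith), ← Real.sqrt_eq_rpow, Real.sqrt_mul (by norm_num)]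
    have h2 : Real.sqrt 2 ≤ 2 := by
      rw [Real.sqrt_le_left (by norm_num)]; norm_num
    calc Real.sqrt 2 * Real.sqrt x * (2 * x) ^ (1 / Real.log (4 * x)) ≤ 2 * Real.sqrt x * 3 := by
          have := gy_eps x hx
          gcongr
      _ = _ := by ring
  rw [mul_min_of_nonneg _ _ (by positivity)]
  refine le_min ?_ ?_
  · have h1 := gyK_b2 x h (σ + t * Complex.I) hx0 hh0 hhx (by rw [hre]; linarith)
    rw [hre] at h1
    have h2 : (1 + |t|) / 3 ≤ ‖(σ + t * Complex.I : ℂ)‖ := by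
      refine abs_le_of_sq_le_sq' ?_ (norm_nonneg _) |>.2
      rw [← Complex.normSq_eq_norm_sq, Complex.normSq_apply, hre, him]
      have : t * t = |t| * |t| := (abs_mul_abs_self t).symm
      rw [this]
      nlinarith [sq_nonneg (|t| - 1/8), mul_self_nonneg (σ - 1/2)]
    calc _ ≤ (2 * x) ^ σ / ‖(σ + t * Complex.I : ℂ)‖ := h1
      _ ≤ 6 * Real.sqrt x / ((1 + |t|) / 3) := by gcongr
      _ = 18 * Real.sqrt x * (1 / (1 + |t|)) := by field_simp; ring
      _ ≤ _ := by gcongr; norm_num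
  · have h1 := gyK_b1 x h (1/2) (σ + t * Complex.I) hx0 hh0 hhx (by norm_num) (by norm_num) (by rw [hre]; linarith)
    rw [hre, him] at h1
    refine h1.trans ?_
    rw [Real.rpow_add (by linarith), Real.rpow_one]
    calc 2 * ((2 * x) ^ σ * (2 * x)) / h * (1 / (1 / 2) * (1 + t ^ 2)⁻¹)
        ≤ 2 * ((6 * Real.sqrt x) * (2 * x)) / Real.sqrt x * (1 / (1 / 2) * (1 + t ^ 2)⁻¹) := by gcongr
      _ = 48 * (x) * (1 + t^2)⁻¹ := by field_simp; norm_num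
      _ = 48 * (Real.sqrt x * Real.sqrt x) * (1 + t^2)⁻¹ := by rw [hsq]
      _ = _ := by ring

noncomputable def gyk (x h : ℝ) (n : ℕ) : ℝ := (max (x + h - n) 0 - max (x - n) 0) / h

lemma gy_perron_int (hGRH : GRH) {q : ℕ} [NeZero q] (χ : DirichletCharacter ℂ q) (X : ℝ) (hX : 0 < X) :
    MeasureTheory.Integrable (fun t : ℝ => -logDeriv (gyF χ) (((2:ℝ):ℂ) + t * Complex.I) *
      ((X:ℂ) ^ ((((2:ℝ):ℂ) + t * Complex.I) + 1) *
      (1 / ((((2:ℝ):ℂ) + t * Complex.I) * ((((2:ℝ):ℂ) + t * Complex.I) + 1))))) := by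
  obtain ⟨B, hB, hb⟩ := gy_LambdaSeries hGRH
  have hXc : (X : ℂ) ≠ 0 := by exact_mod_cast hX.ne'
  have h1 : MeasureTheory.Integrable (fun t : ℝ => ((X:ℂ) ^ ((((2:ℝ):ℂ) + t * Complex.I) + 1) *
      (1 / ((((2:ℝ):ℂ) + t * Complex.I) * ((((2:ℝ):ℂ) + t * Complex.I) + 1))))) := by
    refine (gy_inv_integrable 2 (by norm_num)).bdd_mul (c := X^(3:ℝ)) ?_ ?_
    · refine Continuous.aestronglyMeasurable ?_
      exact Continuous.const_cpow (by fun_prop) (Or.inl hXc)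
    · refine Filter.Eventually.of_forall fun t => ?_
      rw [Complex.norm_cpow_eq_rpow_re_of_pos hX]
      refine le_of_eq ?_
      congr 1
      simp; norm_num
  refine h1.bdd_mul (c := B) ?_ ?_
  · exact ((gy_logDeriv_line_cont hGRH χ 2 (by norm_num)).neg).aestronglyMeasurable
  · refine Filter.Eventually.of_forall fun t => ?_
    rw [norm_neg]
    have := hb q χ (((2:ℝ):ℂ) + t * Complex.I) (by simp) (by simp)
    refine this.trans (le_of_eq ?_)
    simp; norm_num

lemma gy_perronK (hGRH : GRH) {q : ℕ} [NeZero q] (χ : DirichletCharacter ℂ q) (x h : ℝ) (hx : 1 ≤ x)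
    (hh : 0 < h) (M : ℕ) (hM : x + h ≤ M) :
    ∫ t : ℝ, -logDeriv (gyF χ) (((2:ℝ):ℂ) + t * Complex.I) * gyK x h (((2:ℝ):ℂ) + t * Complex.I)
     = 2 * Real.pi * (∑ n ∈ Finset.Icc 1 M, χ (n : ZMod q) * (vonMangoldt n : ℂ) * (gyk x h n : ℂ)
        - gyd χ * (x + h / 2 - 1 : ℝ)) := by
  have hhc : (h : ℂ) ≠ 0 := by exact_mod_cast hh.ne'
  have h1 := gy_perron hGRH χ (x + h) (by linarith) M hM
  have h2 := gy_perron hGRH χ x hx M (by linarith)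
  have i1 := gy_perron_int hGRH χ (x + h) (by linarith)
  have i2 := gy_perron_int hGRH χ x (by linarith)
  have e : ∀ t : ℝ, -logDeriv (gyF χ) (((2:ℝ):ℂ) + t * Complex.I) * gyK x h (((2:ℝ):ℂ) + t * Complex.I)
    = (1 / (h:ℂ)) * (-logDeriv (gyF χ) (((2:ℝ):ℂ) + t * Complex.I) *
      (((x + h : ℝ):ℂ) ^ ((((2:ℝ):ℂ) + t * Complex.I) + 1) *
      (1 / ((((2:ℝ):ℂ) + t * Complex.I) * ((((2:ℝ):ℂ) + t * Complex.I) + 1))))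
      - -logDeriv (gyF χ) (((2:ℝ):ℂ) + t * Complex.I) *
      ((x:ℂ) ^ ((((2:ℝ):ℂ) + t * Complex.I) + 1) *
      (1 / ((((2:ℝ):ℂ) + t * Complex.I) * ((((2:ℝ):ℂ) + t * Complex.I) + 1))))) := by
    intro t; unfold gyK; ring
  simp only [e]
  rw [MeasureTheory.integral_const_mul, MeasureTheory.integral_sub i1 i2, h1, h2]
  have e3 : ∑ n ∈ Finset.Icc 1 M, χ (n : ZMod q) * (vonMangoldt n : ℂ) * (gyk x h n : ℂ)
      = (1 / (h:ℂ)) * (∑ n ∈ Finset.Icc 1 M, χ (n : ZMod q) * (vonMangoldt n : ℂ) * ((max (x + h - n) 0 : ℝ) : ℂ)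
       - ∑ n ∈ Finset.Icc 1 M, χ (n : ZMod q) * (vonMangoldt n : ℂ) * ((max (x - n) 0 : ℝ) : ℂ)) := by
    rw [← Finset.sum_sub_distrib, Finset.mul_sum]
    refine Finset.sum_congr rfl fun n _ => ?_
    unfold gyk
    push_cast; ring
  rw [e3]
  have e4 : (x + h / 2 - 1 : ℝ) = (1 / h) * (((x + h - 1)^2/2) - ((x - 1)^2/2)) := by
    field_simp; ring
  rw [e4]
  push_cast
  ring

lemma gy_smooth (hGRH : GRH) : ∃ B : ℝ, 0 < B ∧ ∀ (q : ℕ) [NeZero q] (χ : DirichletCharacter ℂ q)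
    (x h : ℝ) (M : ℕ), 2 ≤ x → Real.sqrt x ≤ h → h ≤ x → (q:ℝ) ≤ 2 * x → x + h ≤ M →
    ‖∑ n ∈ Finset.Icc 1 M, χ (n : ZMod q) * (vonMangoldt n : ℂ) * (gyk x h n : ℂ)
        - gyd χ * (x + h / 2 - 1 : ℝ)‖ ≤ B * (Real.sqrt x * Real.log (4 * x) ^ 2) := by
  obtain ⟨A1, hA1, hpt⟩ := gy_pointwise hGRH
  obtain ⟨A2, hA2, hmean⟩ := gy_mean hGRH
  obtain ⟨B, hB, hser⟩ := gy_LambdaSeries hGRH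
  obtain ⟨C, hC, hws⟩ := gy_wsum
  refine ⟨192 * A2 * C + 12 * Real.pi * B, by positivity, ?_⟩
  intro q _ χ x h M hx hh hhx hq hM
  have hx0 : 0 < x := by linarith
  have hsx : 0 < Real.sqrt x := Real.sqrt_pos.mpr hx0
  have hh0 : 0 < h := by linarith
  set ℓ := Real.log (4 * x) with hℓ
  have hℓ2 : 2 ≤ ℓ := by
    rw [hℓ, Real.le_log_iff_exp_le (by linarith)]
    have := Real.exp_one_lt_d9
    have e : Real.exp 2 = Real.exp 1 * Real.exp 1 := by rw [← Real.exp_add]; norm_num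
    have := Real.exp_pos 1
    rw [e]; nlinarith
  set ε := 1 / ℓ with hε
  have hε0 : 0 < ε := by positivity
  have hε2 : ε ≤ 1/2 := by rw [hε]; exact one_div_le_one_div_of_le (by norm_num) hℓ2
  set σ := 1/2 + ε with hσ
  set g : ℂ → ℂ := fun s => -logDeriv (gyF χ) s with hg
  have hgd : DifferentiableOn ℂ g {s | 1/2 < s.re} := (gy_logDeriv_analytic hGRH χ).neg
  have hU : IsOpen {s : ℂ | 1/2 < s.re} := isOpen_lt continuous_const Complex.continuous_re
  have hq1 : (1:ℝ) ≤ q := by exact_mod_cast NeZero.one_le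
  have hlq0 := Real.log_nonneg hq1
  have hgb : ∀ s : ℂ, σ ≤ s.re → s.re ≤ 2 → ‖g s‖ ≤ A1 * (Real.log q + 3) / ε * (1 + |s.im|) ^ (1/2 : ℝ) := by
    intro s h1 h2
    have h3 := hpt q χ s (by linarith) h2
    simp only [hg, norm_neg]
    refine h3.trans ?_
    have h4 := gyl_le q s.im
    have h5 := gyl_pos q s.im
    have h6 : 0 ≤ (1 + |s.im|) ^ (1/2 : ℝ) := by positivity
    calc A1 * gyl q s.im / (s.re - 1/2) ≤ A1 * ((Real.log q + 3) * (1 + |s.im|) ^ (1/2 : ℝ)) / ε := by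
          gcongr; linarith
      _ = _ := by ring
  have hKb : ∀ (a : ℝ) (s : ℂ), 0 < a → a ≤ 1 → a ≤ s.re → s.re ≤ 2 →
      ‖gyK x h s‖ ≤ (2 * (2 * x) ^ (3:ℝ) / h * (1 / a)) * (1 + s.im^2)⁻¹ := by
    intro a s ha ha1 h1 h2
    refine (gyK_b1 x h a s hx0 hh0 hhx ha ha1 h1).trans ?_
    rw [← mul_assoc]
    gcongr
    · linarith
    · linarith
  -- first shift
  have hS1 := gy_shift (fun s => g s * gyK x h s) σ 2
    (2 * (A1 * (Real.log q + 3) / ε) * (2 * (2 * x) ^ (3:ℝ) / h * (1 / (1/2)))) (by linarith)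
    (by
      refine DifferentiableOn.mul (hgd.mono ?_) ((gyK_diff x h hx0 hh0).mono ?_)
      · intro s hs; have := hs.1; simp only [Set.mem_setOf_eq]; linarith
      · intro s hs; have := hs.1; simp only [Set.mem_setOf_eq]; linarith)
    (by
      intro s h1 h2
      rw [norm_mul]
      exact gy_decay _ _ _ s.im (by positivity) (by positivity) _ _ (norm_nonneg _) (hgb s h1 h2)
        (hKb (1/2) s (by norm_num) (by norm_num) (by linarith) h2) rfl)
  -- second shift
  have hconj_re : ∀ s : ℂ, ((starRingEnd ℂ) (2 * (σ:ℂ) - s)).re = 2 * σ - s.re := by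
    intro s; simp
  have hconj_im : ∀ s : ℂ, ((starRingEnd ℂ) (2 * (σ:ℂ) - s)).im = s.im := by
    intro s; simp
  have hS2 := gy_shift (fun s => (starRingEnd ℂ) (g ((starRingEnd ℂ) (2 * (σ:ℂ) - s))) * gyK x h s) ε σ
    (2 * (A1 * (Real.log q + 3) / ε) * (2 * (2 * x) ^ (3:ℝ) / h * (1 / ε))) (by linarith)
    (by
      refine DifferentiableOn.mul ?_ ((gyK_diff x h hx0 hh0).mono ?_)
      · intro s hs
        have hs1 : ε ≤ s.re := hs.1
        have hs2 : s.re ≤ σ := hs.2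
        refine DifferentiableAt.differentiableWithinAt ?_
        have hd : DifferentiableAt ℂ g ((starRingEnd ℂ) (2 * (σ:ℂ) - s)) := by
          refine hgd.differentiableAt (hU.mem_nhds ?_)
          simp only [Set.mem_setOf_eq]
          rw [hconj_re]; linarith
        have hd2 := hd.hasDerivAt.conj_conj.differentiableAt
        rw [Complex.conj_conj] at hd2
        exact hd2.comp s (f := fun s : ℂ => 2 * (σ:ℂ) - s) (by fun_prop)
      · intro s hs; have := hs.1; simp only [Set.mem_setOf_eq]; linarith)
    (by
      intro s h1 h2
      rw [norm_mul, RCLike.norm_conj]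
      have h3 := hgb ((starRingEnd ℂ) (2 * (σ:ℂ) - s)) (by rw [hconj_re]; linarith) (by rw [hconj_re]; linarith)
      rw [hconj_im] at h3
      exact gy_decay _ _ _ s.im (by positivity) (by positivity) _ _ (norm_nonneg _) h3
        (hKb ε s hε0 (by linarith) (by linarith) (by linarith)) rfl)
  have hP := gy_perronK hGRH χ x h (by linarith) hh0 M hM
  set S := ∑ n ∈ Finset.Icc 1 M, χ (n : ZMod q) * (vonMangoldt n : ℂ) * (gyk x h n : ℂ)
        - gyd χ * (x + h / 2 - 1 : ℝ) with hSdef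
  -- real part combination
  have hsum : ∀ t : ℝ, g (σ + t * Complex.I) * gyK x h (σ + t * Complex.I)
      + (starRingEnd ℂ) (g ((starRingEnd ℂ) (2 * (σ:ℂ) - (σ + t * Complex.I)))) * gyK x h (σ + t * Complex.I)
      = ((2 * (g (σ + t * Complex.I)).re : ℝ) : ℂ) * gyK x h (σ + t * Complex.I) := by
    intro t
    have : (starRingEnd ℂ) (2 * (σ:ℂ) - (σ + t * Complex.I)) = σ + t * Complex.I := by
      apply Complex.ext <;> simp
      ring
    rw [this, ← add_mul, Complex.add_conj]
  have hI1 := hS1.1.add hS2.2.1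
  have hφ : ∫ t : ℝ, ‖((2 * (g (σ + t * Complex.I)).re : ℝ) : ℂ) * gyK x h (σ + t * Complex.I)‖
      ≤ 2 * (96 * Real.sqrt x * A2 * (C * ℓ^2)) := by
    have hInteg : MeasureTheory.Integrable (fun t : ℝ => ‖((2 * (g (σ + t * Complex.I)).re : ℝ) : ℂ) * gyK x h (σ + t * Complex.I)‖) := by
      refine (hI1.congr ?_).norm
      exact Filter.Eventually.of_forall hsum
    have hrc : Continuous (fun t : ℝ => |(logDeriv (gyF χ) (σ + t * Complex.I)).re|) :=
      (Complex.continuous_re.comp (gy_logDeriv_line_cont hGRH χ σ (by linarith))).abs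
    have hpoint : ∀ (m : ℕ) (t : ℝ), (m:ℝ) ≤ |t| →
        ‖((2 * (g (σ + t * Complex.I)).re : ℝ) : ℂ) * gyK x h (σ + t * Complex.I)‖
        ≤ (96 * Real.sqrt x * min (1 / (1 + (m:ℝ))) (Real.sqrt x / (1 + (m:ℝ)^2))) *
          |(logDeriv (gyF χ) (σ + t * Complex.I)).re| := by
      intro m t hm
      have hK := gyK_line x h t hx hh hhx σ hσ
      have hw : min (1 / (1 + |t|)) (Real.sqrt x / (1 + t^2)) ≤ min (1 / (1 + (m:ℝ))) (Real.sqrt x / (1 + (m:ℝ)^2)) := by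
        refine min_le_min ?_ ?_
        · gcongr
        · rw [← sq_abs t]; gcongr
      have hm0 : 0 ≤ min (1 / (1 + (m:ℝ))) (Real.sqrt x / (1 + (m:ℝ)^2)) := by positivity
      rw [norm_mul, Complex.norm_real, Real.norm_eq_abs]
      simp only [hg, Complex.neg_re]
      rw [abs_mul, abs_neg, abs_two]
      calc _ ≤ 2 * |(logDeriv (gyF χ) (σ + t * Complex.I)).re| * (48 * Real.sqrt x * min (1 / (1 + (m:ℝ))) (Real.sqrt x / (1 + (m:ℝ)^2))) := by
            refine mul_le_mul_of_nonneg_left (hK.trans ?_) (by positivity)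
            gcongr
        _ = _ := by ring
    refine gy_int_split _ hInteg (fun m => (96 * Real.sqrt x * A2) * (gyl q (m + 1/2) * min (1 / (1 + (m:ℝ))) (Real.sqrt x / (1 + (m:ℝ)^2)))) _ ?_ ?_ ?_
    · intro m
      have h1 := hmean q χ σ m (by linarith) (by linarith)
      calc _ ≤ ∫ t in (m:ℝ)..(m+1), (96 * Real.sqrt x * min (1 / (1 + (m:ℝ))) (Real.sqrt x / (1 + (m:ℝ)^2))) *
          |(logDeriv (gyF χ) (σ + t * Complex.I)).re| := by
            refine intervalIntegral.integral_mono_on (by linarith) hInteg.intervalIntegrable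
              ((hrc.const_mul _).intervalIntegrable _ _) ?_
            intro t ht
            exact hpoint m t (ht.1.trans (le_abs_self t))
        _ ≤ (96 * Real.sqrt x * min (1 / (1 + (m:ℝ))) (Real.sqrt x / (1 + (m:ℝ)^2))) * (A2 * gyl q (m + 1/2)) := by
            rw [intervalIntegral.integral_const_mul]
            gcongr
        _ = _ := by ring
    · intro m
      have h1 := hmean q χ σ (-((m:ℝ)+1)) (by linarith) (by linarith)
      have e1 : -((m:ℝ)+1) + 1 = -(m:ℝ) := by ring
      have e2 : gyl q (-((m:ℝ)+1) + 1/2) = gyl q (m + 1/2) := by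
        unfold gyl
        have : -((m:ℝ)+1) + 1/2 = -((m:ℝ) + 1/2) := by ring
        rw [this, abs_neg]
      rw [e1, e2] at h1
      calc _ ≤ ∫ t in (-((m:ℝ)+1))..(-(m:ℝ)), (96 * Real.sqrt x * min (1 / (1 + (m:ℝ))) (Real.sqrt x / (1 + (m:ℝ)^2))) *
          |(logDeriv (gyF χ) (σ + t * Complex.I)).re| := by
            refine intervalIntegral.integral_mono_on (by linarith) hInteg.intervalIntegrable
              ((hrc.const_mul _).intervalIntegrable _ _) ?_
            intro t ht
            exact hpoint m t ((by linarith [ht.2] : (m:ℝ) ≤ -t).trans (neg_le_abs t))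
        _ ≤ (96 * Real.sqrt x * min (1 / (1 + (m:ℝ))) (Real.sqrt x / (1 + (m:ℝ)^2))) * (A2 * gyl q (m + 1/2)) := by
            rw [intervalIntegral.integral_const_mul]
            gcongr
        _ = _ := by ring
    · intro n
      rw [← Finset.mul_sum]
      have := hws q x hx hq n
      gcongr
  have hψ : ‖∫ t : ℝ, (starRingEnd ℂ) (g ((starRingEnd ℂ) (2 * (σ:ℂ) - (ε + t * Complex.I)))) * gyK x h (ε + t * Complex.I)‖
      ≤ (B * ℓ) * (12 * Real.sqrt x * ℓ) * Real.pi := by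
    rw [← integral_univ_inv_one_add_sq, ← MeasureTheory.integral_const_mul]
    refine MeasureTheory.norm_integral_le_of_norm_le (integrable_inv_one_add_sq.const_mul _) ?_
    refine Filter.Eventually.of_forall fun t => ?_
    rw [norm_mul, RCLike.norm_conj, mul_assoc (B * ℓ)]
    have hre : (ε + t * Complex.I : ℂ).re = ε := by simp
    have him : (ε + t * Complex.I : ℂ).im = t := by simp
    refine mul_le_mul ?_ ?_ (norm_nonneg _) (by positivity)
    · have := hser q χ ((starRingEnd ℂ) (2 * (σ:ℂ) - (ε + t * Complex.I)))
        (by rw [hconj_re, hre]; linarith) (by rw [hconj_re, hre]; linarith)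
      simp only [hg, norm_neg]
      refine this.trans (le_of_eq ?_)
      rw [hconj_re, hre]
      have : 2 * σ - ε - 1 = 1 / ℓ := by rw [hσ, hε]; ring
      rw [this, div_div_eq_mul_div, div_one]
    · have := gyK_b1 x h ε (ε + t * Complex.I) hx0 hh0 hhx hε0 (by linarith) (by rw [hre])
      rw [hre, him, Real.rpow_add (by linarith), Real.rpow_one] at this
      refine this.trans ?_
      have he := gy_eps x hx
      have e1 : 1 / ε = ℓ := by rw [hε, one_div_one_div]
      rw [e1]
      calc 2 * ((2 * x) ^ ε * (2 * x)) / h * (ℓ * (1 + t ^ 2)⁻¹)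
          ≤ 2 * (3 * (2 * x)) / Real.sqrt x * (ℓ * (1 + t ^ 2)⁻¹) := by
            gcongr
        _ = 12 * (x / Real.sqrt x) * ℓ * (1 + t^2)⁻¹ := by ring
        _ = _ := by rw [Real.div_sqrt]
  have hfin : 2 * Real.pi * S = (∫ t : ℝ, ((2 * (g (σ + t * Complex.I)).re : ℝ) : ℂ) * gyK x h (σ + t * Complex.I))
      - ∫ t : ℝ, (starRingEnd ℂ) (g ((starRingEnd ℂ) (2 * (σ:ℂ) - (ε + t * Complex.I)))) * gyK x h (ε + t * Complex.I) := by
    rw [← hP]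
    have e1 := hS1.2.2
    have e2 := hS2.2.2
    change ∫ t : ℝ, g _ * _ = _
    rw [← e1, e2, ← MeasureTheory.integral_sub]
    · refine MeasureTheory.integral_congr_ae (Filter.Eventually.of_forall fun t => ?_)
      simp only
      rw [← hsum t]; ring
    · exact hI1.congr (Filter.Eventually.of_forall hsum)
    · exact hS2.2.1
  have hpi := Real.pi_gt_three
  have hn : ‖S‖ ≤ ‖(2 * Real.pi * S : ℂ)‖ := by
    rw [norm_mul, norm_mul, Complex.norm_real, Real.norm_of_nonneg Real.pi_pos.le]
    have : ‖(2:ℂ)‖ = 2 := by simp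
    rw [this]
    nlinarith [norm_nonneg S]
  refine hn.trans ?_
  rw [hfin]
  refine (norm_sub_le _ _).trans ?_
  have h9 := (MeasureTheory.norm_integral_le_integral_norm (μ := MeasureTheory.volume) (fun t : ℝ => ((2 * (g (σ + t * Complex.I)).re : ℝ) : ℂ) * gyK x h (σ + t * Complex.I))).trans hφ
  refine (add_le_add h9 hψ).trans (le_of_eq ?_)
  ring

theorem gy_ap_smooth (hGRH : GRH) : ∃ B : ℝ, 0 < B ∧ ∀ (q : ℕ) [NeZero q] (a : ZMod q) (x h : ℝ) (M : ℕ),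
    IsUnit a → 2 ≤ x → Real.sqrt x ≤ h → h ≤ x → (q:ℝ) ≤ 2 * x → x + h ≤ M →
    |(∑ n ∈ (Finset.Icc 1 M).filter (fun n : ℕ => (n : ZMod q) = a), vonMangoldt n * gyk x h n)
      - (x + h / 2 - 1) / (q.totient : ℝ)| ≤ B * (Real.sqrt x * Real.log (4 * x) ^ 2) := by
  obtain ⟨B, hB, hs⟩ := gy_smooth hGRH
  refine ⟨B, hB, fun q _ a x h M ha hx h1 h2 h3 h4 => ?_⟩
  have hq : (0:ℝ) < q.totient := by exact_mod_cast Nat.totient_pos.mpr (NeZero.pos q)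
  set E := B * (Real.sqrt x * Real.log (4 * x) ^ 2) with hE
  set S := ∑ n ∈ (Finset.Icc 1 M).filter (fun n : ℕ => (n : ZMod q) = a), vonMangoldt n * gyk x h n with hS
  have hchar : ((q.totient : ℝ) * S - (x + h / 2 - 1) : ℝ) =
      ∑ χ : DirichletCharacter ℂ q, χ a⁻¹ * ((∑ n ∈ Icc 1 M, χ n * (vonMangoldt n : ℂ) * (gyk x h n : ℂ)) - gyd χ * (x+h/2-1:ℝ)) := by
    simp only [mul_sub, Finset.sum_sub_distrib]
    push_cast
    congr 1
    · simp only [Finset.mul_sum]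
      rw [Finset.sum_comm, hS]
      push_cast
      rw [Finset.mul_sum, Finset.sum_filter]
      refine Finset.sum_congr rfl fun n _ => ?_
      have := DirichletCharacter.sum_char_inv_mul_char_eq ℂ ha (n : ZMod q)
      simp only [← mul_assoc]
      rw [← Finset.sum_mul, ← Finset.sum_mul, this]
      by_cases hh : a = (n : ZMod q)
      · rw [if_pos hh, if_pos hh.symm]
      · rw [if_neg hh, if_neg (fun h => hh h.symm)]; simp
    · rw [Finset.sum_eq_single (1 : DirichletCharacter ℂ q)]
      · have hu : IsUnit a⁻¹ := by
          obtain ⟨u, rfl⟩ := ha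
          rw [ZMod.inv_coe_unit]; exact Units.isUnit _
        rw [MulChar.one_apply hu]; simp [gyd]
      · intro χ _ hχ; simp [gyd, hχ]
      · simp
  have hb : |(q.totient : ℝ) * S - (x + h / 2 - 1)| ≤ q.totient * E := by
    rw [← Real.norm_eq_abs, ← Complex.norm_real, hchar]
    refine (norm_sum_le _ _).trans ?_
    have : ∀ χ ∈ (Finset.univ : Finset (DirichletCharacter ℂ q)), ‖χ a⁻¹ * ((∑ n ∈ Icc 1 M, χ n * (vonMangoldt n : ℂ) * (gyk x h n : ℂ)) - gyd χ * (x+h/2-1:ℝ))‖ ≤ E := by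
      intro χ _
      rw [norm_mul]
      calc _ ≤ 1 * E := mul_le_mul (DirichletCharacter.norm_le_one χ _) (hs q χ x h M hx h1 h2 h3 h4) (norm_nonneg _) zero_le_one
        _ = E := one_mul _
    refine (Finset.sum_le_sum this).trans (le_of_eq ?_)
    rw [Finset.sum_const, nsmul_eq_mul, Finset.card_univ, ← Nat.card_eq_fintype_card, DirichletCharacter.card_eq_totient_of_hasEnoughRootsOfUnity]
  have : S - (x + h / 2 - 1) / (q.totient : ℝ) = ((q.totient : ℝ) * S - (x + h / 2 - 1)) / q.totient := by
    field_simp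
  rw [this, abs_div, abs_of_pos hq, div_le_iff₀ hq, mul_comm E]
  exact hb

theorem gyk_nonneg (x h : ℝ) (hh : 0 < h) (n : ℕ) : 0 ≤ gyk x h n := by
  unfold gyk
  refine div_nonneg (sub_nonneg.mpr (max_le_max ?_ le_rfl)) hh.le
  linarith

theorem gyk_le_one (x h : ℝ) (hh : 0 < h) (n : ℕ) : gyk x h n ≤ 1 := by
  unfold gyk
  rw [div_le_one hh, sub_le_iff_le_add]
  refine max_le ?_ ?_
  · linarith [le_max_left (x - n) 0]
  · linarith [le_max_right (x - n) 0]

theorem gyk_eq_one (x h : ℝ) (hh : 0 < h) (n : ℕ) (hn : (n:ℝ) ≤ x) : gyk x h n = 1 := by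
  unfold gyk
  rw [max_eq_left (by linarith), max_eq_left (by linarith), div_eq_one_iff_eq hh.ne']
  ring

theorem gyk_eq_zero (x h : ℝ) (hh : 0 < h) (n : ℕ) (hn : x + h ≤ n) : gyk x h n = 0 := by
  unfold gyk
  rw [max_eq_right (by linarith), max_eq_right (by linarith)]
  simp

theorem gy_psi_large (hGRH : GRH) : ∃ B : ℝ, 0 < B ∧ ∀ (N q : ℕ) [NeZero q] (a : ZMod q), IsUnit a → 4 ≤ N → q ≤ N →
    |(∑ n ∈ (Finset.Icc 1 N).filter (fun n : ℕ => (n : ZMod q) = a), vonMangoldt n)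
      - N / (q.totient : ℝ)| ≤ B * (Real.sqrt N * Real.log N ^ 2) := by
  obtain ⟨B, hB, hs⟩ := gy_ap_smooth hGRH
  refine ⟨4 * B + 2, by linarith, fun N q _ a ha hN hqN => ?_⟩
  have hq : (1:ℝ) ≤ q.totient := by exact_mod_cast Nat.totient_pos.mpr (NeZero.pos q)
  have hN4 : (4:ℝ) ≤ N := by exact_mod_cast hN
  have hqN' : (q:ℝ) ≤ N := by exact_mod_cast hqN
  have hs2 : 2 ≤ Real.sqrt N := by
    rw [show (2:ℝ) = Real.sqrt 4 by rw [show (4:ℝ) = 2^2 by norm_num, Real.sqrt_sq (by norm_num)]]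
    exact Real.sqrt_le_sqrt hN4
  have hsq := Real.sq_sqrt (show (0:ℝ) ≤ N by linarith)
  set s := Real.sqrt N with hsdef
  have hlog1 : 1 ≤ Real.log N := by
    rw [Real.le_log_iff_exp_le (by linarith)]
    linarith [Real.exp_one_lt_d9]
  have hlog4 : Real.log (4 * N) ≤ 2 * Real.log N := by
    rw [Real.log_mul (by norm_num) (by linarith)]
    have := Real.log_le_log (by norm_num) hN4
    linarith
  have hlog40 : 0 ≤ Real.log (4 * N) := Real.log_nonneg (by linarith)
  have hl2 : Real.log (4 * N) ^ 2 ≤ 4 * Real.log N ^ 2 := by nlinarith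
  have hinv : ∀ y : ℝ, |y| ≤ 2 * s → |y / (q.totient:ℝ)| ≤ 2 * (s * Real.log N ^ 2) := by
    intro y hy
    rw [abs_div, abs_of_pos (by linarith : (0:ℝ) < q.totient)]
    refine (div_le_self (abs_nonneg _) hq).trans (hy.trans ?_)
    have : 1 ≤ Real.log N ^ 2 := one_le_pow₀ hlog1
    nlinarith
  -- upper bound
  have hup := hs q a N s (2 * N) ha (by linarith) le_rfl (by nlinarith) (by linarith) (by push_cast; nlinarith)
  have hlo := hs q a (N - s) s N ha (by nlinarith) (Real.sqrt_le_sqrt (by linarith)) (by nlinarith) (by nlinarith) (by linarith)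
  have hs0 : 0 < s := by linarith
  set P := ∑ n ∈ (Finset.Icc 1 N).filter (fun n : ℕ => (n : ZMod q) = a), vonMangoldt n with hP
  have hu1 : P ≤ ∑ n ∈ (Finset.Icc 1 (2 * N)).filter (fun n : ℕ => (n : ZMod q) = a), vonMangoldt n * gyk N s n := by
    calc P = ∑ n ∈ (Finset.Icc 1 N).filter (fun n : ℕ => (n : ZMod q) = a), vonMangoldt n * gyk N s n := by
          refine Finset.sum_congr rfl fun n hn => ?_
          rw [gyk_eq_one _ _ hs0, mul_one]
          exact_mod_cast (Finset.mem_Icc.mp (Finset.mem_filter.mp hn).1).2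
      _ ≤ _ := by
          refine Finset.sum_le_sum_of_subset_of_nonneg ?_ fun n _ _ => mul_nonneg vonMangoldt_nonneg (gyk_nonneg _ _ hs0 n)
          refine Finset.filter_subset_filter _ (Finset.Icc_subset_Icc_right (by omega))
  have hl1 : ∑ n ∈ (Finset.Icc 1 N).filter (fun n : ℕ => (n : ZMod q) = a), vonMangoldt n * gyk (N - s) s n ≤ P := by
    refine Finset.sum_le_sum fun n _ => ?_
    exact mul_le_of_le_one_right vonMangoldt_nonneg (gyk_le_one _ _ hs0 n)
  have hd1 := hinv (s / 2 - 1) (by rw [abs_le]; constructor <;> linarith)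
  have hd2 := hinv (- s / 2 - 1) (by rw [abs_le]; constructor <;> linarith)
  have e1 : ((N:ℝ) + s / 2 - 1) / (q.totient:ℝ) = N / (q.totient:ℝ) + (s / 2 - 1) / (q.totient:ℝ) := by ring
  have e2 : ((N:ℝ) - s + s / 2 - 1) / (q.totient:ℝ) = N / (q.totient:ℝ) + (-s / 2 - 1) / (q.totient:ℝ) := by ring
  rw [e1] at hup
  rw [e2] at hlo
  have hE1 : B * (s * Real.log (4 * N) ^ 2) ≤ 4 * B * (s * Real.log N ^ 2) := by
    calc B * (s * Real.log (4 * N) ^ 2) ≤ B * (s * (4 * Real.log N ^ 2)) := by gcongr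
      _ = _ := by ring
  have hE2 : B * (Real.sqrt (N - s) * Real.log (4 * (N - s)) ^ 2) ≤ B * (s * Real.log (4 * N) ^ 2) := by
    have hp : 1 ≤ 4 * ((N:ℝ) - s) := by nlinarith
    have h0 : 0 ≤ Real.log (4 * (N - s)) := Real.log_nonneg hp
    have h1 : Real.log (4 * (N - s)) ≤ Real.log (4 * N) := Real.log_le_log (by linarith) (by linarith)
    have h2 : Real.sqrt (N - s) ≤ s := Real.sqrt_le_sqrt (by linarith)
    gcongr
  rw [abs_le] at *
  constructor <;> nlinarith

theorem gy_psi (hGRH : GRH) : ∃ B : ℝ, 0 < B ∧ ∀ (N q a : ℕ), 2 ≤ N → 1 ≤ q → Nat.gcd a q = 1 → q ≤ N →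
    |(∑ n ∈ (Finset.Icc 1 N).filter (fun n : ℕ => (n : ZMod q) = (a : ZMod q)), vonMangoldt n)
      - N / (q.totient : ℝ)| ≤ B * (Real.sqrt N * Real.log N ^ 2) := by
  obtain ⟨B, hB, hs⟩ := gy_psi_large hGRH
  refine ⟨B + 100, by linarith, fun N q a hN hq ha hqN => ?_⟩
  haveI : NeZero q := ⟨by omega⟩
  have hN1 : (2:ℝ) ≤ N := by exact_mod_cast hN
  have hlogp : 0 ≤ Real.log N := Real.log_nonneg (by linarith)
  by_cases h4 : 4 ≤ N
  · refine (hs N q (a : ZMod q) ((ZMod.isUnit_iff_coprime a q).mpr ha) h4 hqN).trans ?_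
    have : 0 ≤ Real.sqrt N * Real.log N ^ 2 := by positivity
    nlinarith
  · have hN4 : (N:ℝ) ≤ 4 := by exact_mod_cast (by omega : N ≤ 4)
    have hq1 : (1:ℝ) ≤ q.totient := by exact_mod_cast Nat.totient_pos.mpr (NeZero.pos q)
    have hlog2 : (1/2:ℝ) ≤ Real.log N := by
      have := Real.log_le_log (by norm_num) hN1
      linarith [Real.log_two_gt_d9]
    have hsq : 1 ≤ Real.sqrt N := by rw [Real.one_le_sqrt]; linarith
    have hlow : (1/4:ℝ) ≤ Real.sqrt N * Real.log N ^ 2 := by nlinarith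
    have hP1 : ∑ n ∈ (Finset.Icc 1 N).filter (fun n : ℕ => (n : ZMod q) = (a : ZMod q)), vonMangoldt n ≤ 16 := by
      calc _ ≤ ∑ n ∈ (Finset.Icc 1 N), vonMangoldt n :=
            Finset.sum_le_sum_of_subset_of_nonneg (Finset.filter_subset _ _) fun _ _ _ => vonMangoldt_nonneg
        _ ≤ ∑ n ∈ (Finset.Icc 1 N), (4:ℝ) := by
            refine Finset.sum_le_sum fun n hn => ?_
            have := (Finset.mem_Icc.mp hn)
            have hn1 : (n:ℝ) ≤ N := by exact_mod_cast this.2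
            have := Real.log_le_self (Nat.cast_nonneg (α := ℝ) n)
            linarith [vonMangoldt_le_log (n := n)]
        _ = N * 4 := by simp
        _ ≤ 16 := by linarith
    have hP0 : 0 ≤ ∑ n ∈ (Finset.Icc 1 N).filter (fun n : ℕ => (n : ZMod q) = (a : ZMod q)), vonMangoldt n :=
      Finset.sum_nonneg fun _ _ => vonMangoldt_nonneg
    have hd : (N:ℝ) / q.totient ≤ 4 := (div_le_self (by linarith) hq1).trans hN4
    have hd0 : 0 ≤ (N:ℝ) / q.totient := by positivity
    have : 25 ≤ (B + 100) * (Real.sqrt N * Real.log N ^ 2) := by nlinarith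
    rw [abs_le]
    constructor <;> linarith

/-- harmonic sum up to a real number -/
noncomputable def gyH (Y : ℝ) : ℝ := ∑ l ∈ Ioc 0 ⌊Y⌋₊, 1 / (l : ℝ)

/-- error term of the harmonic sum -/
noncomputable def gyE (Y : ℝ) : ℝ := gyH Y - Real.log Y - Real.eulerMascheroniConstant

lemma gyE_large (Y : ℝ) (hY : 1 ≤ Y) : |gyE Y| ≤ 2 / Y := by
  set n := ⌊Y⌋₊ with hn
  have hn1 : 1 ≤ n := (Nat.one_le_floor_iff Y).mpr hY
  have hH : gyH Y = (harmonic n : ℝ) := by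
    rw [gyH, harmonic_eq_sum_Icc]
    push_cast
    refine Finset.sum_congr ?_ fun _ _ => by rw [one_div]
    ext; simp; omega
  have h1 := Real.eulerMascheroniSeq_lt_eulerMascheroniConstant n
  have h2 := Real.eulerMascheroniConstant_lt_eulerMascheroniSeq' n
  rw [Real.eulerMascheroniSeq] at h1
  rw [Real.eulerMascheroniSeq', if_neg (by omega)] at h2
  have hnR : (1:ℝ) ≤ n := by exact_mod_cast hn1
  have hle : (n:ℝ) ≤ Y := Nat.floor_le (by linarith)
  have hlt : Y < n + 1 := Nat.lt_floor_add_one Y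
  have l1 : Real.log n ≤ Real.log Y := Real.log_le_log (by linarith) hle
  have l2 : Real.log Y ≤ Real.log (n + 1) := Real.log_le_log (by linarith) hlt.le
  have l3 : Real.log (n + 1) - Real.log n ≤ 1 / n := by
    rw [← Real.log_div (by positivity) (by positivity)]
    refine (Real.log_le_sub_one_of_pos (by positivity)).trans (le_of_eq ?_)
    field_simp; ring
  have l4 : 1 / (n:ℝ) ≤ 2 / Y := by
    rw [div_le_div_iff₀ (by linarith) (by linarith)]; linarith
  rw [gyE, hH, abs_le]
  constructor <;> linarith

lemma gyE_small (Y : ℝ) (hY0 : 0 < Y) (hY : Y < 1) : |gyE (Y ^ 2)| ≤ 5 / Real.sqrt Y := by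
  have hs : 0 < Real.sqrt Y := Real.sqrt_pos.mpr hY0
  have hfl : ⌊Y ^ 2⌋₊ = 0 := Nat.floor_eq_zero.mpr (by nlinarith)
  have hlog : Real.log (Y^2) = 4 * Real.log (Real.sqrt Y) := by
    rw [Real.log_sqrt hY0.le, Real.log_pow]; push_cast; ring
  have h1 : Real.log (Real.sqrt Y)⁻¹ ≤ (Real.sqrt Y)⁻¹ - 1 := Real.log_le_sub_one_of_pos (by positivity)
  rw [Real.log_inv] at h1
  have h2 : Real.log (Real.sqrt Y) ≤ 0 := Real.log_nonpos hs.le (Real.sqrt_le_one.mpr hY.le)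
  have g1 := Real.one_half_lt_eulerMascheroniConstant
  have g2 := Real.eulerMascheroniConstant_lt_two_thirds
  have h3 : 1 ≤ (Real.sqrt Y)⁻¹ := (one_le_inv₀ hs).mpr (Real.sqrt_le_one.mpr hY.le)
  rw [gyE, gyH, hfl, hlog, div_eq_mul_inv]
  simp only [Finset.Ioc_self, Finset.sum_empty]
  rw [abs_le]
  constructor <;> linarith

lemma gyE_bound (z : ℝ) (hz : 0 < z) : |gyE (z ^ 2)| ≤ 15 / (Real.sqrt z * ((1 + z) * Real.sqrt (1 + z))) := by
  have hs : 0 < Real.sqrt z := Real.sqrt_pos.mpr hz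
  have hs1 : 0 < Real.sqrt (1 + z) := Real.sqrt_pos.mpr (by linarith)
  have e1 := Real.sq_sqrt hz.le
  have e2 := Real.sq_sqrt (show 0 ≤ 1 + z by linarith)
  by_cases h : 1 ≤ z
  · refine (gyE_large _ (by nlinarith)).trans ?_
    rw [div_le_div_iff₀ (by positivity) (by positivity)]
    have h3 : Real.sqrt (1 + z) ≤ 2 * Real.sqrt z := by
      apply Real.sqrt_le_iff.mpr; constructor
      · positivity
      · nlinarith
    calc 2 * (Real.sqrt z * ((1 + z) * Real.sqrt (1 + z))) ≤ 2 * (Real.sqrt z * ((1 + z) * (2 * Real.sqrt z))) := by gcongr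
      _ = 4 * (Real.sqrt z ^ 2 * (1 + z)) := by ring
      _ = 4 * (z * (1 + z)) := by rw [e1]
      _ ≤ 15 * z ^ 2 := by nlinarith
  · push Not at h
    refine (gyE_small z hz h).trans ?_
    rw [div_le_div_iff₀ (by positivity) (by positivity)]
    have h3 : Real.sqrt (1 + z) ≤ 3 / 2 := by
      apply Real.sqrt_le_iff.mpr; constructor
      · norm_num
      · nlinarith
    have : (1 + z) * Real.sqrt (1 + z) ≤ 2 * (3/2) := by gcongr; linarith
    nlinarith

lemma gyE_term (B : ℝ) (hB : 0 < B) (b : ℕ) (hb : 1 ≤ b) :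
    1 / (b:ℝ)^2 * |gyE (B^2 / (b:ℝ)^2)| ≤ 30 / Real.sqrt B * (1 / Real.sqrt ((b:ℝ) - 1 + B) - 1 / Real.sqrt (b + B)) := by
  have hb' : (1:ℝ) ≤ b := by exact_mod_cast hb
  have hz : 0 < B / b := by positivity
  have h := gyE_bound (B / b) hz
  rw [div_pow] at h
  have e1 : (1 + B / b) = (b + B) / b := by field_simp
  set u := (b:ℝ) + B with hu
  have hu1 : 1 < u := by linarith
  have su : 0 < Real.sqrt u := Real.sqrt_pos.mpr (by linarith)
  have sb : 0 < Real.sqrt b := Real.sqrt_pos.mpr (by linarith)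
  have sB : 0 < Real.sqrt B := Real.sqrt_pos.mpr hB
  have sv : 0 < Real.sqrt (u - 1) := Real.sqrt_pos.mpr (by linarith)
  have qu := Real.sq_sqrt (show 0 ≤ u by linarith)
  have qv := Real.sq_sqrt (show 0 ≤ u - 1 by linarith)
  have qb := Real.sq_sqrt (show 0 ≤ (b:ℝ) by linarith)
  rw [e1, Real.sqrt_div hB.le, Real.sqrt_div (by linarith)] at h
  have e2 : 15 / (Real.sqrt B / Real.sqrt b * (u / b * (Real.sqrt u / Real.sqrt b))) = 15 * (b:ℝ)^2 / (Real.sqrt B * (u * Real.sqrt u)) := by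
    field_simp
    rw [qb]
  rw [e2] at h
  have h5 : 1 / (u * Real.sqrt u) ≤ 2 * (1 / Real.sqrt (u - 1) - 1 / Real.sqrt u) := by
    have hvu : Real.sqrt (u - 1) ≤ Real.sqrt u := Real.sqrt_le_sqrt (by linarith)
    have e3 : 1 / Real.sqrt (u - 1) - 1 / Real.sqrt u = 1 / (Real.sqrt (u-1) * Real.sqrt u * (Real.sqrt u + Real.sqrt (u-1))) := by
      have : (Real.sqrt u - Real.sqrt (u-1)) * (Real.sqrt u + Real.sqrt (u-1)) = 1 := by nlinarith
      field_simp
      linarith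
    rw [e3, ← mul_one_div, mul_one_div, mul_one_div, div_le_div_iff₀ (by positivity) (by positivity)]
    calc 1 * (Real.sqrt (u-1) * Real.sqrt u * (Real.sqrt u + Real.sqrt (u-1))) ≤ 1 * (Real.sqrt u * Real.sqrt u * (Real.sqrt u + Real.sqrt u)) := by gcongr
      _ = 2 * (Real.sqrt u ^ 2 * Real.sqrt u) := by ring
      _ = _ := by rw [qu]
  have e4 : (b:ℝ) - 1 + B = u - 1 := by rw [hu]; ring
  rw [e4]
  calc 1 / (b:ℝ)^2 * |gyE (B^2 / (b:ℝ)^2)| ≤ 1 / (b:ℝ)^2 * (15 * (b:ℝ)^2 / (Real.sqrt B * (u * Real.sqrt u))) := by gcongr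
    _ = 15 / Real.sqrt B * (1 / (u * Real.sqrt u)) := by field_simp
    _ ≤ 15 / Real.sqrt B * (2 * (1 / Real.sqrt (u - 1) - 1 / Real.sqrt u)) := by gcongr
    _ = _ := by ring

lemma gyE_sum (B : ℝ) (hB : 0 < B) : Summable (fun b : ℕ => 1 / (b:ℝ)^2 * |gyE (B^2 / (b:ℝ)^2)|) ∧
    ∑' b : ℕ, 1 / (b:ℝ)^2 * |gyE (B^2 / (b:ℝ)^2)| ≤ 30 / B := by
  have sB : 0 < Real.sqrt B := Real.sqrt_pos.mpr hB
  have key : ∀ n : ℕ, ∑ b ∈ range n, 1 / (b:ℝ)^2 * |gyE (B^2 / (b:ℝ)^2)| ≤ 30 / B := by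
    intro n
    have : ∑ b ∈ range (n+1), 1 / (b:ℝ)^2 * |gyE (B^2 / (b:ℝ)^2)| ≤ 30 / Real.sqrt B * (1 / Real.sqrt B - 1 / Real.sqrt (n + B)) := by
      induction n with
      | zero => simp
      | succ n ih =>
        rw [Finset.sum_range_succ]
        have := gyE_term B hB (n+1) (by omega)
        push_cast at this ih ⊢
        rw [add_sub_cancel_right] at this
        refine (add_le_add ih this).trans (le_of_eq ?_)
        ring
    calc _ ≤ ∑ b ∈ range (n+1), 1 / (b:ℝ)^2 * |gyE (B^2 / (b:ℝ)^2)| :=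
          Finset.sum_le_sum_of_subset_of_nonneg (Finset.range_mono (by omega)) fun _ _ _ => by positivity
      _ ≤ _ := this
      _ ≤ 30 / Real.sqrt B * (1 / Real.sqrt B) := by
          gcongr
          have : 0 ≤ 1 / Real.sqrt (n + B) := by positivity
          linarith
      _ = 30 / B := by rw [div_mul_div_comm, mul_one, Real.mul_self_sqrt hB.le]
  refine ⟨summable_of_sum_range_le (fun _ => by positivity) key, ?_⟩
  exact Real.tsum_le_of_sum_range_le (fun _ => by positivity) key

lemma gy_sq_dvd {e b a : ℕ} (ha : Squarefree a) (hb : 0 < b) (h : e ^ 2 ∣ b ^ 2 * a) : e ∣ b := by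
  have hg : 0 < Nat.gcd e b := Nat.gcd_pos_of_pos_right _ hb
  obtain ⟨g, e', b', hg0, hc, he, hb'⟩ := Nat.exists_coprime' (m := e) (n := b) hg
  subst he hb'
  rw [mul_pow, mul_pow, mul_comm (e' ^ 2), mul_comm (b' ^ 2), mul_assoc] at h
  have h2 := Nat.dvd_of_mul_dvd_mul_left (by positivity) h
  have h3 : e' ^ 2 ∣ a := (Nat.Coprime.pow 2 2 hc).dvd_of_dvd_mul_left h2
  rw [pow_two] at h3
  have := ha _ h3
  rw [Nat.isUnit_iff] at this
  subst this
  rw [one_mul]; exact Dvd.intro_left _ rfl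

/-- `n ↦ 1/n` -/
noncomputable def gyA1 : ArithmeticFunction ℝ := ⟨fun n => 1 / (n:ℝ), by simp⟩

/-- `b² ↦ μ(b)/b²` -/
noncomputable def gyS2 : ArithmeticFunction ℝ :=
  ⟨fun n => if IsSquare n then (moebius (Nat.sqrt n) : ℝ) / n else 0, by simp⟩

/-- `μ²(n)/n` -/
noncomputable def gyM2 : ArithmeticFunction ℝ := ⟨fun n => (moebius n : ℝ)^2 / n, by simp⟩

lemma gyS2_mul_A1 : gyS2 * gyA1 = gyM2 := by
  ext n
  rcases Nat.eq_zero_or_pos n with rfl | hn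
  · simp
  obtain ⟨a, b, ha0, hb0, hab, ha⟩ := Nat.sq_mul_squarefree_of_pos hn
  rw [ArithmeticFunction.mul_apply]
  have h1 : ∑ x ∈ n.divisorsAntidiagonal, gyS2 x.1 * gyA1 x.2 =
      ∑ x ∈ n.divisors, (if IsSquare x then (moebius (Nat.sqrt x) : ℝ) else 0) / n := by
    rw [Nat.sum_divisorsAntidiagonal (fun x y => gyS2 x * gyA1 y)]
    refine Finset.sum_congr rfl fun x hx => ?_
    have hx1 := Nat.dvd_of_mem_divisors hx
    have hx0 : (x:ℝ) ≠ 0 := by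
      have := Nat.pos_of_mem_divisors hx
      positivity
    have hn0 : (n:ℝ) ≠ 0 := by positivity
    simp only [gyS2, gyA1, ArithmeticFunction.coe_mk]
    rw [Nat.cast_div hx1 hx0]
    split_ifs
    · field_simp
    · simp
  rw [h1, ← Finset.sum_div, ← Finset.sum_filter]
  have h2 : n.divisors.filter (fun x => IsSquare x) = b.divisors.image (fun e => e ^ 2) := by
    ext x
    simp only [Finset.mem_filter, Nat.mem_divisors, Finset.mem_image]
    constructor
    · rintro ⟨⟨hx, -⟩, e, rfl⟩
      refine ⟨e, ⟨gy_sq_dvd ha hb0 (by rw [hab, pow_two]; exact hx), hb0.ne'⟩, by ring⟩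
    · rintro ⟨e, ⟨he, -⟩, rfl⟩
      refine ⟨⟨?_, hn.ne'⟩, e, by ring⟩
      rw [← hab]; exact Dvd.dvd.mul_right (pow_dvd_pow_of_dvd he 2) a
  rw [h2, Finset.sum_image (fun x _ y _ h => Nat.pow_left_injective (by norm_num : 2 ≠ 0) h)]
  simp only [Nat.sqrt_eq']
  have h3 : ∑ e ∈ b.divisors, (moebius e : ℝ) = if b = 1 then 1 else 0 := by
    have := congrArg (fun f : ArithmeticFunction ℤ => f b) moebius_mul_coe_zeta
    simp only [ArithmeticFunction.coe_mul_zeta_apply, ArithmeticFunction.one_apply] at this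
    exact_mod_cast this
  rw [h3]
  simp only [gyM2, ArithmeticFunction.coe_mk]
  congr 1
  have h4 : ((moebius n : ℤ) : ℝ)^2 = if Squarefree n then 1 else 0 := by
    have := moebius_sq (n := n)
    exact_mod_cast this
  rw [h4]
  by_cases hb1 : b = 1
  · subst hb1
    rw [if_pos rfl, if_pos]; rw [← hab]; simpa using ha
  · rw [if_neg hb1, if_neg]
    intro hsq
    apply hb1
    have := hsq b (by rw [← hab]; exact ⟨a, by ring⟩)
    exact Nat.isUnit_iff.mp this

lemma gy_conv (f g : ArithmeticFunction ℝ) (Y : ℝ) (hY : 0 ≤ Y) :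
    ∑ r ∈ Ioc 0 ⌊Y⌋₊, (f * g) r = ∑' n : ℕ, f n * ∑ m ∈ Ioc 0 ⌊Y / n⌋₊, g m := by
  rw [sum_Ioc_mul_eq_sum_sum, tsum_eq_sum (s := Ioc 0 ⌊Y⌋₊)]
  · refine Finset.sum_congr rfl fun n hn => ?_
    rw [Nat.floor_div_natCast]
  · intro n hn
    rcases Nat.eq_zero_or_pos n with rfl | h0
    · simp
    · have : ⌊Y⌋₊ < n := by
        by_contra h; exact hn (Finset.mem_Ioc.mpr ⟨h0, by omega⟩)
      rw [Nat.floor_div_natCast, Nat.div_eq_of_lt this]; simp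

/-- sum of `μ²(n)/n` -/
noncomputable def gyQ (Y : ℝ) : ℝ := ∑ l ∈ Ioc 0 ⌊Y⌋₊, gyM2 l

lemma gyQ_eq (Y : ℝ) (hY : 0 ≤ Y) : gyQ Y = ∑' b : ℕ, (moebius b : ℝ) / (b:ℝ)^2 * gyH (Y / (b:ℝ)^2) := by
  rw [gyQ, ← gyS2_mul_A1, gy_conv _ _ _ hY]
  have hinj : Function.Injective (fun b : ℕ => b ^ 2) := Nat.pow_left_injective (by norm_num)
  rw [← hinj.tsum_eq]
  · refine tsum_congr fun b => ?_
    have : IsSquare (b ^ 2) := ⟨b, by ring⟩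
    simp [gyS2, gyA1, gyH, Nat.sqrt_eq', this]
  · intro n hn
    rw [Function.mem_support] at hn
    by_contra h
    apply hn
    have : ¬ IsSquare n := by
      rintro ⟨e, rfl⟩
      exact h ⟨e, by simp [pow_two]⟩
    simp [gyS2, this]

lemma gy_mu_abs (b : ℕ) : |(moebius b : ℝ)| ≤ 1 := by
  have := abs_moebius_le_one (n := b)
  exact_mod_cast this

lemma gy_summable_sq : Summable (fun b : ℕ => (moebius b : ℝ) / (b:ℝ)^2) := by
  refine Summable.of_norm_bounded (Real.summable_one_div_nat_pow.mpr (by norm_num : 1 < 2)) fun b => ?_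
  rw [norm_div, Real.norm_eq_abs, norm_pow, Real.norm_natCast]
  gcongr
  exact gy_mu_abs b

lemma gy_log_le (n : ℕ) : Real.log n ≤ 2 * Real.sqrt n := by
  rcases Nat.eq_zero_or_pos n with rfl | h
  · simp
  have hs : 0 < Real.sqrt n := Real.sqrt_pos.mpr (by exact_mod_cast h)
  have := Real.log_le_sub_one_of_pos hs
  rw [Real.log_sqrt (by positivity)] at this
  linarith

lemma gy_summable_three_halves : Summable (fun b : ℕ => 1 / ((b:ℝ) * Real.sqrt b)) := by
  refine (Real.summable_one_div_nat_rpow.mpr (by norm_num : (1:ℝ) < 3/2)).congr fun b => ?_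
  rcases Nat.eq_zero_or_pos b with rfl | h
  · simp; 
  rw [show (3/2:ℝ) = 1 + 1/2 by norm_num, Real.rpow_add (by exact_mod_cast h), Real.rpow_one, Real.sqrt_eq_rpow]

lemma gy_summable_sq_log : Summable (fun b : ℕ => (moebius b : ℝ) / (b:ℝ)^2 * Real.log ((b:ℝ)^2)) := by
  refine Summable.of_norm_bounded (gy_summable_three_halves.mul_left 4) fun b => ?_
  rcases Nat.eq_zero_or_pos b with rfl | h
  · simp
  have h' : (1:ℝ) ≤ b := by exact_mod_cast h
  rw [norm_mul, norm_div, Real.norm_eq_abs, norm_pow, Real.norm_natCast, Real.log_pow, Real.norm_of_nonneg (by have := Real.log_nonneg h'; positivity)]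
  have h2 := gy_log_le b
  have hs : 0 < Real.sqrt b := Real.sqrt_pos.mpr (by linarith)
  calc |(moebius b : ℝ)| / (b:ℝ)^2 * ((2:ℕ) * Real.log b) ≤ 1 / (b:ℝ)^2 * ((2:ℕ) * (2 * Real.sqrt b)) := by
        have := gy_mu_abs b
        have := Real.log_nonneg h'
        gcongr
    _ = 4 * (Real.sqrt b / (b:ℝ)^2) := by push_cast; ring
    _ = 4 * (1 / ((b:ℝ) * Real.sqrt b)) := by
        congr 1
        rw [div_eq_div_iff (by positivity) (by positivity)]
        have := Real.sq_sqrt (show (0:ℝ) ≤ b by linarith)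
        calc Real.sqrt b * ((b:ℝ) * Real.sqrt b) = b * Real.sqrt b ^ 2 := by ring
          _ = _ := by rw [this]; ring

/-- constants -/
noncomputable def gyα : ℝ := ∑' b : ℕ, (moebius b : ℝ) / (b:ℝ)^2
/-- constants -/
noncomputable def gyα1 : ℝ := ∑' b : ℕ, (moebius b : ℝ) / (b:ℝ)^2 * Real.log ((b:ℝ)^2)

lemma gyQ_bound (Y : ℝ) (hY : 0 < Y) :
    |gyQ Y - (gyα * (Real.log Y + Real.eulerMascheroniConstant) - gyα1)| ≤ 30 / Real.sqrt Y := by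
  have sY : 0 < Real.sqrt Y := Real.sqrt_pos.mpr hY
  obtain ⟨hs, hb⟩ := gyE_sum (Real.sqrt Y) sY
  rw [Real.sq_sqrt hY.le] at hs hb
  have hE : Summable (fun b : ℕ => (moebius b : ℝ) / (b:ℝ)^2 * gyE (Y / (b:ℝ)^2)) := by
    refine Summable.of_norm_bounded hs fun b => ?_
    rw [norm_mul, norm_div, Real.norm_eq_abs, norm_pow, Real.norm_natCast, Real.norm_eq_abs]
    gcongr
    exact gy_mu_abs b
  have hdec : gyQ Y = (gyα * (Real.log Y + Real.eulerMascheroniConstant) - gyα1) + ∑' b : ℕ, (moebius b : ℝ) / (b:ℝ)^2 * gyE (Y / (b:ℝ)^2) := by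
    rw [gyQ_eq Y hY.le, gyα, gyα1, ← tsum_mul_right, ← Summable.tsum_sub (gy_summable_sq.mul_right _) gy_summable_sq_log,
      ← Summable.tsum_add ((gy_summable_sq.mul_right _).sub gy_summable_sq_log) hE]
    refine tsum_congr fun b => ?_
    rcases Nat.eq_zero_or_pos b with rfl | h
    · simp
    rw [gyE, Real.log_div hY.ne' (by positivity)]
    ring
  rw [hdec, add_sub_cancel_left]
  rw [← Real.norm_eq_abs]
  refine le_trans (tsum_of_norm_bounded hs.hasSum fun b => ?_) hb
  rw [norm_mul, norm_div, Real.norm_eq_abs, norm_pow, Real.norm_natCast, Real.norm_eq_abs]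
  gcongr
  exact gy_mu_abs b

/-- The multiplicative function with `C(p^e) = (-1)^(e+1)/(p-1)`. -/
noncomputable def gyC : ArithmeticFunction ℝ :=
  ⟨fun n => if n = 0 then 0 else n.factorization.prod (fun p e => (-1:ℝ)^(e+1) / ((p:ℝ) - 1)), by simp⟩

lemma gyC_one : gyC 1 = 1 := by simp [gyC]

lemma gyC_mul {m n : ℕ} (h : m.Coprime n) : gyC (m * n) = gyC m * gyC n := by
  simp only [gyC, ArithmeticFunction.coe_mk]
  rcases Nat.eq_zero_or_pos m with rfl | hm
  · simp
  rcases Nat.eq_zero_or_pos n with rfl | hn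
  · simp
  rw [if_neg hm.ne', if_neg hn.ne', if_neg (by positivity), Nat.factorization_mul_of_coprime h]
  exact Finsupp.prod_add_index_of_disjoint (by simpa using h.disjoint_primeFactors) _

lemma gyC_mult : gyC.IsMultiplicative := ⟨gyC_one, gyC_mul⟩

lemma gyC_prime_pow {p : ℕ} (hp : p.Prime) (e : ℕ) (he : e ≠ 0) : gyC (p ^ e) = (-1:ℝ)^(e+1) / ((p:ℝ) - 1) := by
  simp only [gyC, ArithmeticFunction.coe_mk]
  rw [if_neg (pow_ne_zero _ hp.ne_zero), hp.factorization_pow, Finsupp.prod, Finsupp.support_single_ne_zero _ he]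
  simp

/-- `C(n)/n` -/
noncomputable def gyKf : ArithmeticFunction ℝ := ⟨fun n => gyC n / n, by simp⟩
/-- `μ²(n)/φ(n)` -/
noncomputable def gyLf : ArithmeticFunction ℝ := ⟨fun n => (moebius n : ℝ)^2 / (n.totient : ℝ), by simp⟩

lemma gyKf_mul_M2 : gyKf * gyM2 = gyLf := by
  have hK : gyKf.IsMultiplicative := by
    refine ⟨by simp [gyKf, gyC_one], fun {m n} h => ?_⟩
    simp only [gyKf, ArithmeticFunction.coe_mk, gyC_mul h]
    push_cast; rw [mul_div_mul_comm]
  have hM : gyM2.IsMultiplicative := by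
    refine ⟨by simp [gyM2], fun {m n} h => ?_⟩
    simp only [gyM2, ArithmeticFunction.coe_mk, isMultiplicative_moebius.map_mul_of_coprime h]
    push_cast; rw [mul_pow, mul_div_mul_comm]
  have hL : gyLf.IsMultiplicative := by
    refine ⟨by simp [gyLf], fun {m n} h => ?_⟩
    simp only [gyLf, ArithmeticFunction.coe_mk, isMultiplicative_moebius.map_mul_of_coprime h, Nat.totient_mul h]
    push_cast; rw [mul_pow, mul_div_mul_comm]
  rw [IsMultiplicative.eq_iff_eq_on_prime_powers _ (hK.mul hM) _ hL]
  intro p i hp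
  have hp1 : (1:ℝ) < p := by exact_mod_cast hp.one_lt
  have hp0 : (p:ℝ) - 1 ≠ 0 := by linarith
  rcases Nat.eq_zero_or_pos i with rfl | hi
  · rw [pow_zero, (hK.mul hM).map_one, hL.map_one]
  obtain ⟨j, rfl⟩ : ∃ j, i = j + 1 := ⟨i - 1, by omega⟩
  rw [ArithmeticFunction.mul_apply, Nat.sum_divisorsAntidiagonal (fun x y => gyKf x * gyM2 y), Nat.sum_divisors_prime_pow hp,
    Finset.sum_range_succ, Finset.sum_range_succ, Finset.sum_eq_zero]
  · rw [Nat.pow_div (by omega) hp.pos, Nat.pow_div (by omega) hp.pos, Nat.sub_self, pow_zero, hM.map_one,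
      show j + 1 - j = 1 by omega, pow_one]
    have hm : gyM2 p = 1 / p := by
      simp only [gyM2, ArithmeticFunction.coe_mk, moebius_apply_prime hp]; norm_num
    rw [hm]
    rcases Nat.eq_zero_or_pos j with rfl | hj
    · rw [pow_zero, hK.map_one]
      simp only [gyKf, gyLf, ArithmeticFunction.coe_mk]
      rw [gyC_prime_pow hp _ (by omega), zero_add, pow_one, moebius_apply_prime hp, Nat.totient_prime hp, Nat.cast_sub hp.one_lt.le]
      push_cast
      field_simp
      ring
    · simp only [gyKf, gyLf, ArithmeticFunction.coe_mk]
      rw [gyC_prime_pow hp _ (by omega), gyC_prime_pow hp _ (by omega), moebius_apply_prime_pow hp (by omega), if_neg (by omega)]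
      push_cast
      field_simp
      ring
  · intro x hx
    rw [Finset.mem_range] at hx
    rw [Nat.pow_div (by omega) hp.pos]
    have : gyM2 (p ^ (j + 1 - x)) = 0 := by
      simp only [gyM2, ArithmeticFunction.coe_mk]
      rw [moebius_apply_prime_pow hp (by omega), if_neg (by omega)]; simp
    rw [this, mul_zero]

lemma gy_summable_C : Summable (fun n : ℕ => |gyC n| / Real.sqrt n) := by
  set g : ℕ → ℝ := fun n => |gyC n| / Real.sqrt n with hg
  have g0 : ∀ n, 0 ≤ g n := fun n => by positivity
  have g1 : g 1 = 1 := by simp [hg, gyC_one]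
  have gm : ∀ {m n : ℕ}, m.Coprime n → g (m * n) = g m * g n := by
    intro m n h
    simp only [hg, gyC_mul h]
    rw [abs_mul]; push_cast; rw [Real.sqrt_mul (by positivity), mul_div_mul_comm]
  have hloc : ∀ p : ℕ, p.Prime → HasSum (fun e : ℕ => g (p ^ e)) (1 + 1 / (((p:ℝ) - 1) * (Real.sqrt p - 1))) := by
    intro p hp
    have hp1 : (1:ℝ) < p := by exact_mod_cast hp.one_lt
    have hs1 : 1 < Real.sqrt p := by rw [Real.lt_sqrt (by norm_num)]; linarith
    have hs0 : 0 < Real.sqrt p := by linarith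
    have h1 := (hasSum_geometric_of_lt_one (r := 1 / Real.sqrt p) (by positivity) (by rw [div_lt_one hs0]; exact hs1)).mul_left (1 / ((p:ℝ) - 1))
    have h2 := h1.add (hasSum_ite_eq (0:ℕ) (1 - 1 / ((p:ℝ) - 1)))
    have hne : (p:ℝ) - 1 ≠ 0 := by linarith
    have hne2 : Real.sqrt p - 1 ≠ 0 := by linarith
    have hval : 1 / ((p:ℝ) - 1) * (1 - 1 / Real.sqrt p)⁻¹ + (1 - 1 / ((p:ℝ) - 1)) = 1 + 1 / (((p:ℝ) - 1) * (Real.sqrt p - 1)) := by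
      have : (1 - 1 / Real.sqrt p)⁻¹ = Real.sqrt p / (Real.sqrt p - 1) := by
        rw [← inv_div]; congr 1; field_simp
      rw [this]; field_simp; ring
    rw [hval] at h2
    refine h2.congr_fun ?_ |> fun h => h
    intro e
    rcases Nat.eq_zero_or_pos e with rfl | he
    · simp [g1]
    · rw [if_neg he.ne']
      simp only [hg]
      rw [gyC_prime_pow hp e he.ne', abs_div, abs_pow, abs_neg, abs_one, one_pow, abs_of_pos (by linarith)]
      push_cast
      have hpow : Real.sqrt ((p:ℝ) ^ e) = Real.sqrt p ^ e := by
        have : (p:ℝ) ^ e = (Real.sqrt p ^ e) ^ 2 := by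
          rw [← pow_mul, mul_comm, pow_mul, Real.sq_sqrt (by linarith)]
        rw [this, Real.sqrt_sq (by positivity)]
      rw [hpow, add_zero, one_div_pow, div_eq_mul_one_div]
  have hy : ∀ p : ℕ, p.Prime → 1 / (((p:ℝ) - 1) * (Real.sqrt p - 1)) ≤ 8 * (1 / ((p:ℝ) * Real.sqrt p)) := by
    intro p hp
    have hp2 : (2:ℝ) ≤ p := by exact_mod_cast hp.two_le
    have hs : 4 / 3 ≤ Real.sqrt p := by
      apply Real.le_sqrt_of_sq_le; linarith
    rw [mul_one_div, div_le_div_iff₀ (mul_pos (by linarith) (by linarith)) (by positivity)]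
    have h1 : (p:ℝ) ≤ 2 * (p - 1) := by linarith
    have h2 : Real.sqrt p ≤ 4 * (Real.sqrt p - 1) := by linarith
    calc 1 * ((p:ℝ) * Real.sqrt p) ≤ 1 * ((2 * (p - 1)) * (4 * (Real.sqrt p - 1))) := by gcongr; linarith
      _ = _ := by ring
  have hg00 : g 0 = 0 := by simp [hg]
  refine summable_of_sum_range_le (c := Real.exp (8 * ∑' b : ℕ, 1 / ((b:ℝ) * Real.sqrt b))) g0 fun N => ?_
  obtain ⟨hsm, hsum⟩ := EulerProduct.summable_and_hasSum_smoothNumbers_prod_primesBelow_tsum (f := g) g1 gm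
    (fun {p} hp => by simpa only [Real.norm_of_nonneg (g0 _)] using (hloc p hp).summable) N
  have hle : ∑ n ∈ range N, g n ≤ ∑' m : N.smoothNumbers, g m := by
    have hsub : ∀ n ∈ (range N).erase 0, n ∈ N.smoothNumbers := by
      intro n hn
      rw [Finset.mem_erase, Finset.mem_range] at hn
      exact Nat.mem_smoothNumbers_of_lt (Nat.pos_of_ne_zero hn.1) hn.2
    rw [← Finset.sum_erase (range N) hg00]
    rw [← Finset.sum_subtype_of_mem (fun n => g n) hsub]
    exact hsum.summable.sum_le_tsum _ fun _ _ => g0 _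
  refine hle.trans ?_
  rw [hsum.tsum_eq]
  calc ∏ p ∈ N.primesBelow, ∑' n : ℕ, g (p ^ n) ≤ ∏ p ∈ N.primesBelow, Real.exp (8 * (1 / ((p:ℝ) * Real.sqrt p))) := by
        refine Finset.prod_le_prod (fun p _ => tsum_nonneg fun _ => g0 _) fun p hp => ?_
        have hpp := Nat.prime_of_mem_primesBelow hp
        rw [(hloc p hpp).tsum_eq]
        refine le_trans ?_ (Real.exp_le_exp.mpr (hy p hpp))
        rw [add_comm]; exact Real.add_one_le_exp _
    _ = Real.exp (8 * ∑ p ∈ N.primesBelow, (1 / ((p:ℝ) * Real.sqrt p))) := by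
        rw [← Real.exp_sum, Finset.mul_sum]
    _ ≤ _ := by
        apply Real.exp_le_exp.mpr
        gcongr
        exact gy_summable_three_halves.sum_le_tsum _ fun _ _ => by positivity

/-- `∑_{r ≤ R} μ²(r)/φ(r)` -/
noncomputable def gyL (R : ℝ) : ℝ := ∑ r ∈ Ioc 0 ⌊R⌋₊, gyLf r

lemma gy_C_norm (n : ℕ) : ‖gyC n / n‖ ≤ |gyC n| / Real.sqrt n := by
  rcases Nat.eq_zero_or_pos n with rfl | h
  · simp
  have h' : (1:ℝ) ≤ n := by exact_mod_cast h
  have hs : 0 < Real.sqrt n := Real.sqrt_pos.mpr (by linarith)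
  rw [norm_div, Real.norm_natCast, Real.norm_eq_abs]
  gcongr
  rw [Real.sqrt_le_iff]; constructor
  · linarith
  · nlinarith

lemma gy_summable_K0 : Summable (fun n : ℕ => gyC n / n) :=
  Summable.of_norm_bounded gy_summable_C gy_C_norm

lemma gy_summable_K1 : Summable (fun n : ℕ => gyC n / n * Real.log n) := by
  refine Summable.of_norm_bounded (gy_summable_C.mul_left 2) fun n => ?_
  rcases Nat.eq_zero_or_pos n with rfl | h
  · simp
  have h' : (1:ℝ) ≤ n := by exact_mod_cast h
  have hs : 0 < Real.sqrt n := Real.sqrt_pos.mpr (by linarith)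
  rw [norm_mul, norm_div, Real.norm_natCast, Real.norm_eq_abs, Real.norm_of_nonneg (Real.log_nonneg h')]
  have hl := gy_log_le n
  have hq := Real.mul_self_sqrt (show (0:ℝ) ≤ n by linarith)
  calc |gyC n| / n * Real.log n ≤ |gyC n| / n * (2 * Real.sqrt n) := by gcongr
    _ = 2 * (|gyC n| * (Real.sqrt n / n)) := by ring
    _ = 2 * (|gyC n| * (1 / Real.sqrt n)) := by
        rw [Real.sqrt_div_self', ]
    _ = _ := by ring

/-- constants -/
noncomputable def gyK0 : ℝ := ∑' n : ℕ, gyC n / n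
/-- constants -/
noncomputable def gyK1 : ℝ := ∑' n : ℕ, gyC n / n * Real.log n

lemma gyL_bound0 : ∃ B : ℝ, 0 < B ∧ ∀ R : ℝ, 0 < R →
    |gyL R - (gyα * gyK0 * (Real.log R + Real.eulerMascheroniConstant) - (gyα1 * gyK0 + gyα * gyK1))| ≤ B / Real.sqrt R := by
  refine ⟨30 * (∑' n : ℕ, |gyC n| / Real.sqrt n) + 1, ?_, fun R hR => ?_⟩
  · have : 0 ≤ ∑' n : ℕ, |gyC n| / Real.sqrt n := tsum_nonneg fun _ => by positivity
    linarith
  have sR : 0 < Real.sqrt R := Real.sqrt_pos.mpr hR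
  set G := Real.eulerMascheroniConstant
  set er : ℝ → ℝ := fun Y => gyQ Y - (gyα * (Real.log Y + G) - gyα1) with her
  have hbd : ∀ n : ℕ, ‖gyC n / n * er (R / n)‖ ≤ 30 / Real.sqrt R * (|gyC n| / Real.sqrt n) := by
    intro n
    rcases Nat.eq_zero_or_pos n with rfl | h
    · simp
    have h' : (0:ℝ) < n := by exact_mod_cast h
    have hs : 0 < Real.sqrt n := Real.sqrt_pos.mpr (by linarith)
    have := gyQ_bound (R / n) (by positivity)
    rw [norm_mul, norm_div, Real.norm_natCast, Real.norm_eq_abs, Real.norm_eq_abs]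
    calc |gyC n| / n * |er (R / n)| ≤ |gyC n| / n * (30 / Real.sqrt (R / n)) := by gcongr
      _ = |gyC n| * (Real.sqrt n / n) * (30 / Real.sqrt R) := by
          rw [Real.sqrt_div hR.le]; field_simp
      _ = |gyC n| * (1 / Real.sqrt n) * (30 / Real.sqrt R) := by
          rw [Real.sqrt_div_self']
      _ = _ := by ring
  have hE : Summable (fun n : ℕ => gyC n / n * er (R / n)) :=
    Summable.of_norm_bounded (gy_summable_C.mul_left _) hbd
  have hdec : gyL R = (gyα * gyK0 * (Real.log R + G) - (gyα1 * gyK0 + gyα * gyK1)) + ∑' n : ℕ, gyC n / n * er (R / n) := by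
    have e1 : (gyα * gyK0 * (Real.log R + G) - (gyα1 * gyK0 + gyα * gyK1))
        = gyK0 * (gyα * (Real.log R + G) - gyα1) - gyK1 * gyα := by ring
    rw [e1, gyL, ← gyKf_mul_M2, gy_conv _ _ _ hR.le, gyK0, gyK1, ← tsum_mul_right, ← tsum_mul_right,
      ← Summable.tsum_sub (gy_summable_K0.mul_right _) (gy_summable_K1.mul_right _),
      ← Summable.tsum_add ((gy_summable_K0.mul_right _).sub (gy_summable_K1.mul_right _)) hE]
    refine tsum_congr fun n => ?_
    rcases Nat.eq_zero_or_pos n with rfl | h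
    · simp
    have h' : (n:ℝ) ≠ 0 := by positivity
    simp only [her, gyQ, gyKf, ArithmeticFunction.coe_mk]
    rw [Real.log_div hR.ne' h']
    ring
  rw [hdec, add_sub_cancel_left, ← Real.norm_eq_abs]
  refine le_trans (tsum_of_norm_bounded (gy_summable_C.mul_left _).hasSum hbd) ?_
  rw [tsum_mul_left, div_mul_eq_mul_div]
  gcongr
  linarith

lemma gy_deriv {ι : Type*} (c ν : ι → ℝ) (hν : ∀ i, c i ≠ 0 → 1 ≤ ν i) (hc : Summable c)
    (hcl : Summable (fun i => c i * Real.log (ν i))) :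
    (∀ s : ℝ, 0 ≤ s → Summable (fun i => ‖c i * ν i ^ (-s)‖)) ∧
    Filter.Tendsto (fun s : ℝ => ((∑' i, c i * ν i ^ (-s)) - ∑' i, c i) / s) (nhdsWithin 0 (Set.Ioi 0))
      (nhds (-∑' i, c i * Real.log (ν i))) := by
  have hs1 : ∀ s : ℝ, 0 ≤ s → Summable (fun i => ‖c i * ν i ^ (-s)‖) := by
    intro s hs
    refine Summable.of_nonneg_of_le (fun _ => norm_nonneg _) (fun i => ?_) hc.norm
    by_cases h : c i = 0
    · simp [h]
    rw [norm_mul]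
    refine mul_le_of_le_one_right (norm_nonneg _) ?_
    have := hν i h
    rw [Real.norm_of_nonneg (by positivity)]
    exact Real.rpow_le_one_of_one_le_of_nonpos this (by linarith)
  refine ⟨hs1, ?_⟩
  have key : Filter.Tendsto (fun s : ℝ => ∑' i, (c i * ν i ^ (-s) - c i) / s) (nhdsWithin 0 (Set.Ioi 0))
      (nhds (∑' i, -(c i * Real.log (ν i)))) := by
    refine tendsto_tsum_of_dominated_convergence hcl.norm ?_ ?_
    · intro i
      by_cases h : c i = 0
      · simp [h]
      have hν1 := hν i h
      have hd : HasDerivAt (fun s : ℝ => c i * ν i ^ (-s)) (c i * (ν i ^ (-(0:ℝ)) * Real.log (ν i) * (-1))) 0 := by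
        have h1 : HasDerivAt (fun s : ℝ => -s) (-1) 0 := (hasDerivAt_id (0:ℝ)).neg
        have := h1.const_rpow (a := ν i) (by linarith)
        refine (this.const_mul (c i)).congr_deriv ?_
        ring
      have h2 := hd.hasDerivWithinAt (s := Set.Ioi 0)
      rw [hasDerivWithinAt_iff_tendsto_slope' (by simp)] at h2
      convert h2 using 2
      · simp [slope_def_field]
      · simp
    · filter_upwards [self_mem_nhdsWithin] with s hs i
      have hs0 : (0:ℝ) < s := hs
      by_cases h : c i = 0
      · simp [h]
      have hν1 := hν i h
      have hl := Real.log_nonneg hν1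
      have e1 : (c i * ν i ^ (-s) - c i) / s = c i * ((ν i ^ (-s) - 1) / s) := by ring
      rw [e1, norm_mul, norm_mul]
      gcongr
      rw [norm_div, Real.norm_of_nonneg hs0.le, Real.norm_of_nonneg hl, div_le_iff₀ hs0, Real.norm_eq_abs, abs_le]
      have h3 : ν i ^ (-s) ≤ 1 := Real.rpow_le_one_of_one_le_of_nonpos hν1 (by linarith)
      have h4 : ν i ^ (-s) = Real.exp (Real.log (ν i) * (-s)) := Real.rpow_def_of_pos (by linarith) _
      have h5 := Real.add_one_le_exp (Real.log (ν i) * (-s))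
      constructor
      · rw [h4]; linarith
      · have := mul_nonneg hl hs0.le
        linarith
  rw [tsum_neg] at key
  refine key.congr' ?_
  filter_upwards [self_mem_nhdsWithin] with s hs
  rw [tsum_div_const, Summable.tsum_sub ((hs1 s (le_of_lt hs)).of_norm) hc]

lemma gy_pow_rpow (p e : ℕ) (s : ℝ) : (((p ^ e : ℕ) : ℝ)) ^ s = ((p:ℝ) ^ s) ^ e := by
  push_cast
  rw [← Real.rpow_natCast, ← Real.rpow_mul (by positivity), mul_comm, Real.rpow_mul (by positivity), Real.rpow_natCast]

/-- the local term -/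
noncomputable def gyx (s : ℝ) (p : Nat.Primes) : ℝ :=
  1 / (((p:ℕ):ℝ) * (((p:ℕ):ℝ) - 1)) * ((p:ℕ):ℝ) ^ (-s) - 1 / (((p:ℕ):ℝ) * (((p:ℕ):ℝ) - 1)) * (((p:ℕ):ℝ)^2) ^ (-s)

lemma gy_euler (s : ℝ) (hs : 0 ≤ s)
    (hS : Summable (fun b : ℕ => ‖(moebius b : ℝ) / (b:ℝ)^2 * ((b:ℝ)^2) ^ (-s)‖))
    (hK : Summable (fun n : ℕ => ‖gyC n / n * (n:ℝ) ^ (-s)‖)) :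
    HasProd (fun p : Nat.Primes => 1 + gyx s p)
      ((∑' b : ℕ, (moebius b : ℝ) / (b:ℝ)^2 * ((b:ℝ)^2) ^ (-s)) * ∑' n : ℕ, gyC n / n * (n:ℝ) ^ (-s)) := by
  have h1 := EulerProduct.eulerProduct_hasProd (f := fun b : ℕ => (moebius b : ℝ) / (b:ℝ)^2 * ((b:ℝ)^2) ^ (-s))
    (by simp) (fun {m n} h => by
      simp only [isMultiplicative_moebius.map_mul_of_coprime h]
      push_cast
      rw [mul_pow, Real.mul_rpow (by positivity) (by positivity), mul_div_mul_comm]; ring) hS (by simp)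
  have h2 := EulerProduct.eulerProduct_hasProd (f := fun n : ℕ => gyC n / n * (n:ℝ) ^ (-s))
    (by simp [gyC_one]) (fun {m n} h => by
      simp only [gyC_mul h]
      push_cast
      rw [Real.mul_rpow (by positivity) (by positivity), mul_div_mul_comm]; ring) hK (by simp)
  refine (h1.mul h2).congr_fun ?_ |> fun h => h
  intro p
  have hp := p.2
  obtain ⟨p, hp'⟩ := p
  simp only [gyx] at hp ⊢
  have hp1 : (1:ℝ) < p := by exact_mod_cast hp.one_lt
  have hne : (p:ℝ) - 1 ≠ 0 := by linarith
  set z : ℝ := (p:ℝ) ^ (-s) with hz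
  have hz0 : 0 < z := by positivity
  have hz1 : z ≤ 1 := Real.rpow_le_one_of_one_le_of_nonpos hp1.le (by linarith)
  set y : ℝ := z / p with hy
  have hy0 : 0 < y := by positivity
  have hy1 : y < 1 := by rw [hy, div_lt_one (by linarith)]; linarith
  have l1 : ∑' e : ℕ, ((moebius (p ^ e) : ℝ) / ((p ^ e : ℕ):ℝ)^2 * (((p ^ e : ℕ):ℝ)^2) ^ (-s)) = 1 - y ^ 2 := by
    rw [tsum_eq_sum (s := range 2)]
    · rw [Finset.sum_range_succ, Finset.sum_range_one, pow_zero, pow_one, moebius_apply_prime hp]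
      have : ((p:ℝ)^2) ^ (-s) = z ^ 2 := by
        have := gy_pow_rpow p 2 (-s)
        push_cast at this
        rw [this]
      rw [this, hy]
      simp
      ring
    · intro e he
      rw [Finset.mem_range, not_lt] at he
      rw [moebius_apply_prime_pow hp (by omega), if_neg (by omega)]; simp
  have l2 : HasSum (fun e : ℕ => gyC (p ^ e) / ((p ^ e : ℕ):ℝ) * ((p ^ e : ℕ):ℝ) ^ (-s)) (1 + y / ((p - 1) * (1 + y))) := by
    have g1 := (hasSum_geometric_of_abs_lt_one (r := -y) (by rw [abs_neg, abs_of_pos hy0]; exact hy1)).mul_left (-1 / ((p:ℝ) - 1))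
    have g2 := g1.add (hasSum_ite_eq (0:ℕ) (1 + 1 / ((p:ℝ) - 1)))
    have hval : -1 / ((p:ℝ) - 1) * (1 - -y)⁻¹ + (1 + 1 / ((p:ℝ) - 1)) = 1 + y / ((p - 1) * (1 + y)) := by
      have : 1 + y ≠ 0 := by linarith
      rw [sub_neg_eq_add]
      field_simp
      ring
    rw [hval] at g2
    refine g2.congr_fun ?_ |> fun h => h
    intro e
    rcases Nat.eq_zero_or_pos e with rfl | he
    · simp [gyC_one]
      ring
    · rw [if_neg he.ne', gyC_prime_pow hp e he.ne', gy_pow_rpow, neg_pow y, hy, div_pow, pow_succ]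
      push_cast
      ring
  have e3 : (((p:ℝ))^2) ^ (-s) = z ^ 2 := by
    have := gy_pow_rpow p 2 (-s)
    push_cast at this
    rw [this]
  rw [l1, l2.tsum_eq, e3, hy]
  have : (p:ℝ) + z ≠ 0 := by positivity
  have h9 : 1 + z / p = (p + z) / p := by field_simp
  rw [h9]
  field_simp
  ring

lemma gy_T_summable0 : Summable (fun p : Nat.Primes => 1 / (((p:ℕ):ℝ) * (((p:ℕ):ℝ) - 1))) := by
  have h := ((Real.summable_one_div_nat_pow.mpr (by norm_num : 1 < 2)).mul_left 2).comp_injective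
    (i := fun p : Nat.Primes => (p:ℕ)) Nat.Primes.coe_nat_injective
  refine Summable.of_nonneg_of_le (fun p => ?_) (fun p => ?_) h
  · have : (2:ℝ) ≤ (p:ℕ) := by exact_mod_cast p.2.two_le
    have : (0:ℝ) ≤ (p:ℕ) - 1 := by linarith
    positivity
  · have : (2:ℝ) ≤ (p:ℕ) := by exact_mod_cast p.2.two_le
    have h1 : (0:ℝ) < (p:ℕ) - 1 := by linarith
    simp only [Function.comp]
    rw [mul_one_div, div_le_div_iff₀ (by positivity) (by positivity)]
    nlinarith

lemma gy_T_summable : Summable (fun p : Nat.Primes => 1 / (((p:ℕ):ℝ) * (((p:ℕ):ℝ) - 1)) * Real.log (p:ℕ)) := by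
  have h := (gy_summable_three_halves.mul_left 4).comp_injective
    (i := fun p : Nat.Primes => (p:ℕ)) Nat.Primes.coe_nat_injective
  refine Summable.of_nonneg_of_le (fun p => ?_) (fun p => ?_) h
  · have : (2:ℝ) ≤ (p:ℕ) := by exact_mod_cast p.2.two_le
    have h1 : (0:ℝ) ≤ (p:ℕ) - 1 := by linarith
    have := Real.log_nonneg (show (1:ℝ) ≤ (p:ℕ) by linarith)
    positivity
  · have h2 : (2:ℝ) ≤ (p:ℕ) := by exact_mod_cast p.2.two_le
    have h1 : (0:ℝ) < (p:ℕ) - 1 := by linarith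
    have hl := gy_log_le (p:ℕ)
    have hs : 0 < Real.sqrt (p:ℕ) := Real.sqrt_pos.mpr (by linarith)
    have hq := Real.mul_self_sqrt (show (0:ℝ) ≤ (p:ℕ) by linarith)
    simp only [Function.comp]
    calc 1 / (((p:ℕ):ℝ) * (((p:ℕ):ℝ) - 1)) * Real.log (p:ℕ) ≤ 1 / (((p:ℕ):ℝ) * (((p:ℕ):ℝ) - 1)) * (2 * Real.sqrt (p:ℕ)) := by gcongr
      _ = 2 * Real.sqrt (p:ℕ) / (((p:ℕ):ℝ) * (((p:ℕ):ℝ) - 1)) := by ring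
      _ ≤ 4 * (1 / (((p:ℕ):ℝ) * Real.sqrt (p:ℕ))) := by
        rw [mul_one_div, div_le_div_iff₀ (by positivity) (by positivity)]
        calc 2 * Real.sqrt (p:ℕ) * (((p:ℕ):ℝ) * Real.sqrt (p:ℕ)) = 2 * ((p:ℕ):ℝ) * (Real.sqrt (p:ℕ) * Real.sqrt (p:ℕ)) := by ring
          _ = 2 * ((p:ℕ):ℝ) * ((p:ℕ):ℝ) := by rw [hq]
          _ ≤ _ := by nlinarith

/-- the prime sum in the constant -/
noncomputable def gyT : ℝ := ∑' p : Nat.Primes, Real.log (p : ℕ) / (((p : ℕ) : ℝ) * (((p : ℕ) : ℝ) - 1))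

lemma gy_x_tendsto : (∀ s : ℝ, 0 < s → Summable (gyx s)) ∧
    Filter.Tendsto (fun s : ℝ => (∑' p, gyx s p) / s) (nhdsWithin 0 (Set.Ioi 0)) (nhds gyT) := by
  set c : Nat.Primes → ℝ := fun p => 1 / (((p:ℕ):ℝ) * (((p:ℕ):ℝ) - 1)) with hc
  have h1 := gy_deriv c (fun p => ((p:ℕ):ℝ)) (fun p _ => by exact_mod_cast p.2.one_lt.le) gy_T_summable0 gy_T_summable
  have hsum2 : Summable (fun p : Nat.Primes => c p * Real.log (((p:ℕ):ℝ)^2)) := by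
    refine (gy_T_summable.mul_left 2).congr fun p => ?_
    rw [Real.log_pow]; push_cast; ring
  have h2 := gy_deriv c (fun p => ((p:ℕ):ℝ)^2) (fun p _ => one_le_pow₀ (by exact_mod_cast p.2.one_lt.le)) gy_T_summable0 hsum2
  have hT1 : ∑' p : Nat.Primes, c p * Real.log (p:ℕ) = gyT := by
    rw [gyT]; refine tsum_congr fun p => ?_
    simp only [hc]; ring
  have hT2 : ∑' p : Nat.Primes, c p * Real.log (((p:ℕ):ℝ)^2) = 2 * gyT := by
    rw [← hT1, ← tsum_mul_left]; refine tsum_congr fun p => ?_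
    rw [Real.log_pow]; push_cast; ring
  refine ⟨fun s hs => (h1.1 s hs.le).of_norm.sub (h2.1 s hs.le).of_norm, ?_⟩
  have h3 := h1.2.sub h2.2
  rw [hT1, hT2] at h3
  have e : -gyT - -(2 * gyT) = gyT := by ring
  rw [e] at h3
  refine h3.congr' ?_
  filter_upwards [self_mem_nhdsWithin] with s hs
  have hs0 : (0:ℝ) < s := hs
  rw [show (fun p => gyx s p) = fun p : Nat.Primes => c p * ((p:ℕ):ℝ) ^ (-s) - c p * (((p:ℕ):ℝ)^2) ^ (-s) from rfl,
    Summable.tsum_sub (h1.1 s hs0.le).of_norm (h2.1 s hs0.le).of_norm]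
  ring

lemma gyx_nonneg (s : ℝ) (hs : 0 ≤ s) (p : Nat.Primes) : 0 ≤ gyx s p := by
  have h2 : (2:ℝ) ≤ (p:ℕ) := by exact_mod_cast p.2.two_le
  have h1 : (0:ℝ) < (p:ℕ) - 1 := by linarith
  rw [gyx, sub_nonneg]
  gcongr 1 / _ * ?_
  exact Real.rpow_le_rpow_of_nonpos (by linarith) (by nlinarith) (by linarith)

lemma gy_prod_bounds {x : Nat.Primes → ℝ} {P : ℝ} (hx : ∀ p, 0 ≤ x p) (hs : Summable x) (hP : HasProd (fun p => 1 + x p) P) :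
    1 + ∑' p, x p ≤ P ∧ P ≤ Real.exp (∑' p, x p) := by
  constructor
  · refine le_of_tendsto_of_tendsto (hs.hasSum.const_add 1) hP (Filter.Eventually.of_forall fun F => ?_)
    simp only
    induction F using Finset.cons_induction with
    | empty => simp
    | cons a F ha ih =>
      rw [Finset.sum_cons, Finset.prod_cons]
      have h1 : 0 ≤ ∑ p ∈ F, x p := Finset.sum_nonneg fun p _ => hx p
      have h2 := hx a
      nlinarith [mul_le_mul_of_nonneg_left ih h2, mul_nonneg h2 h1]
  · refine le_of_tendsto hP (Filter.Eventually.of_forall fun F => ?_)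
    calc ∏ p ∈ F, (1 + x p) ≤ ∏ p ∈ F, Real.exp (x p) := by
          refine Finset.prod_le_prod (fun p _ => by linarith [hx p]) fun p _ => ?_
          rw [add_comm]; exact Real.add_one_le_exp _
      _ = Real.exp (∑ p ∈ F, x p) := by rw [Real.exp_sum]
      _ ≤ _ := Real.exp_le_exp.mpr (hs.sum_le_tsum _ fun p _ => hx p)

theorem gy_constants : gyα * gyK0 = 1 ∧ gyα1 * gyK0 + gyα * gyK1 = -gyT := by
  have hS := gy_deriv (fun b : ℕ => (moebius b : ℝ) / (b:ℝ)^2) (fun b : ℕ => (b:ℝ)^2) (fun b hb => by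
    have : 1 ≤ b := by
      rcases Nat.eq_zero_or_pos b with rfl | h
      · simp at hb
      · exact h
    exact one_le_pow₀ (by exact_mod_cast this)) gy_summable_sq gy_summable_sq_log
  have hK := gy_deriv (fun n : ℕ => gyC n / n) (fun n : ℕ => (n:ℝ)) (fun n hn => by
    have : 1 ≤ n := by
      rcases Nat.eq_zero_or_pos n with rfl | h
      · simp at hn
      · exact h
    exact_mod_cast this) gy_summable_K0 gy_summable_K1
  set S : ℝ → ℝ := fun s => ∑' b : ℕ, (moebius b : ℝ) / (b:ℝ)^2 * ((b:ℝ)^2) ^ (-s) with hSd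
  set K : ℝ → ℝ := fun s => ∑' n : ℕ, gyC n / n * (n:ℝ) ^ (-s) with hKd
  have hE : ∀ s : ℝ, 0 ≤ s → HasProd (fun p : Nat.Primes => 1 + gyx s p) (S s * K s) :=
    fun s hs => gy_euler s hs (hS.1 s hs) (hK.1 s hs)
  have h0 : gyα * gyK0 = 1 := by
    have := hE 0 le_rfl
    have e1 : S 0 = gyα := by simp [hSd, gyα]
    have e2 : K 0 = gyK0 := by simp [hKd, gyK0]
    rw [e1, e2] at this
    refine this.unique ?_
    convert hasProd_one using 2 with p
    simp [gyx]
  refine ⟨h0, ?_⟩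
  have hS2 : Filter.Tendsto (fun s => (S s - gyα) / s) (nhdsWithin 0 (Set.Ioi 0)) (nhds (-gyα1)) := hS.2
  have hK2 : Filter.Tendsto (fun s => (K s - gyK0) / s) (nhdsWithin 0 (Set.Ioi 0)) (nhds (-gyK1)) := hK.2
  have hid : Filter.Tendsto (fun s : ℝ => s) (nhdsWithin 0 (Set.Ioi 0)) (nhds 0) :=
    Filter.tendsto_id.mono_left nhdsWithin_le_nhds
  have hK3 : Filter.Tendsto K (nhdsWithin 0 (Set.Ioi 0)) (nhds gyK0) := by
    have := (hK2.mul hid).const_add gyK0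
    rw [mul_zero, add_zero] at this
    refine this.congr' ?_
    filter_upwards [self_mem_nhdsWithin] with s hs
    have : s ≠ 0 := ne_of_gt hs
    field_simp; ring
  have hlim1 : Filter.Tendsto (fun s => (S s * K s - 1) / s) (nhdsWithin 0 (Set.Ioi 0)) (nhds (-gyα1 * gyK0 + gyα * (-gyK1))) := by
    refine ((hS2.mul hK3).add (hK2.const_mul gyα)).congr' ?_
    filter_upwards [self_mem_nhdsWithin] with s hs
    have : s ≠ 0 := ne_of_gt hs
    rw [← h0]
    field_simp; ring
  obtain ⟨hxs, hxt⟩ := gy_x_tendsto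
  have hX0 : Filter.Tendsto (fun s : ℝ => ∑' p, gyx s p) (nhdsWithin 0 (Set.Ioi 0)) (nhds 0) := by
    have := hxt.mul hid
    rw [mul_zero] at this
    refine this.congr' ?_
    filter_upwards [self_mem_nhdsWithin] with s hs
    have : s ≠ 0 := ne_of_gt hs
    field_simp
  have hlim2 : Filter.Tendsto (fun s => (S s * K s - 1) / s) (nhdsWithin 0 (Set.Ioi 0)) (nhds gyT) := by
    have hup : Filter.Tendsto (fun s : ℝ => (∑' p, gyx s p) / s + (∑' p, gyx s p) * ((∑' p, gyx s p) / s)) (nhdsWithin 0 (Set.Ioi 0)) (nhds gyT) := by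
      have := hxt.add (hX0.mul hxt)
      rwa [zero_mul, add_zero] at this
    refine tendsto_of_tendsto_of_tendsto_of_le_of_le' hxt hup ?_ ?_
    · filter_upwards [self_mem_nhdsWithin] with s hs
      have hs0 : (0:ℝ) < s := hs
      have := (gy_prod_bounds (gyx_nonneg s hs0.le) (hxs s hs0) (hE s hs0.le)).1
      gcongr
      linarith
    · have hev : ∀ᶠ s in nhdsWithin (0:ℝ) (Set.Ioi 0), ∑' p, gyx s p < 1 := hX0.eventually_lt_const one_pos
      filter_upwards [self_mem_nhdsWithin, hev] with s hs hlt
      have hs0 : (0:ℝ) < s := hs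
      have h1 := (gy_prod_bounds (gyx_nonneg s hs0.le) (hxs s hs0) (hE s hs0.le)).2
      have h2 : 0 ≤ ∑' p, gyx s p := tsum_nonneg (gyx_nonneg s hs0.le)
      have h3 := (abs_le.mp (Real.abs_exp_sub_one_sub_id_le (x := ∑' p, gyx s p) (by rw [abs_of_nonneg h2]; exact hlt.le))).2
      rw [mul_div_assoc', ← add_div]
      gcongr
      nlinarith
  have := tendsto_nhds_unique hlim1 hlim2
  linarith

theorem gyL_bound : ∃ B : ℝ, 0 < B ∧ ∀ R : ℝ, 0 < R → |gyL R - (Real.log R + cGY)| ≤ B / Real.sqrt R := by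
  obtain ⟨B, hB, h⟩ := gyL_bound0
  refine ⟨B, hB, fun R hR => ?_⟩
  have := h R hR
  rw [gy_constants.1, gy_constants.2] at this
  convert this using 3
  rw [cGY, gyT]; ring

/-- `p * ∑_{r ≤ R, p ∣ r} μ²(r)/φ(r)` -/
noncomputable def gyD (R : ℝ) (p : ℕ) : ℝ := p * ∑ r ∈ (Ioc 0 ⌊R⌋₊).filter (fun r => p ∣ r), gyLf r

lemma gyLf_nonneg (r : ℕ) : 0 ≤ gyLf r := by
  simp only [gyLf, ArithmeticFunction.coe_mk]; positivity

lemma gyL_nonneg (R : ℝ) : 0 ≤ gyL R := Finset.sum_nonneg fun r _ => gyLf_nonneg r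

lemma gyD_nonneg (R : ℝ) (p : ℕ) : 0 ≤ gyD R p :=
  mul_nonneg (by positivity) (Finset.sum_nonneg fun r _ => gyLf_nonneg r)

lemma gy_inner (p : ℕ) (hp : p.Prime) (j : ℕ) :
    ∑ d ∈ (p ^ j).divisors, (d:ℝ) * (moebius d : ℝ) = 1 - (if j = 0 then 0 else (p:ℝ)) := by
  rw [Nat.sum_divisors_prime_pow hp]
  rcases Nat.eq_zero_or_pos j with rfl | hj
  · simp
  obtain ⟨i, rfl⟩ : ∃ i, j = i + 1 := ⟨j - 1, by omega⟩
  rw [Finset.sum_range_succ', Finset.sum_range_succ', Finset.sum_eq_zero]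
  · simp [moebius_apply_prime hp]
    ring
  · intro x _
    rw [moebius_apply_prime_pow hp (by omega), if_neg (by omega)]; simp

lemma gy_lamR (R : ℝ) (p k : ℕ) (hp : p.Prime) (hk : k ≠ 0) : lamR R (p ^ k) = gyL R - gyD R p := by
  rw [lamR, gyL, gyD, Finset.mul_sum, Finset.sum_filter, ← Finset.sum_sub_distrib]
  refine Finset.sum_congr (by ext; simp; omega) fun r hr => ?_
  have hg : Nat.gcd r (p ^ k) ∣ p ^ k := Nat.gcd_dvd_right _ _
  obtain ⟨j, hj, hjeq⟩ := (Nat.dvd_prime_pow hp).mp hg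
  have hiff : p ∣ r ↔ j ≠ 0 := by
    constructor
    · intro h h0
      have : p ∣ Nat.gcd r (p ^ k) := Nat.dvd_gcd h (dvd_pow_self p hk)
      rw [hjeq, h0, pow_zero] at this
      exact hp.one_lt.ne' (Nat.dvd_one.mp this)
    · intro h
      exact ((dvd_pow_self p h).trans (hjeq ▸ dvd_rfl : p ^ j ∣ Nat.gcd r (p^k))).trans (Nat.gcd_dvd_left _ _)
  rw [hjeq, gy_inner p hp j]
  change gyLf r * _ = _
  by_cases h : j = 0
  · rw [if_pos h, if_neg (by rw [hiff]; simpa using h)]; ring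
  · rw [if_neg h, if_pos (hiff.mpr h)]; ring

lemma gyLf_mul_le (p m : ℕ) (hp : p.Prime) : gyLf (p * m) ≤ 1 / ((p:ℝ) - 1) * gyLf m := by
  have hp1 : (1:ℝ) < p := by exact_mod_cast hp.one_lt
  by_cases h : p ∣ m
  · have : gyLf (p * m) = 0 := by
      simp only [gyLf, ArithmeticFunction.coe_mk]
      rw [moebius_eq_zero_of_not_squarefree]
      · simp
      · intro hsq
        have := hsq p (Nat.mul_dvd_mul_left p h)
        exact hp.one_lt.ne' (Nat.isUnit_iff.mp this)
    rw [this]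
    have := gyLf_nonneg m
    have : 0 < (p:ℝ) - 1 := by linarith
    have := gyLf_nonneg m
    positivity
  · have hc : Nat.Coprime p m := (Nat.Prime.coprime_iff_not_dvd hp).mpr h
    simp only [gyLf, ArithmeticFunction.coe_mk]
    rw [isMultiplicative_moebius.map_mul_of_coprime hc, Nat.totient_mul hc, moebius_apply_prime hp, Nat.totient_prime hp]
    push_cast [Nat.cast_sub hp.one_lt.le]
    rw [mul_pow, mul_div_mul_comm]
    apply le_of_eq
    norm_num

lemma gyD_le (R : ℝ) (p : ℕ) (hp : p.Prime) : gyD R p ≤ 2 * gyL (R / p) := by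
  have hp2 : (2:ℝ) ≤ p := by exact_mod_cast hp.two_le
  have h1 : ∑ r ∈ (Ioc 0 ⌊R⌋₊).filter (fun r => p ∣ r), gyLf r ≤ ∑ m ∈ Ioc 0 ⌊R / p⌋₊, gyLf (p * m) := by
    rw [← Finset.sum_image (s := Ioc 0 ⌊R / p⌋₊) (g := fun m => p * m) (f := fun r => gyLf r)
      (fun x _ y _ h => Nat.eq_of_mul_eq_mul_left hp.pos h)]
    refine Finset.sum_le_sum_of_subset_of_nonneg ?_ fun _ _ _ => gyLf_nonneg _
    intro r hr
    rw [Finset.mem_filter, Finset.mem_Ioc] at hr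
    obtain ⟨⟨h0, hle⟩, m, rfl⟩ := hr
    rw [Finset.mem_image]
    refine ⟨m, ?_, rfl⟩
    rw [Finset.mem_Ioc, Nat.floor_div_natCast, Nat.le_div_iff_mul_le hp.pos]
    refine ⟨Nat.pos_of_mul_pos_left h0, by rw [mul_comm]; exact hle⟩
  have h2 : ∑ m ∈ Ioc 0 ⌊R / p⌋₊, gyLf (p * m) ≤ 1 / ((p:ℝ) - 1) * gyL (R / p) := by
    rw [gyL, Finset.mul_sum]
    exact Finset.sum_le_sum fun m _ => gyLf_mul_le p m hp
  have h3 := gyL_nonneg (R / p)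
  calc gyD R p ≤ p * (1 / ((p:ℝ) - 1) * gyL (R / p)) := by
        unfold gyD; gcongr; exact h1.trans h2
    _ = (p / ((p:ℝ) - 1)) * gyL (R / p) := by ring
    _ ≤ 2 * gyL (R / p) := by
        gcongr
        rw [div_le_iff₀ (by linarith)]; linarith

lemma gyL_zero (Y : ℝ) (hY : Y < 1) : gyL Y = 0 := by
  rw [gyL, Nat.floor_eq_zero.mpr hY]; simp

lemma gyL_upper : ∃ C : ℝ, 0 < C ∧ ∀ Y : ℝ, 1 ≤ Y → gyL Y ≤ Real.log Y + C := by
  obtain ⟨B, hB, h⟩ := gyL_bound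
  refine ⟨B + |cGY|, by positivity, fun Y hY => ?_⟩
  have h1 := (abs_le.mp (h Y (by linarith))).2
  have h2 : B / Real.sqrt Y ≤ B := div_le_self hB.le (Real.one_le_sqrt.mpr hY)
  linarith [le_abs_self cGY]

lemma gy_log_sqrt (Y : ℝ) (hY : 0 < Y) : Real.log Y ≤ 2 * Real.sqrt Y := by
  have := Real.log_le_sub_one_of_pos (Real.sqrt_pos.mpr hY)
  rw [Real.log_sqrt hY.le] at this
  linarith

lemma gy_sum_inv_sqrt (n : ℕ) : ∑ m ∈ Icc 1 n, 1 / Real.sqrt m ≤ 2 * Real.sqrt n := by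
  induction n with
  | zero => simp
  | succ n ih =>
    rw [Finset.sum_Icc_succ_top (by omega)]
    have h0 : (0:ℝ) ≤ n := by positivity
    have s1 : 0 < Real.sqrt ((n:ℝ) + 1) := Real.sqrt_pos.mpr (by linarith)
    have q1 := Real.sq_sqrt (show 0 ≤ (n:ℝ) + 1 by linarith)
    have q0 := Real.sq_sqrt h0
    have hle : Real.sqrt n ≤ Real.sqrt ((n:ℝ) + 1) := Real.sqrt_le_sqrt (by linarith)
    push_cast
    have : 1 / Real.sqrt ((n:ℝ) + 1) ≤ 2 * (Real.sqrt ((n:ℝ)+1) - Real.sqrt n) := by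
      rw [div_le_iff₀ s1]
      nlinarith
    linarith

lemma gy_fiber (N p : ℕ) (hN : 1 ≤ N) :
    ∑ n ∈ (Icc 1 N).filter (fun n => n.minFac = p), vonMangoldt n ≤ if p.Prime then Real.log N else 0 := by
  by_cases hp : p.Prime
  · rw [if_pos hp]
    set M := p ^ Nat.log p N with hM
    have hM0 : M ≠ 0 := pow_ne_zero _ hp.ne_zero
    have hMN : M ≤ N := Nat.pow_log_le_self p (by omega)
    calc ∑ n ∈ (Icc 1 N).filter (fun n => n.minFac = p), vonMangoldt n
        = ∑ n ∈ ((Icc 1 N).filter (fun n => n.minFac = p)).filter (fun n => vonMangoldt n ≠ 0), vonMangoldt n := by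
          rw [Finset.sum_filter_ne_zero]
      _ ≤ ∑ n ∈ M.divisors, vonMangoldt n := by
          refine Finset.sum_le_sum_of_subset_of_nonneg ?_ fun _ _ _ => vonMangoldt_nonneg
          intro n hn
          rw [Finset.mem_filter, Finset.mem_filter, Finset.mem_Icc, vonMangoldt_ne_zero_iff] at hn
          obtain ⟨⟨⟨h1, h2⟩, h3⟩, h4⟩ := hn
          rw [Nat.mem_divisors]
          refine ⟨?_, hM0⟩
          obtain ⟨k, hk⟩ := (isPrimePow_iff_minFac_pow_factorization_eq (by rintro rfl; exact not_isPrimePow_one h4)).mp h4 |> fun h => (⟨_, h⟩ : ∃ k, n.minFac ^ k = n)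
          rw [h3] at hk
          rw [← hk, hM]
          apply pow_dvd_pow
          apply Nat.le_log_of_pow_le hp.one_lt
          rw [hk]; exact h2
      _ = Real.log M := vonMangoldt_sum
      _ ≤ Real.log N := Real.log_le_log (by exact_mod_cast Nat.pos_of_ne_zero hM0) (by exact_mod_cast hMN)
  · rw [if_neg hp]
    apply le_of_eq
    refine Finset.sum_eq_zero fun n hn => ?_
    rw [Finset.mem_filter] at hn
    have : n = 1 := by
      by_contra h
      exact hp (hn.2 ▸ Nat.minFac_prime h)
    rw [this, vonMangoldt_apply_one]

lemma gy_second : ∃ C : ℝ, 0 < C ∧ ∀ (N : ℕ) (R : ℝ), 1 ≤ N → 1 ≤ R →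
    ∑ n ∈ Icc 1 N, vonMangoldt n * gyD R n.minFac ≤ C * (R * Real.log N) := by
  obtain ⟨C0, hC0, hL⟩ := gyL_upper
  refine ⟨4 * (2 + C0), by positivity, fun N R hN hR => ?_⟩
  have hlogN : 0 ≤ Real.log N := Real.log_nonneg (by exact_mod_cast hN)
  have hR0 : 0 < R := by linarith
  have hDp : ∀ p : ℕ, p.Prime → gyD R p ≤ if p ≤ ⌊R⌋₊ then 2 * (2 + C0) * Real.sqrt R * (1 / Real.sqrt p) else 0 := by
    intro p hp
    have hp0 : (0:ℝ) < p := by exact_mod_cast hp.pos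
    refine (gyD_le R p hp).trans ?_
    split_ifs with h
    · have hpR : (p:ℝ) ≤ R := (Nat.le_floor_iff hR0.le).mp h
      have hY : 1 ≤ R / p := by rw [le_div_iff₀ hp0]; linarith
      have h1 := hL _ hY
      have h2 := gy_log_sqrt (R / p) (by linarith)
      have h3 : 1 ≤ Real.sqrt (R / p) := Real.one_le_sqrt.mpr hY
      have h4 : gyL (R / p) ≤ (2 + C0) * Real.sqrt (R / p) := by nlinarith
      calc 2 * gyL (R / p) ≤ 2 * ((2 + C0) * Real.sqrt (R / p)) := by gcongr
        _ = _ := by rw [Real.sqrt_div hR0.le]; ring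
    · have hpR : R < p := by
        by_contra h'
        exact h ((Nat.le_floor_iff hR0.le).mpr (not_lt.mp h'))
      rw [gyL_zero _ (by rw [div_lt_one hp0]; exact hpR)]; simp
  have hmaps : ∀ n ∈ Icc 1 N, n.minFac ∈ Icc 1 N := by
    intro n hn
    rw [Finset.mem_Icc] at hn ⊢
    exact ⟨Nat.minFac_pos n, (Nat.minFac_le (by omega)).trans hn.2⟩
  rw [← Finset.sum_fiberwise_of_maps_to hmaps]
  calc ∑ p ∈ Icc 1 N, ∑ n ∈ (Icc 1 N).filter (fun n => n.minFac = p), vonMangoldt n * gyD R n.minFac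
      ≤ ∑ p ∈ Icc 1 N, (if p ≤ ⌊R⌋₊ then 2 * (2 + C0) * Real.sqrt R * (1 / Real.sqrt p) else 0) * Real.log N := by
        refine Finset.sum_le_sum fun p _ => ?_
        have e : ∑ n ∈ (Icc 1 N).filter (fun n => n.minFac = p), vonMangoldt n * gyD R n.minFac
            = gyD R p * ∑ n ∈ (Icc 1 N).filter (fun n => n.minFac = p), vonMangoldt n := by
          rw [Finset.mul_sum]
          refine Finset.sum_congr rfl fun n hn => ?_
          rw [(Finset.mem_filter.mp hn).2, mul_comm]
        rw [e]
        refine (mul_le_mul_of_nonneg_left (gy_fiber N p hN) (gyD_nonneg R p)).trans ?_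
        by_cases hp : p.Prime
        · rw [if_pos hp]
          exact mul_le_mul_of_nonneg_right (hDp p hp) hlogN
        · rw [if_neg hp, mul_zero]
          refine mul_nonneg ?_ hlogN
          split_ifs
          · positivity
          · exact le_rfl
    _ = (∑ p ∈ (Icc 1 N).filter (fun p => p ≤ ⌊R⌋₊), 2 * (2 + C0) * Real.sqrt R * (1 / Real.sqrt p)) * Real.log N := by
        rw [← Finset.sum_mul, Finset.sum_filter]
    _ ≤ (∑ p ∈ Icc 1 ⌊R⌋₊, 2 * (2 + C0) * Real.sqrt R * (1 / Real.sqrt p)) * Real.log N := by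
        gcongr
        · intro p hp
          rw [Finset.mem_filter, Finset.mem_Icc] at hp
          rw [Finset.mem_Icc]; exact ⟨hp.1.1, hp.2⟩
    _ ≤ (2 * (2 + C0) * Real.sqrt R * (2 * Real.sqrt R)) * Real.log N := by
        rw [← Finset.mul_sum]
        gcongr
        refine (gy_sum_inv_sqrt _).trans ?_
        gcongr
        exact Nat.floor_le hR0.le
    _ = 4 * (2 + C0) * ((Real.sqrt R * Real.sqrt R) * Real.log N) := by ring
    _ = _ := by rw [Real.mul_self_sqrt hR0.le]

lemma gy_first : ∃ C : ℝ, 0 < C ∧ ∀ (N : ℕ) (R : ℝ), 2 ≤ N → 2 ≤ R →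
    gyL R * (Real.sqrt N * Real.log N ^ 2) ≤ C * (Real.sqrt N * Real.log N ^ 3 + R * Real.log N) := by
  obtain ⟨C0, hC0, hL⟩ := gyL_upper
  refine ⟨(1 + 2 * C0) + 4 * (4 + C0), by positivity, fun N R hN hR => ?_⟩
  have hN2 : (2:ℝ) ≤ N := by exact_mod_cast hN
  have hlogN : 1 / 2 ≤ Real.log N := by
    have := Real.log_le_log (by norm_num) hN2
    linarith [Real.log_two_gt_d9]
  have hLR := hL R (by linarith)
  have hL0 := gyL_nonneg R
  have hsN : 0 ≤ Real.sqrt N := Real.sqrt_nonneg _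
  have hl0 : 0 ≤ Real.log N := by linarith
  have p1 : 0 ≤ Real.sqrt N * Real.log N ^ 3 := by positivity
  have p2 : 0 ≤ R * Real.log N := mul_nonneg (by linarith) hl0
  by_cases hRN : R ≤ N
  · have h1 : Real.log R ≤ Real.log N := Real.log_le_log (by linarith) hRN
    have h2 : gyL R ≤ (1 + 2 * C0) * Real.log N := by nlinarith
    calc gyL R * (Real.sqrt N * Real.log N ^ 2) ≤ ((1 + 2 * C0) * Real.log N) * (Real.sqrt N * Real.log N ^ 2) := by gcongr
      _ = (1 + 2 * C0) * (Real.sqrt N * Real.log N ^ 3) := by ring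
      _ ≤ _ := by nlinarith
  · push Not at hRN
    have h1 : Real.log N ≤ Real.log R := Real.log_le_log (by linarith) hRN.le
    have hR0 : 0 < R := by linarith
    set w := Real.sqrt (Real.sqrt R) with hw
    have hs0 : 1 ≤ Real.sqrt R := Real.one_le_sqrt.mpr (by linarith)
    have hw1 : 1 ≤ w := Real.one_le_sqrt.mpr hs0
    have hw2 : w ^ 2 = Real.sqrt R := Real.sq_sqrt (by linarith)
    have hlw : Real.log R ≤ 4 * w := by
      have := gy_log_sqrt (Real.sqrt R) (by linarith)
      rw [Real.log_sqrt hR0.le] at this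
      linarith
    have h3 : gyL R ≤ (4 + C0) * w := by nlinarith
    have h4 : Real.sqrt N ≤ Real.sqrt R := Real.sqrt_le_sqrt hRN.le
    calc gyL R * (Real.sqrt N * Real.log N ^ 2) = (gyL R * Real.sqrt N * Real.log N) * Real.log N := by ring
      _ ≤ (((4 + C0) * w) * Real.sqrt R * (4 * w)) * Real.log N := by
          gcongr
          linarith
      _ = 4 * (4 + C0) * ((w ^ 2 * Real.sqrt R) * Real.log N) := by ring
      _ = 4 * (4 + C0) * (R * Real.log N) := by rw [hw2, Real.mul_self_sqrt hR0.le]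
      _ ≤ _ := by nlinarith

theorem prop1_vonMangoldt_lamR (hGRH : GRH) :
    ∃ C : ℝ, 0 < C ∧ ∀ (N q a : ℕ) (R : ℝ),
      2 ≤ N → 1 ≤ q → Nat.gcd a q = 1 → q ≤ N → 2 ≤ R →
      |(∑ n ∈ (Finset.Icc 1 N).filter (fun n : ℕ => (n : ZMod q) = (a : ZMod q)),
          ArithmeticFunction.vonMangoldt n * lamR R n)
        - (N : ℝ) * Real.log R / (q.totient : ℝ) - cGY * N / (q.totient : ℝ)|
      ≤ C * ((N : ℝ) / ((q.totient : ℝ) * Real.sqrt R)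
          + Real.sqrt N * (Real.log N) ^ 3 + R * Real.log N) := by
  obtain ⟨B1, hB1, h1⟩ := gy_psi hGRH
  obtain ⟨B2, hB2, h2⟩ := gyL_bound
  obtain ⟨C1, hC1, h3⟩ := gy_first
  obtain ⟨C2, hC2, h4⟩ := gy_second
  refine ⟨B1 * C1 + B2 + C2, by positivity, ?_⟩
  intro N q a R hN hq ha hqN hR
  have hψ := h1 N q a hN hq ha hqN
  have hL := h2 R (by linarith)
  have hF := h3 N R hN hR
  have hS := h4 N R (by omega) (by linarith)
  set F := (Finset.Icc 1 N).filter (fun n : ℕ => (n : ZMod q) = (a : ZMod q)) with hFdef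
  have hφ : (0 : ℝ) < (q.totient : ℝ) := by exact_mod_cast Nat.totient_pos.mpr hq
  have hterm : ∀ n : ℕ, vonMangoldt n * lamR R n
      = gyL R * vonMangoldt n - vonMangoldt n * gyD R n.minFac := by
    intro n
    by_cases hn : vonMangoldt n = 0
    · rw [hn]; ring
    · rw [← ne_eq, vonMangoldt_ne_zero_iff] at hn
      have hn1 : n ≠ 1 := by rintro rfl; exact not_isPrimePow_one hn
      have hk := (isPrimePow_iff_minFac_pow_factorization_eq hn1).mp hn
      have hk0 : n.factorization n.minFac ≠ 0 := by
        intro h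
        rw [h, pow_zero] at hk
        exact hn1 hk.symm
      have := gy_lamR R n.minFac _ (Nat.minFac_prime hn1) hk0
      rw [hk] at this
      rw [this]; ring
  have hT : ∑ n ∈ F, vonMangoldt n * lamR R n
      = gyL R * (∑ n ∈ F, vonMangoldt n) - ∑ n ∈ F, vonMangoldt n * gyD R n.minFac := by
    rw [Finset.mul_sum, ← Finset.sum_sub_distrib]
    exact Finset.sum_congr rfl fun n _ => hterm n
  have hD0 : 0 ≤ ∑ n ∈ F, vonMangoldt n * gyD R n.minFac :=
    Finset.sum_nonneg fun n _ => mul_nonneg vonMangoldt_nonneg (gyD_nonneg _ _)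
  have hD1 : ∑ n ∈ F, vonMangoldt n * gyD R n.minFac ≤ C2 * (R * Real.log N) :=
    (Finset.sum_le_sum_of_subset_of_nonneg (Finset.filter_subset _ _)
      fun n _ _ => mul_nonneg vonMangoldt_nonneg (gyD_nonneg _ _)).trans hS
  have hL0 : 0 ≤ gyL R := gyL_nonneg _
  rw [hT]
  generalize (∑ n ∈ F, vonMangoldt n) = P at *
  generalize (∑ n ∈ F, vonMangoldt n * gyD R n.minFac) = D at *
  have hlog : 0 ≤ Real.log N := Real.log_natCast_nonneg N
  have hsR : 0 < Real.sqrt R := Real.sqrt_pos.mpr (by linarith)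
  have hX : 0 ≤ (N : ℝ) / ((q.totient : ℝ) * Real.sqrt R) := by positivity
  have hY : 0 ≤ Real.sqrt N * (Real.log N) ^ 3 := by positivity
  have hZ : 0 ≤ R * Real.log N := mul_nonneg (by linarith) hlog
  have e : gyL R * P - D - (N : ℝ) * Real.log R / (q.totient : ℝ) - cGY * N / (q.totient : ℝ)
      = gyL R * (P - N / (q.totient : ℝ)) + N / (q.totient : ℝ) * (gyL R - (Real.log R + cGY))
        - D := by ring
  rw [e]
  have a1 : |gyL R * (P - N / (q.totient : ℝ))| ≤
      B1 * (C1 * (Real.sqrt N * Real.log N ^ 3 + R * Real.log N)) := by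
    rw [abs_mul, abs_of_nonneg hL0]
    calc gyL R * |P - N / (q.totient : ℝ)| ≤ gyL R * (B1 * (√N * Real.log N ^ 2)) :=
          mul_le_mul_of_nonneg_left hψ hL0
      _ = B1 * (gyL R * (√N * Real.log N ^ 2)) := by ring
      _ ≤ _ := mul_le_mul_of_nonneg_left hF hB1.le
  have a2 : |N / (q.totient : ℝ) * (gyL R - (Real.log R + cGY))| ≤
      B2 * ((N : ℝ) / ((q.totient : ℝ) * Real.sqrt R)) := by
    rw [abs_mul, abs_of_nonneg (by positivity)]
    calc N / (q.totient : ℝ) * |gyL R - (Real.log R + cGY)|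
        ≤ N / (q.totient : ℝ) * (B2 / √R) := mul_le_mul_of_nonneg_left hL (by positivity)
      _ = _ := by field_simp
  have a3 : |D| ≤ C2 * (R * Real.log N) := by rw [abs_of_nonneg hD0]; exact hD1
  have t1 := abs_sub (gyL R * (P - N / (q.totient : ℝ)) + N / (q.totient : ℝ) * (gyL R - (Real.log R + cGY))) D
  have t2 := abs_add_le (gyL R * (P - N / (q.totient : ℝ))) (N / (q.totient : ℝ) * (gyL R - (Real.log R + cGY)))
  have p1 := mul_nonneg (mul_nonneg hB1.le hC1.le) hX
  have p2 := mul_nonneg hB2.le hY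
  have p3 := mul_nonneg hB2.le hZ
  have p4 := mul_nonneg hC2.le hX
  have p5 := mul_nonneg hC2.le hY
  generalize (N : ℝ) / ((q.totient : ℝ) * Real.sqrt R) = X at *
  generalize Real.sqrt N * (Real.log N) ^ 3 = Y at *
  generalize R * Real.log N = Z at *
  linarith
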